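/- arXiv:1702.01766 — 3 statements merged into one kernel-verified Lean document; each statement's English description precedes it below -/
import Mathlib

section
/- Let A and B be standard graded polynomial rings over a field k in disjoint sets of variables, R = A ⊗_k B, and let I ⊆ A and J ⊆ B be nonzero proper homogeneous ideals. Then the Waldschmidt constants satisfy α̂(I+J) = min { α̂(I), α̂(J) }, where I+J is taken in R. -/
/-!
The existence of the three limits is Fekete's lemma: `m ↦ α(Q^{(m)})` is subadditive, and hence
`α(Q^{(m)}) ≥ m α̂(Q)`.

Minimal primes of `I + J` contract to minimal primes of `I` and of `J`, because elements outside a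
prime `p` of `A` stay regular modulo `p + J` in `A ⊗ B`, by flatness over `k`. Therefore `I^{(m)}`
and `J^{(m)}` extend into `(I + J)^{(m)}`, which gives `α̂(I + J) ≤ min (α̂(I)) (α̂(J))`.

For the other inequality it is enough that a nonzero form of degree `d` in `(I + J)^{(n)}` satisfies
`d ≥ α(I^{(i)}) + α(J^{(j)})` for some `i + j = n` (`exists_alphaDeg_add_le`). The main input is the
binomial inclusion `(I + J)^{(t+u-1)} ⊆ I^{(t)} + J^{(u)}` localized at minimal primes `p` of `I` and
`q` of `J` (`mem_tensorSup_localPow`): with `K`, `L` the contractions of `I^t A_p` and `J^u B_q`, the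
ideal `K + L` has only associated primes which are minimal over `I + J`. To avoid any primary
decomposition this is shown by Noether normalization `k[t] → B ⧸ q`: by incomparability in the
integral extension `k[t] ⊗ A → (B ⧸ q) ⊗ A`, an embedded prime would have a larger contraction to
`A[t]`, whereas polynomials with a coefficient outside `p` are regular modulo `K + L`
(`mem_tensorSup_of_minimalPrimes`).

Given the form `f`, take a nonzero coefficient `f_e ∈ k[τ]` of a monomial `e` in the variables `σ`
and the largest `i` with `α(I^{(i)}) ≤ |e|`. Slicing `f` by linear forms on `k[τ]` which vanish on
`L` produces elements of `I^{(i+1)}`, whose components of degree `|e|` vanish since symbolic powers of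
homogeneous ideals are homogeneous. Hence `f_e ∈ J^{(n-i)}` and `d - |e| ≥ α(J^{(n-i)})`.
-/

open MvPolynomial TensorProduct

/-- The `n`-th symbolic power of an ideal `Q`:
`Q^{(n)} = ⋂_{P ∈ Min(Q)} (Q^n R_P ∩ R)`, the intersection over the minimal primes `P` of `Q`
of the contractions of `Q^n R_P` along the localization maps `R → R_P`. -/
noncomputable def symbPow {R : Type*} [CommRing R] (Q : Ideal R) (n : ℕ) : Ideal R :=
  ⨅ (P : Ideal R) (hP : P ∈ Q.minimalPrimes),
    letI : P.IsPrime := hP.1.1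
    Ideal.comap (algebraMap R (Localization.AtPrime P))
      (Ideal.map (algebraMap R (Localization.AtPrime P)) (Q ^ n))

/-- The depth of a module `M` with respect to an ideal `m`: the maximal length of an
`M`-regular sequence contained in `m`. -/
noncomputable def idealDepth {R : Type*} [CommRing R] (m : Ideal R)
    (M : Type*) [AddCommGroup M] [Module R M] : ℕ :=
  sSup {n | ∃ rs : List R, rs.length = n ∧ (∀ r ∈ rs, r ∈ m) ∧
    RingTheory.Sequence.IsRegular M rs}

/-- The maximal homogeneous ideal of a polynomial ring, generated by the variables. -/
noncomputable def maxHomIdeal (k : Type*) [CommSemiring k] (σ : Type*) :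
    Ideal (MvPolynomial σ k) :=
  Ideal.span (Set.range X)

/-- An ideal of a polynomial ring is homogeneous if it contains all homogeneous components of
each of its elements. -/
def IsHomogeneousIdeal {k σ : Type*} [CommSemiring k] (I : Ideal (MvPolynomial σ k)) : Prop :=
  ∀ f ∈ I, ∀ d : ℕ, homogeneousComponent d f ∈ I

/-- A monomial ideal: an ideal generated by monomials. -/
def IsMonomialIdeal {k σ : Type*} [CommSemiring k] (I : Ideal (MvPolynomial σ k)) : Prop :=
  ∃ S : Set (σ →₀ ℕ), I = Ideal.span ((fun s => monomial s (1 : k)) '' S)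

/-- `α(I)`: the smallest degree of a nonzero (homogeneous) element of `I`, i.e. the least `d`
with `I_d ≠ 0`. -/
noncomputable def alphaDeg {k σ : Type*} [CommSemiring k] (I : Ideal (MvPolynomial σ k)) : ℕ :=
  sInf {d | ∃ f ∈ I, f ≠ 0 ∧ f.IsHomogeneous d}

/-! ### Symbolic powers and their local parts -/

/-- The contraction to `R` of `Q ^ n R_P`, the `P`-local part of the symbolic power. -/
noncomputable def localPow {R : Type*} [CommRing R] (Q P : Ideal R) [P.IsPrime] (n : ℕ) :
    Ideal R :=
  Ideal.comap (algebraMap R (Localization.AtPrime P))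
    (Ideal.map (algebraMap R (Localization.AtPrime P)) (Q ^ n))

lemma mem_localPow {R : Type*} [CommRing R] (Q P : Ideal R) [P.IsPrime] (n : ℕ) (x : R) :
    x ∈ localPow Q P n ↔ ∃ s, s ∉ P ∧ s * x ∈ Q ^ n := by
  rw [localPow, Ideal.mem_comap,
    IsLocalization.algebraMap_mem_map_algebraMap_iff P.primeCompl]
  rfl

lemma localPow_saturated {R : Type*} [CommRing R] (Q P : Ideal R) [P.IsPrime] (n : ℕ) (s : R)
    (hs : s ∉ P) (x : R) (h : s * x ∈ localPow Q P n) : x ∈ localPow Q P n := by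
  rw [mem_localPow] at h ⊢
  obtain ⟨t, ht, h⟩ := h
  refine ⟨t * s, fun h' => ?_, by rwa [mul_assoc]⟩
  exact (Ideal.IsPrime.mem_or_mem ‹_› h').elim ht hs

lemma pow_le_localPow {R : Type*} [CommRing R] (Q P : Ideal R) [P.IsPrime] (n : ℕ) :
    Q ^ n ≤ localPow Q P n := Ideal.le_comap_map

lemma mem_symbPow_iff_localPow {R : Type*} [CommRing R] (Q : Ideal R) (n : ℕ) (x : R) :
    x ∈ symbPow Q n ↔
      ∀ (P : Ideal R) (hP : P ∈ Q.minimalPrimes), haveI := hP.1.1; x ∈ localPow Q P n := by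
  simp only [symbPow, Submodule.mem_iInf]
  rfl

lemma mem_symbPow {R : Type*} [CommRing R] (Q : Ideal R) (n : ℕ) (x : R) :
    x ∈ symbPow Q n ↔ ∀ P ∈ Q.minimalPrimes, ∃ s, s ∉ P ∧ s * x ∈ Q ^ n := by
  rw [mem_symbPow_iff_localPow]
  refine forall₂_congr fun P hP => ?_
  have := hP.1.1
  exact mem_localPow Q P n x

lemma pow_le_symbPow {R : Type*} [CommRing R] (Q : Ideal R) (n : ℕ) : Q ^ n ≤ symbPow Q n := by
  intro x hx
  rw [mem_symbPow]
  exact fun P hP => ⟨1, fun h => hP.1.1.ne_top ((Ideal.eq_top_iff_one _).2 h), by simpa⟩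

lemma mul_mem_symbPow {R : Type*} [CommRing R] (Q : Ideal R) (m n : ℕ) {x y : R}
    (hx : x ∈ symbPow Q m) (hy : y ∈ symbPow Q n) : x * y ∈ symbPow Q (m + n) := by
  rw [mem_symbPow] at *
  intro P hP
  obtain ⟨s, hs, hsx⟩ := hx P hP
  obtain ⟨t, ht, hty⟩ := hy P hP
  refine ⟨s * t, fun h => (hP.1.1.mem_or_mem h).elim hs ht, ?_⟩
  rw [mul_mul_mul_comm, pow_add]
  exact Ideal.mul_mem_mul hsx hty

/-- Symbolic powers are compatible with ring isomorphisms. -/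
lemma mem_symbPow_comap_equiv {S R : Type*} [CommRing S] [CommRing R] (E : S ≃+* R)
    (Q : Ideal R) (n : ℕ) (f : S) :
    f ∈ symbPow (Q.comap (E : S →+* R)) n ↔ E f ∈ symbPow Q n := by
  have hE : Function.Surjective (E : S →+* R) := E.surjective
  have hpow : ∀ x : S, x ∈ (Q.comap (E : S →+* R)) ^ n ↔ E x ∈ Q ^ n := by
    intro x
    have h1 : Q.comap (E : S →+* R) = Q.map (E.symm : R →+* S) := (Ideal.map_symm E).symm
    rw [h1, ← Ideal.map_pow, show (Q ^ n).map (E.symm : R →+* S) = (Q ^ n).comap (E : S →+* R)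
      from Ideal.map_symm E]
    rfl
  rw [mem_symbPow, mem_symbPow, Ideal.comap_minimalPrimes_eq_of_surjective hE]
  simp only [Set.forall_mem_image]
  refine forall₂_congr fun P hP => ?_
  constructor
  · rintro ⟨s, hs, h⟩
    exact ⟨E s, hs, by rw [← map_mul]; exact (hpow _).1 h⟩
  · rintro ⟨s, hs, h⟩
    refine ⟨E.symm s, fun h => hs (by simpa using Ideal.mem_comap.1 h), (hpow _).2 (by simpa using h)⟩

/-! ### Regular elements -/

/-- If `K` is saturated with respect to the complement of `P`, elements outside `P` are regular
modulo `K`. -/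
lemma mk_mem_nonZeroDivisors {R : Type*} [CommRing R] {K P : Ideal R}
    (hK : ∀ s, s ∉ P → ∀ x, s * x ∈ K → x ∈ K) {s : R} (hs : s ∉ P) :
    Ideal.Quotient.mk K s ∈ nonZeroDivisors (R ⧸ K) := by
  rw [mem_nonZeroDivisors_iff_right]
  intro x hx
  obtain ⟨x, rfl⟩ := Ideal.Quotient.mk_surjective x
  rw [← map_mul, Ideal.Quotient.eq_zero_iff_mem, mul_comm] at hx
  exact Ideal.Quotient.eq_zero_iff_mem.2 (hK s hs x hx)

/-- A polynomial with a regular coefficient is regular. -/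
lemma MvPolynomial.mem_nonZeroDivisors_of_coeff_mem {C : Type*} [CommRing C] {n : ℕ}
    (a : MvPolynomial (Fin n) C) (m : Fin n →₀ ℕ) (h : coeff m a ∈ nonZeroDivisors C) :
    a ∈ nonZeroDivisors (MvPolynomial (Fin n) C) := by
  induction n with
  | zero =>
    have hm : m = 0 := Subsingleton.elim _ _
    rw [eq_C_of_isEmpty a]
    rw [hm] at h
    rw [mem_nonZeroDivisors_iff_right] at h ⊢
    intro x hx
    rw [eq_C_of_isEmpty x] at hx ⊢
    rw [← C_mul, C_eq_zero] at hx
    rw [h _ hx, C_0]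
  | succ n ih =>
    have h1 : Polynomial.coeff (finSuccEquiv C n a) (m 0) ∈
        nonZeroDivisors (MvPolynomial (Fin n) C) := by
      refine ih _ m.tail ?_
      rwa [finSuccEquiv_coeff_coeff, Finsupp.cons_tail]
    have h2 := Polynomial.mem_nonzeroDivisors_of_coeff_mem _ h1
    rw [mem_nonZeroDivisors_iff_right] at h2 ⊢
    intro x hx
    apply (finSuccEquiv C n).injective
    rw [map_zero]
    apply h2
    rw [← map_mul, hx, map_zero]

lemma flat_fractionField_tensor (D₀ F D : Type*) [CommRing D₀] [IsDomain D₀] [Field F]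
    [Algebra D₀ F] [IsFractionRing D₀ F] [AddCommGroup D] [Module D₀ D] :
    Module.Flat D₀ (F ⊗[D₀] D) :=
  have : Module.Flat D₀ F := IsLocalization.flat F (nonZeroDivisors D₀)
  Module.Flat.trans D₀ F _

/-- If `D` is torsion-free over a domain `D₀`, a nonzerodivisor of `D₀ ⊗ C` stays one in `D ⊗ C`:
`D` embeds into the flat `D₀`-module `Frac(D₀) ⊗ D`. -/
lemma nzd_of_torsionFree {k D₀ D C : Type*} [Field k] [CommRing D₀] [IsDomain D₀] [Algebra k D₀]
    [CommRing D] [Algebra k D] [CommRing C] [Algebra k C] (φ : D₀ →ₐ[k] D)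
    (htf : ∀ t, t ≠ 0 → ∀ x, φ t * x = 0 → x = 0)
    (a : D₀ ⊗[k] C) (ha : a ∈ nonZeroDivisors (D₀ ⊗[k] C)) (x : D ⊗[k] C)
    (hx : Algebra.TensorProduct.map φ (AlgHom.id k C) a * x = 0) : x = 0 := by
  let _ : Algebra D₀ D := φ.toRingHom.toAlgebra
  have : IsScalarTower k D₀ D := IsScalarTower.of_algebraMap_eq fun r => (φ.commutes r).symm
  let l : D₀ ⊗[k] C →ₗ[D₀] D₀ ⊗[k] C := LinearMap.mulLeft D₀ a
  have hl : Function.Injective l := by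
    rw [← LinearMap.ker_eq_bot, LinearMap.ker_eq_bot']
    intro m hm
    exact (mem_nonZeroDivisors_iff.1 ha).1 m hm
  let F := FractionRing D₀
  let j : D →ₗ[D₀] F ⊗[D₀] D := TensorProduct.mk D₀ F D 1
  have hj : Function.Injective j := by
    rw [← LinearMap.ker_eq_bot, LinearMap.ker_eq_bot']
    intro m hm
    obtain ⟨c, hc⟩ := (IsLocalizedModule.eq_zero_iff (nonZeroDivisors D₀) j).1 hm
    exact htf c (nonZeroDivisors.ne_zero c.2) m hc
  have : Module.Flat D₀ (F ⊗[D₀] D) := flat_fractionField_tensor D₀ F D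
  have h1 : Function.Injective (l.lTensor (F ⊗[D₀] D)) :=
    Module.Flat.lTensor_preserves_injective_linearMap l hl
  have h2 : Function.Injective (j.rTensor (D₀ ⊗[k] C)) :=
    Module.Flat.rTensor_preserves_injective_linearMap j hj
  have h3 : Function.Injective (l.lTensor D) := by
    have : Function.Injective (j.rTensor (D₀ ⊗[k] C) ∘ₗ l.lTensor D) := by
      have e : j.rTensor (D₀ ⊗[k] C) ∘ₗ l.lTensor D =
          l.lTensor (F ⊗[D₀] D) ∘ₗ j.rTensor (D₀ ⊗[k] C) := by
        rw [LinearMap.rTensor_comp_lTensor, LinearMap.lTensor_comp_rTensor]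
      rw [e]
      exact h1.comp h2
    exact Function.Injective.of_comp (f := j.rTensor (D₀ ⊗[k] C)) (by
      rwa [LinearMap.coe_comp] at this)
  let c := TensorProduct.AlgebraTensorModule.cancelBaseChange k D₀ D₀ D C
  have hcd : ∀ d d1 c1, c (d ⊗ₜ (d1 ⊗ₜ c1)) = (d1 • d) ⊗ₜ[k] c1 := fun _ _ _ => rfl
  have hc : ∀ y, c (l.lTensor D y) = Algebra.TensorProduct.map φ (AlgHom.id k C) a * c y := by
    intro y
    induction y with
    | zero => simp
    | add y z hy hz => simp only [map_add, hy, hz, mul_add]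
    | tmul d z =>
      simp only [LinearMap.lTensor_tmul, l, LinearMap.mulLeft_apply]
      induction z with
      | zero => simp
      | add y z hy hz => simp only [map_add, hy, hz, mul_add, TensorProduct.tmul_add]
      | tmul d1 c1 =>
        clear_value c
        clear hx ha hl h1 h3 l
        induction a with
        | zero => simp
        | add y z hy hz => simp only [map_add, hy, hz, add_mul, TensorProduct.tmul_add]
        | tmul d2 c2 =>
          rw [Algebra.TensorProduct.tmul_mul_tmul, hcd, hcd, Algebra.TensorProduct.map_tmul,
            AlgHom.id_apply, Algebra.TensorProduct.tmul_mul_tmul]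
          congr 1
          change φ (d2 * d1) * d = φ d2 * (φ d1 * d)
          rw [map_mul, mul_assoc]
  obtain ⟨y, rfl⟩ := c.surjective x
  rw [← hc] at hx
  have : l.lTensor D y = 0 := by simpa using hx
  rw [show y = 0 from h3 (by simpa using this), map_zero]

/-- The isomorphism `k[t₁,…,tₛ] ⊗ A ≃ A[t₁,…,tₛ]`. -/
noncomputable def polyTensor (k : Type*) [Field k] (n : ℕ) (A : Type*) [CommRing A] [Algebra k A] :
    MvPolynomial (Fin n) k ⊗[k] A ≃ₐ[k] MvPolynomial (Fin n) A :=
  (Algebra.TensorProduct.comm k _ A).trans ((algebraTensorAlgEquiv k A).restrictScalars k)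

lemma polyTensor_tmul {k : Type*} [Field k] {n : ℕ} {A : Type*} [CommRing A] [Algebra k A]
    (p : MvPolynomial (Fin n) k) (a : A) :
    polyTensor k n A (p ⊗ₜ a) = a • MvPolynomial.map (algebraMap k A) p := by
  simp [polyTensor]

lemma polyTensor_symm_monomial {k : Type*} [Field k] {n : ℕ} {A : Type*} [CommRing A] [Algebra k A]
    (m : Fin n →₀ ℕ) (a : A) :
    (polyTensor k n A).symm (monomial m a) = monomial m 1 ⊗ₜ a := by
  rw [AlgEquiv.symm_apply_eq, polyTensor_tmul, map_monomial, smul_monomial]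
  simp

lemma polyTensor_map {k : Type*} [Field k] {n : ℕ} {A C : Type*} [CommRing A] [Algebra k A]
    [CommRing C] [Algebra k C] (g : A →ₐ[k] C) (a : MvPolynomial (Fin n) k ⊗[k] A) :
    polyTensor k n C (Algebra.TensorProduct.map (AlgHom.id k _) g a) =
      MvPolynomial.map (g : A →+* C) (polyTensor k n A a) := by
  induction a with
  | zero => simp
  | add x y hx hy => simp only [map_add, hx, hy]
  | tmul p a =>
    rw [Algebra.TensorProduct.map_tmul, polyTensor_tmul, polyTensor_tmul, smul_eq_C_mul,
      smul_eq_C_mul, map_mul, map_C, MvPolynomial.map_map, AlgHom.id_apply]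
    congr 2
    rw [AlgHom.comp_algebraMap_of_tower k g]

lemma nzd_tmul_one {k D C : Type*} [Field k] [CommRing D] [Algebra k D] [CommRing C] [Algebra k C]
    (b : D) (hb : b ∈ nonZeroDivisors D) (x : D ⊗[k] C) (hx : (b ⊗ₜ 1) * x = 0) : x = 0 := by
  let l : D →ₗ[k] D := LinearMap.mulLeft k b
  have hl : Function.Injective l := by
    rw [← LinearMap.ker_eq_bot, LinearMap.ker_eq_bot']
    exact (mem_nonZeroDivisors_iff.1 hb).1
  have h := Module.Flat.rTensor_preserves_injective_linearMap (M := C) l hl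
  apply h
  rw [map_zero, ← hx]
  clear hx
  induction x with
  | zero => simp
  | add x y hx hy => simp only [map_add, hx, hy, mul_add]
  | tmul d c => simp [l]

lemma nzd_one_tmul {k D C : Type*} [Field k] [CommRing D] [Algebra k D] [CommRing C] [Algebra k C]
    (b : C) (hb : b ∈ nonZeroDivisors C) (x : D ⊗[k] C) (hx : (1 ⊗ₜ b) * x = 0) : x = 0 := by
  apply (Algebra.TensorProduct.comm k D C).injective
  rw [map_zero]
  refine nzd_tmul_one b hb _ ?_
  have := congrArg (Algebra.TensorProduct.comm k D C) hx
  simpa using this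

/-! ### Primes of a tensor product minimal over a sum of ideals -/

section core

variable {k A B : Type*} [Field k] [CommRing A] [Algebra k A] [CommRing B] [Algebra k B]

/-- The ideal of `B ⊗ A` generated by `L ⊆ B` and `K ⊆ A`. -/
noncomputable def tensorSup (L : Ideal B) (K : Ideal A) : Ideal (B ⊗[k] A) :=
  L.map (Algebra.TensorProduct.includeLeft : B →ₐ[k] B ⊗[k] A) ⊔
    K.map (Algebra.TensorProduct.includeRight : A →ₐ[k] B ⊗[k] A)

lemma mem_tensorSup_iff (L : Ideal B) (K : Ideal A) (x : B ⊗[k] A) :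
    x ∈ tensorSup L K ↔
      Algebra.TensorProduct.map (Ideal.Quotient.mkₐ k L) (Ideal.Quotient.mkₐ k K) x = 0 := by
  have h := Algebra.TensorProduct.map_ker (Ideal.Quotient.mkₐ k L) (Ideal.Quotient.mkₐ k K)
    (Ideal.Quotient.mkₐ_surjective k L) (Ideal.Quotient.mkₐ_surjective k K)
  have e1 : RingHom.ker (Ideal.Quotient.mkₐ k L) = L := Ideal.Quotient.mkₐ_ker k L
  have e2 : RingHom.ker (Ideal.Quotient.mkₐ k K) = K := Ideal.Quotient.mkₐ_ker k K
  rw [e1, e2] at h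
  rw [tensorSup, ← h, RingHom.mem_ker]

lemma tmul_one_mem_tensorSup {L : Ideal B} (K : Ideal A) {b : B} (hb : b ∈ L) :
    b ⊗ₜ 1 ∈ tensorSup (k := k) L K :=
  Ideal.mem_sup_left (Ideal.mem_map_of_mem _ hb)

lemma one_tmul_mem_tensorSup (L : Ideal B) {K : Ideal A} {a : A} (ha : a ∈ K) :
    1 ⊗ₜ a ∈ tensorSup (k := k) L K :=
  Ideal.mem_sup_right (Ideal.mem_map_of_mem _ ha)

lemma tensorSup_mono {L L' : Ideal B} {K K' : Ideal A} (h : L ≤ L') (h' : K ≤ K') :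
    tensorSup (k := k) L K ≤ tensorSup L' K' :=
  sup_le_sup (Ideal.map_mono h) (Ideal.map_mono h')

/-- By flatness over `k`, an element of `B` regular modulo `L` is regular modulo
`tensorSup L K`. -/
lemma mem_of_tmul_one_mul {L : Ideal B} {K : Ideal A} {b : B}
    (hb : Ideal.Quotient.mk L b ∈ nonZeroDivisors (B ⧸ L)) {x : B ⊗[k] A}
    (hx : (b ⊗ₜ 1) * x ∈ tensorSup L K) : x ∈ tensorSup L K := by
  rw [mem_tensorSup_iff] at hx ⊢
  rw [map_mul] at hx
  exact nzd_tmul_one _ hb _ (by simpa using hx)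

lemma mem_of_one_tmul_mul {L : Ideal B} {K : Ideal A} {b : A}
    (hb : Ideal.Quotient.mk K b ∈ nonZeroDivisors (A ⧸ K)) {x : B ⊗[k] A}
    (hx : (1 ⊗ₜ b) * x ∈ tensorSup L K) : x ∈ tensorSup L K := by
  rw [mem_tensorSup_iff] at hx ⊢
  rw [map_mul] at hx
  exact nzd_one_tmul _ hb _ (by simpa using hx)

/-- Elements of a minimal prime `P` of `Q` are nilpotent modulo `Q R_P`. -/
lemma exists_mul_pow_mem_of_mem_minimalPrimes {R : Type*} [CommRing R] {Q P : Ideal R}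
    (hP : P ∈ Q.minimalPrimes) {s : R} (hs : s ∈ P) : ∃ N u, u ∉ P ∧ u * s ^ N ∈ Q := by
  have := hP.1.1
  have h := IsLocalization.AtPrime.radical_map_of_mem_minimalPrimes
    (A := Localization.AtPrime P) P Q hP
  have h1 : algebraMap R (Localization.AtPrime P) s ∈
      (Q.map (algebraMap R (Localization.AtPrime P))).radical := by
    rw [h]; exact Ideal.mem_map_of_mem _ hs
  obtain ⟨N, hN⟩ := h1
  rw [← map_pow, IsLocalization.algebraMap_mem_map_algebraMap_iff P.primeCompl] at hN
  obtain ⟨u, hu, h⟩ := hN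
  exact ⟨N, u, hu, h⟩

lemma mul_pow_mem {R : Type*} [CommRing R] {Q : Ideal R} {s : R}
    (h : ∀ x, s * x ∈ Q → x ∈ Q) (N : ℕ) : ∀ u, u * s ^ N ∈ Q → u ∈ Q := by
  induction N with
  | zero => intro u hu; simpa using hu
  | succ N ih => intro u hu; exact ih _ (h _ (by rwa [pow_succ, ← mul_assoc, mul_comm] at hu))

lemma prime_saturated {R : Type*} [CommRing R] {p : Ideal R} (hp : p.IsPrime) :
    ∀ s, s ∉ p → ∀ x, s * x ∈ p → x ∈ p :=
  fun _ hs _ hx => (hp.mem_or_mem hx).resolve_left hs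

/-- Minimal primes of the sum contract to minimal primes of the second summand: if `p₀` is a
minimal prime below the contraction, an element `s` outside `p₀` is regular modulo `J + p₀`,
while some power of `s ∈ P` lies in `J + I` up to a factor outside `P`. -/
lemma comap_right_mem_minimalPrimes {J : Ideal B} {I : Ideal A} {P : Ideal (B ⊗[k] A)}
    (hP : P ∈ (tensorSup J I).minimalPrimes) :
    P.comap (Algebra.TensorProduct.includeRight : A →ₐ[k] B ⊗[k] A) ∈ I.minimalPrimes := by
  have hPp := hP.1.1
  set p := P.comap (Algebra.TensorProduct.includeRight : A →ₐ[k] B ⊗[k] A) with hp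
  have hpp : p.IsPrime := Ideal.comap_isPrime _ _
  have hIp : I ≤ p := fun a ha => hP.1.2 (one_tmul_mem_tensorSup J ha)
  have hJP : ∀ b ∈ J, b ⊗ₜ 1 ∈ P := fun b hb => hP.1.2 (tmul_one_mem_tensorSup I hb)
  obtain ⟨p0, hp0, hle⟩ := Ideal.exists_minimalPrimes_le hIp
  have : p0 = p := by
    refine le_antisymm hle fun s hs => ?_
    by_contra hs0
    have hs' : (1 ⊗ₜ s : B ⊗[k] A) ∈ P := hs
    obtain ⟨N, u, hu, h⟩ := exists_mul_pow_mem_of_mem_minimalPrimes hP hs'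
    have h2 := tensorSup_mono le_rfl hp0.1.2 h
    have h3 := mul_pow_mem (fun x hx => mem_of_one_tmul_mul
      (mk_mem_nonZeroDivisors (prime_saturated hp0.1.1) hs0) hx) N u h2
    have hJ : J ≤ P.comap (Algebra.TensorProduct.includeLeft : B →ₐ[k] B ⊗[k] A) := hJP
    exact hu ((sup_le (Ideal.map_le_iff_le_comap.2 hJ) (Ideal.map_le_iff_le_comap.2 hle)) h3)
  rwa [← this]

lemma comap_left_mem_minimalPrimes {J : Ideal B} {I : Ideal A} {P : Ideal (B ⊗[k] A)}
    (hP : P ∈ (tensorSup J I).minimalPrimes) :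
    P.comap (Algebra.TensorProduct.includeLeft : B →ₐ[k] B ⊗[k] A) ∈ J.minimalPrimes := by
  have hPp := hP.1.1
  set p := P.comap (Algebra.TensorProduct.includeLeft : B →ₐ[k] B ⊗[k] A) with hp
  have hpp : p.IsPrime := Ideal.comap_isPrime _ _
  have hJp : J ≤ p := fun a ha => hP.1.2 (tmul_one_mem_tensorSup I ha)
  have hIP : ∀ b ∈ I, 1 ⊗ₜ b ∈ P := fun b hb => hP.1.2 (one_tmul_mem_tensorSup J hb)
  obtain ⟨p0, hp0, hle⟩ := Ideal.exists_minimalPrimes_le hJp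
  have : p0 = p := by
    refine le_antisymm hle fun s hs => ?_
    by_contra hs0
    have hs' : (s ⊗ₜ 1 : B ⊗[k] A) ∈ P := hs
    obtain ⟨N, u, hu, h⟩ := exists_mul_pow_mem_of_mem_minimalPrimes hP hs'
    have h2 := tensorSup_mono hp0.1.2 le_rfl h
    have h3 := mul_pow_mem (fun x hx => mem_of_tmul_one_mul
      (mk_mem_nonZeroDivisors (prime_saturated hp0.1.1) hs0) hx) N u h2
    have hI : I ≤ P.comap (Algebra.TensorProduct.includeRight : A →ₐ[k] B ⊗[k] A) := hIP
    exact hu ((sup_le (Ideal.map_le_iff_le_comap.2 hle) (Ideal.map_le_iff_le_comap.2 hI)) h3)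
  rwa [← this]

/-- An annihilator `N : f` is contained in an associated prime `N : g` of `N`. -/
lemma exists_prime_eq_colon {R : Type*} [CommRing R] [IsNoetherianRing R] (N : Ideal R) (f : R)
    (hf : f ∉ N) : ∃ P' : Ideal R, P'.IsPrime ∧ ∃ g, (∀ r, r ∈ P' ↔ r * g ∈ N) ∧
      ∀ r, r * f ∈ N → r ∈ P' := by
  have h0 : Ideal.Quotient.mk N f ≠ 0 := fun h => hf (Ideal.Quotient.eq_zero_iff_mem.1 h)
  obtain ⟨P', h, hle⟩ := exists_le_isAssociatedPrime_of_isNoetherianRing R _ h0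
  obtain ⟨hP', x, hx⟩ := isAssociatedPrime_iff.1 h
  obtain ⟨g, rfl⟩ := Ideal.Quotient.mk_surjective x
  have key : ∀ r y, r ∈ (⊥ : Submodule R (R ⧸ N)).colon {Ideal.Quotient.mk N y} ↔ r * y ∈ N := by
    intro r y
    rw [Submodule.mem_colon_singleton, Submodule.mem_bot, ← Ideal.Quotient.eq_zero_iff_mem]
    rfl
  exact ⟨P', hP', g, fun r => by rw [hx, key], fun r hr => hle ((key r f).2 hr)⟩

/-- Noether normalization of `B ⧸ q`, lifted to `B`. -/
lemma exists_noether_lift [Algebra.FiniteType k B] (q : Ideal B) (hq : q ≠ ⊤) :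
    ∃ n, ∃ φ : MvPolynomial (Fin n) k →ₐ[k] B, (∀ t, φ t ∈ q → t = 0) ∧
      ∀ b, ∃ P : Polynomial (MvPolynomial (Fin n) k), P.Monic ∧
        P.eval₂ (φ : MvPolynomial (Fin n) k →+* B) b ∈ q := by
  have : Nontrivial (B ⧸ q) := Ideal.Quotient.nontrivial_iff.2 hq
  have : Algebra.FiniteType k (B ⧸ q) :=
    Algebra.FiniteType.of_surjective (Ideal.Quotient.mkₐ k q) (Ideal.Quotient.mkₐ_surjective k q)
  obtain ⟨n, g, hg, hint⟩ := exists_integral_inj_algHom_of_fg k (B ⧸ q)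
  choose y hy using fun i => Ideal.Quotient.mkₐ_surjective k q (g (X i))
  have hφ : (Ideal.Quotient.mkₐ k q).comp (aeval y) = g := by
    ext i
    simp [← hy]
  have hφ' : ∀ t, Ideal.Quotient.mk q (aeval y t) = g t := fun t => DFunLike.congr_fun hφ t
  refine ⟨n, aeval y, fun t ht => ?_, fun b => ?_⟩
  · apply hg
    rw [← hφ', Ideal.Quotient.eq_zero_iff_mem.2 ht, map_zero]
  · obtain ⟨P, hP, h⟩ := hint (Ideal.Quotient.mk q b)
    refine ⟨P, hP, ?_⟩
    rw [← Ideal.Quotient.eq_zero_iff_mem, Polynomial.hom_eval₂, ← h]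
    exact congrArg (fun θ => P.eval₂ θ (Ideal.Quotient.mk q b)) (RingHom.ext hφ')

/-- If `B ⧸ q` is integral over `k[t₁,…,tₙ]` via `φ`, then
primes of `B ⊗ A` containing the image of `q` are incomparable over `k[t] ⊗ A`. -/
lemma comap_lt_comap_of_noether {n : ℕ} {q : Ideal B} (φ : MvPolynomial (Fin n) k →ₐ[k] B)
    (hint : ∀ b, ∃ P : Polynomial (MvPolynomial (Fin n) k), P.Monic ∧
        P.eval₂ (φ : MvPolynomial (Fin n) k →+* B) b ∈ q)
    {P P' : Ideal (B ⊗[k] A)} [P.IsPrime] (hqP : ∀ b ∈ q, b ⊗ₜ 1 ∈ P) (hle : P ≤ P')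
    {r : B ⊗[k] A} (hr : r ∈ P') (hr' : r ∉ P) :
    P.comap (Algebra.TensorProduct.map φ (AlgHom.id k A)) <
      P'.comap (Algebra.TensorProduct.map φ (AlgHom.id k A)) := by
  let θ : MvPolynomial (Fin n) k ⊗[k] A →+* B ⊗[k] A :=
    (Algebra.TensorProduct.map φ (AlgHom.id k A)).toRingHom
  have hI : ∀ x, ((Ideal.Quotient.mk P).comp θ).IsIntegralElem (Ideal.Quotient.mk P x) := by
    intro x
    induction x with
    | zero => rw [map_zero]; exact RingHom.isIntegralElem_zero _
    | add x y hx hy => rw [map_add]; exact RingHom.IsIntegralElem.add _ hx hy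
    | tmul b a =>
      have e : b ⊗ₜ[k] a = (b ⊗ₜ 1) * (1 ⊗ₜ a) := by simp
      rw [e, map_mul]
      refine RingHom.IsIntegralElem.mul _ ?_ ?_
      · obtain ⟨p, hp, h⟩ := hint b
        let i1 : MvPolynomial (Fin n) k →+* MvPolynomial (Fin n) k ⊗[k] A :=
          (Algebra.TensorProduct.includeLeft :
            MvPolynomial (Fin n) k →ₐ[k] MvPolynomial (Fin n) k ⊗[k] A).toRingHom
        let i2 : B →+* B ⊗[k] A :=
          (Algebra.TensorProduct.includeLeft : B →ₐ[k] B ⊗[k] A).toRingHom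
        refine ⟨p.map i1, hp.map _, ?_⟩
        have h1 := Ideal.Quotient.eq_zero_iff_mem.2 (hqP _ h)
        change (Ideal.Quotient.mk P) (i2 _) = 0 at h1
        rw [Polynomial.hom_eval₂, Polynomial.hom_eval₂] at h1
        rw [Polynomial.eval₂_map]
        have h2 : ((Ideal.Quotient.mk P).comp θ).comp i1 =
            (Ideal.Quotient.mk P).comp (i2.comp (φ : MvPolynomial (Fin n) k →+* B)) :=
          RingHom.ext fun t => by simp [θ, i1, i2]
        rw [h2]
        exact h1
      · have : Ideal.Quotient.mk P (1 ⊗ₜ a) = ((Ideal.Quotient.mk P).comp θ) (1 ⊗ₜ a) := by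
          simp [θ]
        rw [this]
        exact RingHom.isIntegralElem_map _
  obtain ⟨p, hp, h⟩ := hI r
  refine Ideal.comap_lt_comap_of_root_mem_sdiff (f := θ) hle ⟨hr, hr'⟩ (p := p) ?_ ?_
  · have : Nontrivial ((MvPolynomial (Fin n) k ⊗[k] A) ⧸ P.comap θ) :=
      Ideal.Quotient.nontrivial_iff.2 (Ideal.comap_ne_top _ (Ideal.IsPrime.ne_top ‹_›))
    exact (hp.map _).ne_zero
  · rw [← Ideal.Quotient.eq_zero_iff_mem, Polynomial.hom_eval₂]
    exact h

/-- Membership in `tensorSup L K` can be tested at the minimal primes of `tensorSup J I` when `K` is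
`p`-saturated over a power of `I` and `L` is `q`-saturated over a power of `J`.
In geometric terms every associated prime `P'` of `tensorSup L K` is minimal over `tensorSup J I`:
regularity modulo `L` and `K` forces `P'` and any minimal prime `P ⊆ P'` to contract to `q` and `p`,
and after Noether normalization of `B ⧸ q` incomparability shows `P = P'`. -/
lemma mem_tensorSup_of_minimalPrimes [IsNoetherianRing (B ⊗[k] A)] [Algebra.FiniteType k B]
    {I K p : Ideal A} {J L q : Ideal B} (hp : p ∈ I.minimalPrimes) (hq : q ∈ J.minimalPrimes)
    (hK : ∀ s, s ∉ p → ∀ x, s * x ∈ K → x ∈ K) (hL : ∀ s, s ∉ q → ∀ x, s * x ∈ L → x ∈ L)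
    {t u : ℕ} (hIK : I ^ t ≤ K) (hJL : J ^ u ≤ L) {f : B ⊗[k] A}
    (hf : ∀ P ∈ (tensorSup J I).minimalPrimes, ∃ s, s ∉ P ∧ s * f ∈ tensorSup L K) :
    f ∈ tensorSup L K := by
  by_contra hfN
  obtain ⟨P', hP', g, hg, hfP'⟩ := exists_prime_eq_colon _ f hfN
  have hgN : g ∉ tensorSup L K := fun h => hP'.ne_top ((Ideal.eq_top_iff_one _).2
    ((hg 1).2 (by simpa)))
  obtain ⟨n, φ, hφ, hint⟩ := exists_noether_lift (k := k) q hq.1.1.ne_top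
  have hQP' : tensorSup J I ≤ P' := by
    refine sup_le (Ideal.map_le_iff_le_comap.2 fun b hb => ?_)
      (Ideal.map_le_iff_le_comap.2 fun a ha => ?_)
    · refine hP'.mem_of_pow_mem u ((hg _).2 (Ideal.mul_mem_right _ _ ?_))
      change (b ⊗ₜ 1) ^ u ∈ _
      rw [Algebra.TensorProduct.tmul_pow, one_pow]
      exact tmul_one_mem_tensorSup _ (hJL (Ideal.pow_mem_pow hb u))
    · refine hP'.mem_of_pow_mem t ((hg _).2 (Ideal.mul_mem_right _ _ ?_))
      change (1 ⊗ₜ a) ^ t ∈ _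
      rw [Algebra.TensorProduct.tmul_pow, one_pow]
      exact one_tmul_mem_tensorSup _ (hIK (Ideal.pow_mem_pow ha t))
  obtain ⟨P, hP, hPP'⟩ := Ideal.exists_minimalPrimes_le hQP'
  have hPp := hP.1.1
  obtain ⟨s, hsP, hsf⟩ := hf P hP
  have hqP : ∀ b ∈ q, (b ⊗ₜ 1 : B ⊗[k] A) ∈ P := by
    have h1 := comap_left_mem_minimalPrimes hP
    refine hq.2 h1.1 fun b hb => ?_
    by_contra hbq
    exact hgN (mem_of_tmul_one_mul (mk_mem_nonZeroDivisors hL hbq) ((hg _).1 (hPP' hb)))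
  have hpP : ∀ a ∈ p, (1 ⊗ₜ a : B ⊗[k] A) ∈ P := by
    have h1 := comap_right_mem_minimalPrimes hP
    refine hp.2 h1.1 fun b hb => ?_
    by_contra hbq
    exact hgN (mem_of_one_tmul_mul (mk_mem_nonZeroDivisors hK hbq) ((hg _).1 (hPP' hb)))
  -- By incomparability it suffices that the contraction of `P'` to `k[t] ⊗ A = A[t]` lies in that
  -- of `P`. The former is contained in `p A[t]`, because a polynomial with a coefficient outside
  -- `p` is regular on `(B ⧸ L) ⊗ (A ⧸ K)`; the latter contains `p A[t]`.
  refine (comap_lt_comap_of_noether φ hint hqP hPP' (hfP' s hsf) hsP).not_ge fun a ha => ?_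
  have hcoeff : ∀ m, coeff m (polyTensor k n A a) ∈ p := by
    intro m
    by_contra hm
    refine hgN ((mem_tensorSup_iff _ _ _).2 ?_)
    have h1 := (mem_tensorSup_iff _ _ _).1 ((hg _).1 ha)
    rw [map_mul] at h1
    let a' := Algebra.TensorProduct.map (AlgHom.id k (MvPolynomial (Fin n) k))
      (Ideal.Quotient.mkₐ k K) a
    have ha' : a' ∈ nonZeroDivisors (MvPolynomial (Fin n) k ⊗[k] (A ⧸ K)) := by
      have : polyTensor k n _ a' ∈ nonZeroDivisors (MvPolynomial (Fin n) (A ⧸ K)) := by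
        refine MvPolynomial.mem_nonZeroDivisors_of_coeff_mem _ m ?_
        rw [polyTensor_map, coeff_map]
        exact mk_mem_nonZeroDivisors hK hm
      rw [mem_nonZeroDivisors_iff_right] at this ⊢
      intro x hx
      apply (polyTensor k n _).injective
      rw [map_zero]
      apply this
      rw [← map_mul, hx, map_zero]
    refine nzd_of_torsionFree ((Ideal.Quotient.mkₐ k L).comp φ) ?_ a' ha' _ ?_
    · intro t ht x hx
      exact (mem_nonZeroDivisors_iff.1
        (mk_mem_nonZeroDivisors hL (fun h => ht (hφ t h)))).1 x hx
    · rw [← h1]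
      congr 1
      change ((Algebra.TensorProduct.map ((Ideal.Quotient.mkₐ k L).comp φ) (AlgHom.id k _)).comp
        (Algebra.TensorProduct.map (AlgHom.id k (MvPolynomial (Fin n) k))
          (Ideal.Quotient.mkₐ k K))) a = ((Algebra.TensorProduct.map (Ideal.Quotient.mkₐ k L)
          (Ideal.Quotient.mkₐ k K)).comp (Algebra.TensorProduct.map φ (AlgHom.id k A))) a
      rw [← Algebra.TensorProduct.map_comp, ← Algebra.TensorProduct.map_comp]
      rfl
  have hsum : a = ∑ m ∈ (polyTensor k n A a).support,
      (monomial m 1 ⊗ₜ coeff m (polyTensor k n A a)) := by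
    apply (polyTensor k n A).injective
    rw [map_sum]
    conv_lhs => rw [(polyTensor k n A a).as_sum]
    refine Finset.sum_congr rfl fun m _ => ?_
    rw [← AlgEquiv.symm_apply_eq, polyTensor_symm_monomial]
  rw [Ideal.mem_comap, hsum, map_sum]
  refine Ideal.sum_mem _ fun m _ => ?_
  have : Algebra.TensorProduct.map φ (AlgHom.id k A)
      (monomial m 1 ⊗ₜ coeff m (polyTensor k n A a)) =
      (φ (monomial m 1) ⊗ₜ 1) * (1 ⊗ₜ coeff m (polyTensor k n A a)) := by simp
  rw [this]
  exact Ideal.mul_mem_left _ _ (hpP _ (hcoeff m))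

end core

/-! ### Homogeneity of symbolic powers and Waldschmidt constants -/

/-- The ring homomorphism `f ↦ ∑ d, f_d z ^ d`, where `f_d` is the component of degree `d`. -/
noncomputable def gradHom (k σ : Type*) [CommRing k] :
    MvPolynomial σ k →+* Polynomial (MvPolynomial σ k) :=
  eval₂Hom (Polynomial.C.comp C) (fun i => Polynomial.C (X i) * Polynomial.X)

lemma gradHom_monomial {k σ : Type*} [CommRing k] (m : σ →₀ ℕ) (c : k) :
    gradHom k σ (monomial m c) = Polynomial.monomial m.degree (monomial m c) := by
  rw [gradHom, coe_eval₂Hom, eval₂_monomial, ← Polynomial.C_mul_X_pow_eq_monomial,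
    monomial_eq, map_mul, mul_assoc]
  congr 1
  rw [Finsupp.prod, Finsupp.prod, map_prod, Finsupp.degree_apply, ← Finset.prod_pow_eq_pow_sum,
    ← Finset.prod_mul_distrib]
  exact Finset.prod_congr rfl fun i _ => by rw [mul_pow, map_pow]

lemma coeff_gradHom {k σ : Type*} [CommRing k] (d : ℕ) (f : MvPolynomial σ k) :
    (gradHom k σ f).coeff d = homogeneousComponent d f := by
  classical
  induction f using MvPolynomial.induction_on' with
  | monomial m c =>
    rw [gradHom_monomial, Polynomial.coeff_monomial]
    ext e
    rw [coeff_homogeneousComponent]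
    split_ifs with h1 h2 h2
    · rfl
    · rw [coeff_monomial, if_neg]
      rintro rfl
      exact h2 h1
    · rw [coeff_monomial, if_neg, coeff_zero]
      rintro rfl
      exact h1 h2
    · rfl
  | add p q hp hq => rw [map_add, Polynomial.coeff_add, hp, hq, map_add]

/-- Symbolic powers of a homogeneous ideal are homogeneous: an element outside a minimal prime
has a homogeneous component outside it, so its image under `gradHom` is regular modulo the local
power. -/
lemma isHomogeneousIdeal_symbPow {k σ : Type*} [CommRing k] {I : Ideal (MvPolynomial σ k)}
    (hI : IsHomogeneousIdeal I) (n : ℕ) : IsHomogeneousIdeal (symbPow I n) := by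
  intro f hf d
  rw [mem_symbPow_iff_localPow] at hf ⊢
  intro P hP
  have hPp := hP.1.1
  obtain ⟨s, hs, hsf⟩ := (mem_localPow _ _ _ _).1 (hf P hP)
  have h1 : (I ^ n).map (gradHom k σ) ≤ (I ^ n).map Polynomial.C := by
    rw [Ideal.map_pow, Ideal.map_pow]
    refine Ideal.pow_right_mono (Ideal.map_le_iff_le_comap.2 fun x hx => ?_) n
    rw [Ideal.mem_comap, Ideal.mem_map_C_iff]
    intro e
    rw [coeff_gradHom]
    exact hI x hx e
  have h2 := Ideal.mem_map_C_iff.1 (h1 (Ideal.mem_map_of_mem _ hsf))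
  let π := Polynomial.mapRingHom (Ideal.Quotient.mk (localPow I P n))
  have h3 : π (gradHom k σ (s * f)) = 0 := by
    ext e
    simp only [π, Polynomial.coe_mapRingHom, Polynomial.coeff_map, Polynomial.coeff_zero]
    exact Ideal.Quotient.eq_zero_iff_mem.2 (pow_le_localPow _ _ _ (h2 e))
  obtain ⟨e, he⟩ : ∃ e, homogeneousComponent e s ∉ P := by
    by_contra! h
    refine hs ?_
    rw [← sum_homogeneousComponent s]
    exact Ideal.sum_mem _ fun i _ => h i
  have h4 : π (gradHom k σ s) ∈ nonZeroDivisors _ := by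
    refine Polynomial.mem_nonzeroDivisors_of_coeff_mem e ?_
    simp only [π, Polynomial.coe_mapRingHom, Polynomial.coeff_map, coeff_gradHom]
    exact mk_mem_nonZeroDivisors (localPow_saturated I P n) he
  rw [map_mul, map_mul] at h3
  have h5 := congrArg (fun p => Polynomial.coeff p d) ((mem_nonZeroDivisors_iff.1 h4).1 _ h3)
  simp only [π, Polynomial.coe_mapRingHom, Polynomial.coeff_map, Polynomial.coeff_zero,
    coeff_gradHom] at h5
  exact Ideal.Quotient.eq_zero_iff_mem.1 h5

lemma alphaDeg_le {k σ : Type*} [CommRing k] {I : Ideal (MvPolynomial σ k)}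
    {f : MvPolynomial σ k} {d : ℕ} (hf : f ∈ I) (h0 : f ≠ 0) (hd : f.IsHomogeneous d) :
    alphaDeg I ≤ d := Nat.sInf_le ⟨f, hf, h0, hd⟩

lemma exists_alphaDeg {k σ : Type*} [CommRing k] {I : Ideal (MvPolynomial σ k)}
    (h : ∃ d, ∃ f ∈ I, f ≠ 0 ∧ f.IsHomogeneous d) :
    ∃ f ∈ I, f ≠ 0 ∧ f.IsHomogeneous (alphaDeg I) :=
  Nat.sInf_mem (s := {d | ∃ f ∈ I, f ≠ 0 ∧ f.IsHomogeneous d}) h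

lemma exists_homogeneous_mem {k σ : Type*} [CommRing k] {I : Ideal (MvPolynomial σ k)}
    (hI : IsHomogeneousIdeal I) (h : I ≠ ⊥) : ∃ d, ∃ f ∈ I, f ≠ 0 ∧ f.IsHomogeneous d := by
  obtain ⟨f, hf, h0⟩ := Submodule.exists_mem_ne_zero_of_ne_bot h
  obtain ⟨d, hd⟩ : ∃ d, homogeneousComponent d f ≠ 0 := by
    by_contra! h
    refine h0 ?_
    rw [← sum_homogeneousComponent f]
    exact Finset.sum_eq_zero fun i _ => h i
  exact ⟨d, _, hI f hf d, hd, homogeneousComponent_isHomogeneous d f⟩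

lemma exists_homogeneous_mem_symbPow {k σ : Type*} [Field k] {I : Ideal (MvPolynomial σ k)}
    (h : ∃ d, ∃ f ∈ I, f ≠ 0 ∧ f.IsHomogeneous d) (n : ℕ) :
    ∃ d, ∃ f ∈ symbPow I n, f ≠ 0 ∧ f.IsHomogeneous d := by
  obtain ⟨d, f, hf, h0, hd⟩ := h
  exact ⟨d * n, f ^ n, pow_le_symbPow _ _ (Ideal.pow_mem_pow hf n), pow_ne_zero n h0, hd.pow n⟩

/-- Existence of the Waldschmidt constant (Fekete's lemma), with the bound it gives. -/
lemma exists_waldschmidt {k σ : Type*} [Field k] {I : Ideal (MvPolynomial σ k)}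
    (h : ∃ d, ∃ f ∈ I, f ≠ 0 ∧ f.IsHomogeneous d) :
    ∃ a : ℝ, Filter.Tendsto (fun m : ℕ => (alphaDeg (symbPow I m) : ℝ) / m) Filter.atTop
      (nhds a) ∧ ∀ n : ℕ, n * a ≤ alphaDeg (symbPow I n) := by
  have hs : Subadditive fun m : ℕ => (alphaDeg (symbPow I m) : ℝ) := by
    intro m n
    obtain ⟨f, hf, hf0, hfd⟩ := exists_alphaDeg (exists_homogeneous_mem_symbPow h m)
    obtain ⟨g, hg, hg0, hgd⟩ := exists_alphaDeg (exists_homogeneous_mem_symbPow h n)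
    have := alphaDeg_le (mul_mem_symbPow I m n hf hg) (mul_ne_zero hf0 hg0) (hfd.mul hgd)
    beta_reduce
    exact_mod_cast this
  have hb : BddBelow (Set.range fun n : ℕ => (alphaDeg (symbPow I n) : ℝ) / n) := by
    refine ⟨0, ?_⟩
    rintro _ ⟨n, rfl⟩
    positivity
  refine ⟨hs.lim, hs.tendsto_lim hb, fun n => ?_⟩
  rcases eq_or_ne n 0 with rfl | hn
  · simp
  · have h1 := hs.lim_le_div hb hn
    rw [le_div_iff₀ (by positivity)] at h1
    linarith

lemma alphaDeg_symbPow_zero {k σ : Type*} [Field k] (I : Ideal (MvPolynomial σ k)) :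
    alphaDeg (symbPow I 0) = 0 := by
  have h1 : (1 : MvPolynomial σ k) ∈ symbPow I 0 := pow_le_symbPow I 0 (by simp)
  exact Nat.le_zero.1 (alphaDeg_le h1 one_ne_zero (isHomogeneous_one σ k))

/-! ### Symbolic powers of a sum of ideals in a tensor product -/

section core

variable {k A B : Type*} [Field k] [CommRing A] [Algebra k A] [CommRing B] [Algebra k B]

/-- Symbolic powers of `J` extend into those of the sum, since minimal primes of the sum contract
to minimal primes of `J`. -/
lemma tmul_one_mem_symbPow {J : Ideal B} (I : Ideal A) {n : ℕ} {x : B} (hx : x ∈ symbPow J n) :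
    x ⊗ₜ 1 ∈ symbPow (tensorSup (k := k) J I) n := by
  rw [mem_symbPow] at hx ⊢
  intro P hP
  obtain ⟨s, hs, h⟩ := hx _ (comap_left_mem_minimalPrimes hP)
  refine ⟨s ⊗ₜ 1, hs, ?_⟩
  have h1 : (Algebra.TensorProduct.includeLeft : B →ₐ[k] B ⊗[k] A) (s * x) ∈
      (J ^ n).map (Algebra.TensorProduct.includeLeft : B →ₐ[k] B ⊗[k] A) :=
    Ideal.mem_map_of_mem _ h
  rw [Ideal.map_pow, map_mul] at h1
  exact Ideal.pow_right_mono le_sup_left n h1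

lemma one_tmul_mem_symbPow (J : Ideal B) {I : Ideal A} {n : ℕ} {x : A} (hx : x ∈ symbPow I n) :
    1 ⊗ₜ x ∈ symbPow (tensorSup (k := k) J I) n := by
  rw [mem_symbPow] at hx ⊢
  intro P hP
  obtain ⟨s, hs, h⟩ := hx _ (comap_right_mem_minimalPrimes hP)
  refine ⟨1 ⊗ₜ s, hs, ?_⟩
  have h1 : (Algebra.TensorProduct.includeRight : A →ₐ[k] B ⊗[k] A) (s * x) ∈
      (I ^ n).map (Algebra.TensorProduct.includeRight : A →ₐ[k] B ⊗[k] A) :=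
    Ideal.mem_map_of_mem _ h
  rw [Ideal.map_pow, map_mul] at h1
  exact Ideal.pow_right_mono le_sup_right n h1

/-- The sharp exponent here, one better than `Ideal.sup_pow_add_le_pow_sup_pow`, lets the two
exponents in `exists_alphaDeg_add_le` add up to `n`. -/
lemma sup_pow_le {R : Type*} [CommRing R] (I J : Ideal R) (m n : ℕ) :
    (I ⊔ J) ^ (m + n + 1) ≤ I ^ (m + 1) ⊔ J ^ (n + 1) := by
  rw [← Ideal.add_eq_sup, ← Ideal.add_eq_sup, add_pow, Ideal.sum_eq_sup]
  apply Finset.sup_le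
  intro i hi
  by_cases hn : m + 1 ≤ i
  · exact (Ideal.mul_le_left.trans (Ideal.mul_le_left.trans
      ((Ideal.pow_le_pow_right hn).trans le_sup_left)))
  · refine (Ideal.mul_le_left.trans (Ideal.mul_le_right.trans
      ((Ideal.pow_le_pow_right ?_).trans le_sup_right)))
    lia

/-- The local form of the binomial inclusion `(J + I)^{(m+n+1)} ⊆ J^{(m+1)} + I^{(n+1)}`. -/
lemma mem_tensorSup_localPow [IsNoetherianRing (B ⊗[k] A)] [Algebra.FiniteType k B]
    {J : Ideal B} {I : Ideal A} {m n : ℕ} {f : B ⊗[k] A}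
    (hf : f ∈ symbPow (tensorSup J I) (m + n + 1)) (q : Ideal B) [q.IsPrime]
    (hq : q ∈ J.minimalPrimes) (p : Ideal A) [p.IsPrime] (hp : p ∈ I.minimalPrimes) :
    f ∈ tensorSup (localPow J q (m + 1)) (localPow I p (n + 1)) := by
  refine mem_tensorSup_of_minimalPrimes hp hq (localPow_saturated I p (n + 1))
    (localPow_saturated J q (m + 1)) (pow_le_localPow I p (n + 1)) (pow_le_localPow J q (m + 1))
    fun P hP => ?_
  obtain ⟨s, hs, h⟩ := (mem_symbPow _ _ _).1 hf P hP
  refine ⟨s, hs, ?_⟩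
  have h1 := sup_pow_le _ _ m n h
  rw [← Ideal.map_pow, ← Ideal.map_pow] at h1
  exact tensorSup_mono (pow_le_localPow _ _ _) (pow_le_localPow _ _ _) h1

/-- The slice map `id ⊗ l : B ⊗ A → B` attached to a linear form `l` on `A`. -/
noncomputable def slice (B : Type*) [CommRing B] [Algebra k B] (l : A →ₗ[k] k) :
    B ⊗[k] A →ₗ[k] B :=
  (TensorProduct.rid k B).toLinearMap ∘ₗ l.lTensor B

lemma slice_tmul (l : A →ₗ[k] k) (b : B) (a : A) : slice B l (b ⊗ₜ a) = l a • b := by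
  simp [slice]

/-- If `l` vanishes on `K`, slicing maps `tensorSup L K` into `L`. -/
lemma slice_mem {L : Ideal B} {K : Ideal A} (l : A →ₗ[k] k) (hl : ∀ a ∈ K, l a = 0)
    {f : B ⊗[k] A} (hf : f ∈ tensorSup L K) : slice B l f ∈ L := by
  obtain ⟨f1, h1, f2, h2, rfl⟩ := Submodule.mem_sup.1 hf
  rw [map_add]
  refine L.add_mem ?_ ?_
  · suffices h : ∀ r, slice B l (r * f1) ∈ L by simpa using h 1
    refine Submodule.span_induction (p := fun f _ => ∀ r, slice B l (r * f) ∈ L)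
      ?_ (by simp) (fun x y _ _ hx hy r => ?_) (fun a x _ hx r => ?_) h1
    · rintro _ ⟨b, hb, rfl⟩ r
      induction r with
      | zero => simp
      | add x y hx hy => rw [add_mul, map_add]; exact L.add_mem hx hy
      | tmul s t =>
        rw [Algebra.TensorProduct.includeLeft_apply,
          Algebra.TensorProduct.tmul_mul_tmul, slice_tmul, ← smul_mul_assoc]
        exact L.mul_mem_left _ hb
    · rw [mul_add, map_add]
      exact L.add_mem (hx r) (hy r)
    · rw [smul_eq_mul, ← mul_assoc]
      exact hx _
  · suffices h : ∀ r, slice B l (r * f2) = 0 by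
      have := h 1
      rw [one_mul] at this
      rw [this]
      exact L.zero_mem
    refine Submodule.span_induction (p := fun f _ => ∀ r, slice B l (r * f) = 0)
      ?_ (by simp) (fun x y _ _ hx hy r => ?_) (fun a x _ hx r => ?_) h2
    · rintro _ ⟨b, hb, rfl⟩ r
      induction r with
      | zero => simp
      | add x y hx hy => rw [add_mul, map_add, hx, hy, add_zero]
      | tmul s t =>
        rw [Algebra.TensorProduct.includeRight_apply,
          Algebra.TensorProduct.tmul_mul_tmul, slice_tmul, hl _ (K.mul_mem_left _ hb), zero_smul]
    · rw [mul_add, map_add, hx, hy, add_zero]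
    · rw [smul_eq_mul, ← mul_assoc]
      exact hx _

lemma map_tensorSup {R : Type*} [CommRing R] [Algebra k R] (E : B ⊗[k] A →ₐ[k] R)
    (i : B →ₐ[k] R) (j : A →ₐ[k] R) (hi : ∀ x, E (x ⊗ₜ 1) = i x) (hj : ∀ x, E (1 ⊗ₜ x) = j x)
    (L : Ideal B) (K : Ideal A) : (tensorSup L K).map (E : B ⊗[k] A →+* R) = L.map i ⊔ K.map j := by
  obtain rfl : E.comp Algebra.TensorProduct.includeLeft = i := AlgHom.ext hi
  obtain rfl : E.comp Algebra.TensorProduct.includeRight = j := AlgHom.ext hj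
  rw [tensorSup, Ideal.map_sup]
  exact congrArg₂ _ (Ideal.map_map _ _) (Ideal.map_map _ _)

/-- Transport of symbolic powers of a sum of ideals along `E : B ⊗ A ≃ R`. -/
lemma mem_symbPow_tensorSup_iff {R : Type*} [CommRing R] [Algebra k R] (E : B ⊗[k] A ≃ₐ[k] R)
    (i : B →ₐ[k] R) (j : A →ₐ[k] R) (hi : ∀ x, E (x ⊗ₜ 1) = i x) (hj : ∀ x, E (1 ⊗ₜ x) = j x)
    (L : Ideal B) (K : Ideal A) (n : ℕ) (f : B ⊗[k] A) :
    f ∈ symbPow (tensorSup L K) n ↔ E f ∈ symbPow (L.map i ⊔ K.map j) n := by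
  have h1 := map_tensorSup (E : B ⊗[k] A →ₐ[k] R) i j hi hj L K
  have h2 : (L.map i ⊔ K.map j).comap (E.toRingEquiv : B ⊗[k] A →+* R) = tensorSup L K := by
    rw [← h1]
    exact Ideal.comap_map_of_bijective (E.toRingEquiv : B ⊗[k] A →+* R) E.bijective
  rw [← h2]
  exact mem_symbPow_comap_equiv E.toRingEquiv _ n f

end core

/-! ### The degree bound in `k[σ ⊔ τ]` -/

section poly

variable {k σ τ : Type*} [Field k]

/-- The exponent on `σ ⊕ τ` glued from exponents on `σ` and on `τ`. -/
noncomputable def glue (e : σ →₀ ℕ) (e' : τ →₀ ℕ) : σ ⊕ τ →₀ ℕ :=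
  e.mapDomain Sum.inl + e'.mapDomain Sum.inr

lemma glue_injective {e₁ e₂ : σ →₀ ℕ} {e₁' e₂' : τ →₀ ℕ} (h : glue e₁ e₁' = glue e₂ e₂') :
    e₁ = e₂ ∧ e₁' = e₂' := by
  have hl : ∀ (e : σ →₀ ℕ) (e' : τ →₀ ℕ) i, glue e e' (Sum.inl i) = e i := fun e e' i => by
    rw [glue, Finsupp.add_apply, Finsupp.mapDomain_apply Sum.inl_injective,
      Finsupp.mapDomain_of_notMem_range _ _ (by simp), add_zero]
  have hr : ∀ (e : σ →₀ ℕ) (e' : τ →₀ ℕ) i, glue e e' (Sum.inr i) = e' i := fun e e' i => by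
    rw [glue, Finsupp.add_apply, Finsupp.mapDomain_apply Sum.inr_injective,
      Finsupp.mapDomain_of_notMem_range _ _ (by simp), zero_add]
  exact ⟨Finsupp.ext fun i => by rw [← hl e₁ e₁', h, hl],
    Finsupp.ext fun i => by rw [← hr e₁ e₁', h, hr]⟩

lemma weight_one_eq_degree (e : σ →₀ ℕ) : Finsupp.weight 1 e = e.degree := by
  rw [Finsupp.degree_eq_weight_one]
  rfl

lemma degree_glue (e : σ →₀ ℕ) (e' : τ →₀ ℕ) : (glue e e').degree = e.degree + e'.degree := by
  rw [glue, map_add, Finsupp.degree_mapDomain, Finsupp.degree_mapDomain]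

lemma tensorEquivSum_tmul_one (x : MvPolynomial σ k) :
    tensorEquivSum k σ τ k (x ⊗ₜ 1) = rename Sum.inl x := by
  have : (tensorEquivSum k σ τ k).toAlgHom.comp
      Algebra.TensorProduct.includeLeft = rename Sum.inl := by
    ext i
    simp
  exact DFunLike.congr_fun this x

lemma tensorEquivSum_one_tmul (x : MvPolynomial τ k) :
    tensorEquivSum k σ τ k (1 ⊗ₜ x) = rename Sum.inr x := by
  have : (tensorEquivSum k σ τ k).toAlgHom.comp
      Algebra.TensorProduct.includeRight = rename Sum.inr := by
    ext i
    simp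
  exact DFunLike.congr_fun this x

lemma tensorEquivSum_monomial (e : σ →₀ ℕ) (e' : τ →₀ ℕ) (a b : k) :
    tensorEquivSum k σ τ k (monomial e a ⊗ₜ monomial e' b) = monomial (glue e e') (a * b) := by
  have : (monomial e a ⊗ₜ[k] monomial e' b) = (monomial e a ⊗ₜ 1) * (1 ⊗ₜ monomial e' b) := by
    simp
  rw [this, map_mul, tensorEquivSum_tmul_one, tensorEquivSum_one_tmul, rename_monomial,
    rename_monomial, monomial_mul]
  rfl

lemma mem_symbPow_tensorSup (I : Ideal (MvPolynomial σ k)) (J : Ideal (MvPolynomial τ k)) (n : ℕ)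
    (f : MvPolynomial σ k ⊗[k] MvPolynomial τ k) :
    f ∈ symbPow (tensorSup I J) n ↔ tensorEquivSum k σ τ k f ∈ symbPow
      (I.map (rename Sum.inl : MvPolynomial σ k →ₐ[k] MvPolynomial (σ ⊕ τ) k) ⊔
      J.map (rename Sum.inr : MvPolynomial τ k →ₐ[k] MvPolynomial (σ ⊕ τ) k)) n :=
  mem_symbPow_tensorSup_iff _ _ _ tensorEquivSum_tmul_one tensorEquivSum_one_tmul I J n f

open scoped Classical in
/-- The coefficients in `k[τ]` of an element of `k[σ] ⊗ k[τ] = k[τ][σ]`. -/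
noncomputable def leftCoeff (k σ τ : Type*) [Field k] :
    MvPolynomial σ k ⊗[k] MvPolynomial τ k ≃ₗ[k] (σ →₀ ℕ) →₀ MvPolynomial τ k :=
  TensorProduct.equivFinsuppOfBasisLeft (basisMonomials σ k)

lemma leftCoeff_tmul (x : MvPolynomial σ k) (y : MvPolynomial τ k) (e : σ →₀ ℕ) :
    leftCoeff k σ τ (x ⊗ₜ y) e = coeff e x • y := by
  classical
  rw [leftCoeff, equivFinsuppOfBasisLeft_apply_tmul_apply]
  rfl

/-- Induction over tensors of monomials. -/
lemma tmul_induction {p : MvPolynomial σ k ⊗[k] MvPolynomial τ k → Prop}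
    (hm : ∀ e e' a b, p (monomial e a ⊗ₜ monomial e' b)) (h0 : p 0)
    (ha : ∀ x y, p x → p y → p (x + y)) (f) : p f := by
  induction f with
  | zero => exact h0
  | add x y hx hy => exact ha x y hx hy
  | tmul x y =>
    induction x using MvPolynomial.induction_on' with
    | add x x' hx hx' => rw [TensorProduct.add_tmul]; exact ha _ _ hx hx'
    | monomial e a =>
      induction y using MvPolynomial.induction_on' with
      | add x x' hx hx' => rw [TensorProduct.tmul_add]; exact ha _ _ hx hx'
      | monomial e' b => exact hm e e' a b

lemma coeff_leftCoeff (f : MvPolynomial σ k ⊗[k] MvPolynomial τ k) (e : σ →₀ ℕ) (e' : τ →₀ ℕ) :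
    coeff e' (leftCoeff k σ τ f e) = coeff (glue e e') (tensorEquivSum k σ τ k f) := by
  classical
  induction f using tmul_induction with
  | h0 => simp
  | ha x y hx hy => simp only [map_add, Finsupp.add_apply, coeff_add, hx, hy]
  | hm e₁ e₁' a b =>
    rw [leftCoeff_tmul, tensorEquivSum_monomial, coeff_smul, coeff_monomial, coeff_monomial,
      coeff_monomial]
    by_cases h : glue e₁ e₁' = glue e e'
    · obtain ⟨rfl, rfl⟩ := glue_injective h
      simp
    · rw [if_neg h]
      by_cases h1 : e₁ = e
      · rw [if_neg (c := e₁' = e'), smul_zero]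
        rintro rfl
        exact h (by rw [h1])
      · simp [h1]

lemma coeff_slice (l : MvPolynomial τ k →ₗ[k] k) (f : MvPolynomial σ k ⊗[k] MvPolynomial τ k)
    (e : σ →₀ ℕ) : coeff e (slice (MvPolynomial σ k) l f) = l (leftCoeff k σ τ f e) := by
  induction f with
  | zero => simp
  | add x y hx hy => simp only [map_add, Finsupp.add_apply, coeff_add, hx, hy]
  | tmul x y => rw [slice_tmul, leftCoeff_tmul, coeff_smul, map_smul, smul_eq_mul, smul_eq_mul,
      mul_comm]

/-- For `f` in the symbolic power `(I + J)^{(i+j+1)}`, each coefficient `f_e ∈ k[τ]` with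
`|e| < α(I^{(i+1)})` lies in `J^{(j+1)}`. Otherwise a linear form vanishing on a local power
of `J` but not at `f_e` gives a slice of `f` in `I^{(i+1)}` whose component of degree `|e|` is
nonzero. -/
lemma leftCoeff_mem_symbPow [Finite σ] [Finite τ] {I : Ideal (MvPolynomial σ k)}
    (hI : IsHomogeneousIdeal I) (J : Ideal (MvPolynomial τ k)) {i j : ℕ}
    {f : MvPolynomial σ k ⊗[k] MvPolynomial τ k} (hf : f ∈ symbPow (tensorSup I J) (i + j + 1))
    {e : σ →₀ ℕ} (he : e.degree < alphaDeg (symbPow I (i + 1))) :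
    leftCoeff k σ τ f e ∈ symbPow J (j + 1) := by
  have hN : IsNoetherianRing (MvPolynomial σ k ⊗[k] MvPolynomial τ k) :=
    isNoetherianRing_of_ringEquiv _ (tensorEquivSum k σ τ k).symm.toRingEquiv
  rw [mem_symbPow_iff_localPow]
  intro q hq
  have hqp := hq.1.1
  by_contra hne
  obtain ⟨l, hl, hlK⟩ := Submodule.exists_le_ker_of_notMem
    (p := (localPow J q (j + 1)).restrictScalars k) hne
  have hs : slice (MvPolynomial σ k) l f ∈ symbPow I (i + 1) := by
    rw [mem_symbPow_iff_localPow]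
    intro p hp
    have hpp := hp.1.1
    exact slice_mem l (fun a ha => hlK ha) (mem_tensorSup_localPow hf p hp q hq)
  have h0 : homogeneousComponent e.degree (slice (MvPolynomial σ k) l f) = 0 := by
    by_contra h
    exact absurd (alphaDeg_le (isHomogeneousIdeal_symbPow hI _ _ hs e.degree) h
      (homogeneousComponent_isHomogeneous _ _)) (by omega)
  have h1 := congrArg (coeff e) h0
  rw [coeff_homogeneousComponent, if_pos rfl, coeff_slice, coeff_zero] at h1
  exact hl h1

/-- The degree bound for symbolic powers of `I + J`: choose a nonzero coefficient `f_e ∈ k[τ]`,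
homogeneous of degree `d - |e|`, and the largest `i` with `α(I^{(i)}) ≤ |e|`; if `i < n`, then
`f_e ∈ J^{(n-i)}`. -/
lemma exists_alphaDeg_add_le [Finite σ] [Finite τ] {I : Ideal (MvPolynomial σ k)}
    (hI : IsHomogeneousIdeal I) (J : Ideal (MvPolynomial τ k)) {n d : ℕ}
    {f : MvPolynomial σ k ⊗[k] MvPolynomial τ k} (hf : f ∈ symbPow (tensorSup I J) n)
    (h0 : f ≠ 0) (hd : (tensorEquivSum k σ τ k f).IsHomogeneous d) :
    ∃ i j, i + j = n ∧ alphaDeg (symbPow I i) + alphaDeg (symbPow J j) ≤ d := by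
  obtain ⟨e, he⟩ : ∃ e, leftCoeff k σ τ f e ≠ 0 := by
    by_contra! h
    exact h0 ((leftCoeff k σ τ).injective (by rw [map_zero]; exact Finsupp.ext h))
  have hdeg : ∀ e', coeff e' (leftCoeff k σ τ f e) ≠ 0 → e.degree + e'.degree = d := by
    intro e' h
    rw [coeff_leftCoeff] at h
    rw [← degree_glue]
    have := hd h
    rwa [weight_one_eq_degree] at this
  have hed : e.degree ≤ d := by
    obtain ⟨e', h⟩ := ne_zero_iff.1 he
    have := hdeg e' h
    omega
  have hhom : (leftCoeff k σ τ f e).IsHomogeneous (d - e.degree) := by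
    intro e' h
    have := hdeg e' h
    rw [weight_one_eq_degree]
    omega
  by_cases hn : alphaDeg (symbPow I n) ≤ e.degree
  · exact ⟨n, 0, rfl, by rw [alphaDeg_symbPow_zero]; omega⟩
  classical
  have hex : ∃ t, e.degree < alphaDeg (symbPow I t) := ⟨n, by omega⟩
  obtain ⟨i, hi⟩ : ∃ i, Nat.find hex = i + 1 := by
    refine Nat.exists_eq_succ_of_ne_zero fun h => ?_
    have := Nat.find_spec hex
    rw [h, alphaDeg_symbPow_zero] at this
    omega
  have h1 : e.degree < alphaDeg (symbPow I (i + 1)) := hi ▸ Nat.find_spec hex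
  have h2 : alphaDeg (symbPow I i) ≤ e.degree := not_lt.1 (Nat.find_min hex (by omega))
  have h3 : i + 1 ≤ n := hi ▸ Nat.find_min' hex (by omega)
  obtain ⟨j, rfl⟩ : ∃ j, n = i + j + 1 := ⟨n - i - 1, by omega⟩
  have h4 := alphaDeg_le (leftCoeff_mem_symbPow hI J hf h1) he hhom
  exact ⟨i, j + 1, by omega, by omega⟩

end poly

/-- **Corollary 3.10**: for nonzero proper homogeneous ideals `I ⊆ A = k[X]`, `J ⊆ B = k[Y]`
and `R = k[X,Y]`, the Waldschmidt constants (the limits `α̂(L) = lim_m α(L^{(m)})/m`, which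
exist) satisfy `α̂(I+J) = min { α̂(I), α̂(J) }`. -/
theorem waldschmidt_sum_eq_min
    {k : Type} [Field k] {σ τ : Type} [Fintype σ] [Fintype τ]
    (I : Ideal (MvPolynomial σ k)) (J : Ideal (MvPolynomial τ k))
    (hIbot : I ≠ ⊥) (hItop : I ≠ ⊤) (hIhom : IsHomogeneousIdeal I)
    (hJbot : J ≠ ⊥) (hJtop : J ≠ ⊤) (hJhom : IsHomogeneousIdeal J)
    (IR JR : Ideal (MvPolynomial (σ ⊕ τ) k))
    (hIR : IR = Ideal.map (rename Sum.inl : MvPolynomial σ k →ₐ[k] MvPolynomial (σ ⊕ τ) k) I)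
    (hJR : JR = Ideal.map (rename Sum.inr : MvPolynomial τ k →ₐ[k] MvPolynomial (σ ⊕ τ) k) J) :
    ∃ a b c : ℝ,
      Filter.Tendsto (fun m : ℕ => (alphaDeg (symbPow I m) : ℝ) / m) Filter.atTop (nhds a) ∧
      Filter.Tendsto (fun m : ℕ => (alphaDeg (symbPow J m) : ℝ) / m) Filter.atTop (nhds b) ∧
      Filter.Tendsto (fun m : ℕ => (alphaDeg (symbPow (IR + JR) m) : ℝ) / m)
        Filter.atTop (nhds c) ∧
      c = min a b := by
  subst hIR hJR
  have hI := exists_homogeneous_mem hIhom hIbot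
  have hJ := exists_homogeneous_mem hJhom hJbot
  set Q := Ideal.map (rename Sum.inl : MvPolynomial σ k →ₐ[k] MvPolynomial (σ ⊕ τ) k) I +
    Ideal.map (rename Sum.inr : MvPolynomial τ k →ₐ[k] MvPolynomial (σ ⊕ τ) k) J with hQdef
  have hmem : ∀ n f, f ∈ symbPow (tensorSup I J) n ↔
      tensorEquivSum k σ τ k f ∈ symbPow Q n := mem_symbPow_tensorSup I J
  have hinl : ∀ n x, x ∈ symbPow I n → rename Sum.inl x ∈ symbPow Q n := fun n x hx => by
    rw [← tensorEquivSum_tmul_one, ← hmem]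
    exact tmul_one_mem_symbPow J hx
  have hinr : ∀ n x, x ∈ symbPow J n → rename Sum.inr x ∈ symbPow Q n := fun n x hx => by
    rw [← tensorEquivSum_one_tmul, ← hmem]
    exact one_tmul_mem_symbPow I hx
  have hQ : ∃ d, ∃ f ∈ Q, f ≠ 0 ∧ f.IsHomogeneous d := by
    obtain ⟨d, f, hf, hf0, hfd⟩ := hI
    exact ⟨d, rename Sum.inl f, Ideal.mem_sup_left (Ideal.mem_map_of_mem _ hf),
      (map_ne_zero_iff _ (rename_injective _ Sum.inl_injective)).2 hf0, hfd.rename_isHomogeneous⟩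
  obtain ⟨a, ha, ha'⟩ := exists_waldschmidt hI
  obtain ⟨b, hb, hb'⟩ := exists_waldschmidt hJ
  obtain ⟨c, hc, -⟩ := exists_waldschmidt hQ
  refine ⟨a, b, c, ha, hb, hc, le_antisymm (le_min ?_ ?_) ?_⟩
  · refine le_of_tendsto_of_tendsto' hc ha fun n => ?_
    obtain ⟨f, hf, hf0, hfd⟩ := exists_alphaDeg (exists_homogeneous_mem_symbPow hI n)
    have := alphaDeg_le (hinl n f hf)
      ((map_ne_zero_iff _ (rename_injective _ Sum.inl_injective)).2 hf0) hfd.rename_isHomogeneous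
    gcongr
  · refine le_of_tendsto_of_tendsto' hc hb fun n => ?_
    obtain ⟨f, hf, hf0, hfd⟩ := exists_alphaDeg (exists_homogeneous_mem_symbPow hJ n)
    have := alphaDeg_le (hinr n f hf)
      ((map_ne_zero_iff _ (rename_injective _ Sum.inr_injective)).2 hf0) hfd.rename_isHomogeneous
    gcongr
  · refine ge_of_tendsto hc ?_
    filter_upwards [Filter.eventually_gt_atTop 0] with n hn
    obtain ⟨f, hf, hf0, hfd⟩ := exists_alphaDeg (exists_homogeneous_mem_symbPow hQ n)
    obtain ⟨g, rfl⟩ := (tensorEquivSum k σ τ k).surjective f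
    obtain ⟨i, j, hij, h⟩ := exists_alphaDeg_add_le hIhom J ((hmem n g).2 hf)
      (fun h => hf0 (by rw [h, map_zero])) hfd
    have h1 : (alphaDeg (symbPow I i) : ℝ) + alphaDeg (symbPow J j) ≤ alphaDeg (symbPow Q n) := by
      exact_mod_cast h
    rw [le_div_iff₀ (by exact_mod_cast hn)]
    calc min a b * n = i * min a b + j * min a b := by rw [← hij]; push_cast; ring
      _ ≤ i * a + j * b := by gcongr; exacts [min_le_left _ _, min_le_right _ _]
      _ ≤ _ := (add_le_add (ha' i) (hb' j)).trans h1
end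

section
/- Let k be a field and let f : ℕ_{≥1} → ℕ be any convergent (i.e. eventually constant) non-negative numerical function. Then there exist a polynomial ring S over k and a monomial ideal Q ⊆ S such that depth S/Q^n = f(n) for all n ≥ 1. -/
/-!
The ideal `Q` lives in `k[x, y, w, z₁, …, z_s]`. Let `V ⊆ k[z₁, …, z_s]` be the ideal of the
squarefree monomials of degree `s - 1`. The depth of `k[z] / V^e` is `s - 1 - e` for
`1 ≤ e ≤ s - 1`, so the exponent of a power of `V` can be used to prescribe a depth. In its lowest
degree `D = 4 N + 4` in `x, y, w`, the ideal `Q` is spanned by products `x^a y^i w^j V^e`, where the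
cost `e` is `K j` for `i ≤ 1` and `K j + g (i - 1)` for `i > 1`; here `j ≤ 1`, and everything
with `i + j > 2 N + 1` or `j > N`, or of larger degree in `x, y, w`, also belongs to `Q`. When `g` is
antitone, `Qⁿ` has the same shape in degree `n D`, with the bounds on `i` and `j` for the costs
replaced by `n` (`MemPow.add`, `MemPow.split`). The largest cost occurring in `Qⁿ` is attained at
`j = min n N` and `i = n + 1`, or `i = 0` when `n ≥ N`, and equals `K * min n N + g n`: passing
from `n` to `n + 1` allows one more factor `w`, and makes one more power of `y` free of charge. The
depth of the quotient by `Qⁿ` turns out to be `s - 1` minus this largest cost. If `f` is constant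
from `N` on and `K` bounds `f`, then `f n + K * min n N` is monotone and bounded by
`C = f N + K N`. Hence `g n = C - f n - K * min n N` is admissible, and with `s = C + 1` the depth is
`f n`.

For the lower bound on the depth, the monomials outside `Qⁿ` are partitioned into translated
coordinate orthants, which filter the quotient by polynomial rings in at least `d` variables
(`depthGE_of_label`). Such a filtration gives the vanishing of `Ext^i(k, -)` for `i < d`
(`DepthGE`), from which a regular sequence of length `d` is obtained
(`exists_isRegular_of_depthGE`). For the upper bound, a monomial is exhibited whose annihilator
modulo `Qⁿ` is generated by variables (`idealDepth_powSet`); a module over a Noetherian local ring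
with a nonzero element killed by a prime `q` has no regular sequence longer than the dimension of the
quotient by `q` (`exists_ltSeries_of_isWeaklyRegular`, `length_le_of_colon`).
-/

open MvPolynomial TensorProduct

/-! ### Lower bounds for the depth through vanishing of `Ext` -/

section ExtVanishing

open CategoryTheory Abelian

universe u

variable {R : Type u} [CommRing R]

/-- `DepthGE m d M` says that `Ext i (R ⧸ m, M) = 0` for all `i < d`. By Rees' theorem this amounts
to `depth M ≥ d` when `M` is finitely generated and `M ≠ m M`; it also holds for `M = 0`, which is
what makes it convenient in inductions along short exact sequences. -/
def DepthGE (m : Ideal R) (d : ℕ) (M : Type u) [AddCommGroup M] [Module R M] : Prop :=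
  ∀ i < d, Subsingleton (Ext (ModuleCat.of R (R ⧸ m)) (ModuleCat.of R M) i)

lemma DepthGE.mono {m : Ideal R} {d e : ℕ} (h : d ≤ e) {M : Type u} [AddCommGroup M] [Module R M]
    (H : DepthGE m e M) : DepthGE m d M := fun i hi => H i (hi.trans_le h)

lemma DepthGE.of_subsingleton (m : Ideal R) (d : ℕ) (M : Type u) [AddCommGroup M] [Module R M]
    [Subsingleton M] : DepthGE m d M := by
  intro i _
  have h0 : 𝟙 (ModuleCat.of R M) = 0 := by
    ext x
    exact Subsingleton.elim (α := M) _ _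
  refine subsingleton_of_forall_eq 0 fun x => ?_
  rw [← Ext.comp_mk₀_id x, h0]
  simp

variable {A B C : Type u} [AddCommGroup A] [Module R A] [AddCommGroup B] [Module R B]
  [AddCommGroup C] [Module R C]

lemma shortExact_of_linearMap (f : A →ₗ[R] B) (g : B →ₗ[R] C) (hf : Function.Injective f)
    (hg : Function.Surjective g) (hfg : Function.Exact f g) :
    (ModuleCat.shortComplexOfCompEqZero f g hfg.linearMap_comp_eq_zero).ShortExact where
  exact := ModuleCat.shortComplex_exact _ hfg
  mono_f := by
    simpa [ModuleCat.shortComplexOfCompEqZero, ModuleCat.mono_iff_injective] using! hf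
  epi_g := by
    simpa [ModuleCat.shortComplexOfCompEqZero, ModuleCat.epi_iff_surjective] using! hg

/-- The depth lemma for the middle term of a short exact sequence. -/
lemma DepthGE.of_exact {m : Ideal R} {d : ℕ} (f : A →ₗ[R] B) (g : B →ₗ[R] C)
    (hf : Function.Injective f) (hg : Function.Surjective g) (hfg : Function.Exact f g)
    (hA : DepthGE m d A) (hC : DepthGE m d C) : DepthGE m d B := by
  intro i hi
  have hS := shortExact_of_linearMap f g hf hg hfg
  have := hA i hi
  have := hC i hi
  refine subsingleton_of_forall_eq 0 fun x => ?_
  obtain ⟨y, rfl⟩ := Ext.covariant_sequence_exact₂ (ModuleCat.of R (R ⧸ m)) hS x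
    (Subsingleton.elim (α := Ext (ModuleCat.of R (R ⧸ m)) (ModuleCat.of R C) i) _ _)
  rw [Subsingleton.elim (α := Ext (ModuleCat.of R (R ⧸ m)) (ModuleCat.of R A) i) y 0]
  simp

/-- If `x ∈ m` is regular on `A` with cokernel `C` of depth at least `d`, then `A` has depth
at least `d + 1`: multiplication by `x` is both injective and zero on the relevant `Ext`. -/
lemma DepthGE.succ {m : Ideal R} {d : ℕ} {x : R} (hx : x ∈ m) (g : A →ₗ[R] C)
    (hf : Function.Injective (LinearMap.lsmul R A x)) (hg : Function.Surjective g)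
    (hfg : Function.Exact (LinearMap.lsmul R A x) g)
    (hC : DepthGE m d C) : DepthGE m (d + 1) A := by
  intro i hi
  have hS := shortExact_of_linearMap _ g hf hg hfg
  have hann : x ∈ Module.annihilator R (ModuleCat.of R (R ⧸ m)) := by
    change x ∈ Module.annihilator R (R ⧸ m)
    rwa [Ideal.annihilator_quotient]
  have key : ∀ y : Ext (ModuleCat.of R (R ⧸ m)) (ModuleCat.of R A) i,
      y.comp (Ext.mk₀ (x • 𝟙 (ModuleCat.of R A))) (add_zero i) = 0 := by
    intro y
    have := Ext.postcomp_smul_id_eq_zero_of_mem_annihilator (M := ModuleCat.of R A) hann i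
    exact DFunLike.congr_fun (congrArg AddCommGrpCat.Hom.hom this) y
  refine subsingleton_of_forall_eq 0 fun y => ?_
  have hy := key y
  cases i with
  | zero =>
    obtain ⟨φ, rfl⟩ := Ext.addEquiv₀.symm.surjective y
    have hm : Mono (x • 𝟙 (ModuleCat.of R A)) := hS.mono_f
    have := Ext.postcomp_mk₀_injective_of_mono (ModuleCat.of R (R ⧸ m))
      (x • 𝟙 (ModuleCat.of R A))
    apply this
    rw [map_zero]
    exact hy
  | succ i =>
    have := hC i (by omega)
    obtain ⟨z, rfl⟩ := Ext.covariant_sequence_exact₁ (ModuleCat.of R (R ⧸ m)) hS y hy rfl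
    rw [Subsingleton.elim (α := Ext (ModuleCat.of R (R ⧸ m)) (ModuleCat.of R C) i) z 0]
    simp

/-- Colon sequence: `0 → R/(I : u) → R/I → R/(I + (u)) → 0`. -/
lemma DepthGE.of_colon {m : Ideal R} {d : ℕ} {I J K : Ideal R} (u : R)
    (hJ : ∀ r, r ∈ J ↔ u * r ∈ I) (hK : K = I ⊔ Ideal.span {u})
    (h1 : DepthGE m d (R ⧸ J)) (h2 : DepthGE m d (R ⧸ K)) : DepthGE m d (R ⧸ I) := by
  subst hK
  have hle : J ≤ Submodule.comap (LinearMap.lsmul R R u) I := fun r hr => by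
    simpa using (hJ r).1 hr
  refine DepthGE.of_exact (Submodule.mapQ J I (LinearMap.lsmul R R u) hle)
    (Submodule.factor le_sup_left) ?_ (Submodule.factor_surjective _) ?_ h1 h2
  · rw [← LinearMap.ker_eq_bot, LinearMap.ker_eq_bot']
    intro q hq
    obtain ⟨r, rfl⟩ := Submodule.mkQ_surjective _ q
    simp only [Submodule.mkQ_apply, Submodule.mapQ_apply, Submodule.Quotient.mk_eq_zero] at hq ⊢
    exact (hJ r).2 (by simpa using hq)
  · intro q
    obtain ⟨r, rfl⟩ := Submodule.mkQ_surjective _ q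
    have hfac : Submodule.factor (le_sup_left : I ≤ I ⊔ Ideal.span {u}) (Submodule.Quotient.mk r)
        = 0 ↔ r ∈ I ⊔ Ideal.span {u} := Submodule.Quotient.mk_eq_zero _
    rw [Submodule.mkQ_apply, hfac]
    constructor
    · intro hr
      obtain ⟨i, hi, y, hy, rfl⟩ := Submodule.mem_sup.1 hr
      obtain ⟨c, rfl⟩ := Ideal.mem_span_singleton'.1 hy
      refine ⟨Submodule.Quotient.mk c, ?_⟩
      rw [Submodule.mapQ_apply, Submodule.Quotient.eq]
      have : (LinearMap.lsmul R R u) c - (i + c * u) = -i := by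
        simp [mul_comm]
      rw [this]
      exact neg_mem hi
    · rintro ⟨q, hq⟩
      obtain ⟨c, rfl⟩ := Submodule.mkQ_surjective _ q
      rw [Submodule.mkQ_apply, Submodule.mapQ_apply, Submodule.Quotient.eq] at hq
      have : r = u * c - ((LinearMap.lsmul R R u) c - r) := by simp
      rw [this]
      exact sub_mem (Submodule.mem_sup_right (Ideal.mul_mem_right _ _
        (Ideal.mem_span_singleton_self u))) (Submodule.mem_sup_left hq)

lemma DepthGE.succ_of_regular {m : Ideal R} {d : ℕ} {I K : Ideal R} (u : R) (hu : u ∈ m)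
    (hI : ∀ r, u * r ∈ I → r ∈ I) (hK : K = I ⊔ Ideal.span {u})
    (h2 : DepthGE m d (R ⧸ K)) : DepthGE m (d + 1) (R ⧸ I) := by
  subst hK
  refine DepthGE.succ hu (Submodule.factor le_sup_left) ?_ (Submodule.factor_surjective _) ?_ h2
  · rw [← LinearMap.ker_eq_bot, LinearMap.ker_eq_bot']
    intro q hq
    obtain ⟨r, rfl⟩ := Submodule.mkQ_surjective _ q
    simp only [Submodule.mkQ_apply, LinearMap.lsmul_apply, ← Submodule.Quotient.mk_smul,
      Submodule.Quotient.mk_eq_zero] at hq ⊢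
    exact hI r (by simpa using hq)
  · intro q
    obtain ⟨r, rfl⟩ := Submodule.mkQ_surjective _ q
    have hfac : Submodule.factor (le_sup_left : I ≤ I ⊔ Ideal.span {u}) (Submodule.Quotient.mk r)
        = 0 ↔ r ∈ I ⊔ Ideal.span {u} := Submodule.Quotient.mk_eq_zero _
    rw [Submodule.mkQ_apply, hfac]
    constructor
    · intro hr
      obtain ⟨i, hi, y, hy, rfl⟩ := Submodule.mem_sup.1 hr
      obtain ⟨c, rfl⟩ := Ideal.mem_span_singleton'.1 hy
      refine ⟨Submodule.Quotient.mk c, ?_⟩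
      rw [LinearMap.lsmul_apply, ← Submodule.Quotient.mk_smul, Submodule.Quotient.eq]
      have : u • c - (i + c * u) = -i := by
        simp [mul_comm]
      rw [this]
      exact neg_mem hi
    · rintro ⟨q, hq⟩
      obtain ⟨c, rfl⟩ := Submodule.mkQ_surjective _ q
      rw [Submodule.mkQ_apply, LinearMap.lsmul_apply, ← Submodule.Quotient.mk_smul,
        Submodule.Quotient.eq] at hq
      have : r = u * c - (u • c - r) := by simp
      rw [this]
      exact sub_mem (Submodule.mem_sup_right (Ideal.mul_mem_right _ _
        (Ideal.mem_span_singleton_self u))) (Submodule.mem_sup_left hq)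

end ExtVanishing

/-! ### Monomial ideals and sets of exponents -/

section MonomialIdeals

variable {σ k : Type} [Field k]

/-- The ideal generated by the monomials with exponent in `U`. When `U` is an upper set, a polynomial
lies in it if and only if its support is contained in `U`. -/
noncomputable def monIdeal (k : Type) [Field k] (U : Set (σ →₀ ℕ)) : Ideal (MvPolynomial σ k) :=
  Ideal.span ((fun s => monomial s (1 : k)) '' U)

lemma monIdeal_mono {U V : Set (σ →₀ ℕ)} (h : U ⊆ V) : monIdeal k U ≤ monIdeal k V :=
  Ideal.span_mono (Set.image_mono h)

lemma mem_monIdeal {U : Set (σ →₀ ℕ)} (hU : IsUpperSet U) {p : MvPolynomial σ k} :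
    p ∈ monIdeal k U ↔ ∀ w, coeff w p ≠ 0 → w ∈ U := by
  rw [monIdeal, mem_ideal_span_monomial_image]
  simp only [mem_support_iff]
  exact ⟨fun h w hw => by obtain ⟨s, hs, hsw⟩ := h w hw; exact hU hsw hs,
    fun h w hw => ⟨w, h w hw, le_rfl⟩⟩

lemma monomial_mem_monIdeal {U : Set (σ →₀ ℕ)} {w : σ →₀ ℕ} (hw : w ∈ U) :
    monomial w (1 : k) ∈ monIdeal k U :=
  Ideal.subset_span ⟨w, hw, rfl⟩

lemma isUpperSet_colon {U : Set (σ →₀ ℕ)} (hU : IsUpperSet U) (u : σ →₀ ℕ) :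
    IsUpperSet {w | u + w ∈ U} := fun _ _ hab ha => hU (add_le_add_right hab u) ha

lemma mem_monIdeal_colon {U : Set (σ →₀ ℕ)} (hU : IsUpperSet U) (u : σ →₀ ℕ)
    (r : MvPolynomial σ k) :
    r ∈ monIdeal k {w | u + w ∈ U} ↔ monomial u 1 * r ∈ monIdeal k U := by
  classical
  rw [mem_monIdeal hU, mem_monIdeal (isUpperSet_colon hU u)]
  constructor
  · intro h w hw
    rw [coeff_monomial_mul'] at hw
    split_ifs at hw with hle
    · have := h (w - u) (by simpa using hw)
      rwa [Set.mem_ofPred_eq, add_tsub_cancel_of_le hle] at this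
    · exact absurd rfl hw
  · intro h w hw
    refine h (u + w) ?_
    rwa [coeff_monomial_mul, one_mul]

lemma monIdeal_union_Ici (U : Set (σ →₀ ℕ)) (u : σ →₀ ℕ) :
    monIdeal k (U ∪ Set.Ici u) = monIdeal k U ⊔ Ideal.span {monomial u 1} := by
  apply le_antisymm
  · rw [monIdeal, Ideal.span_le]
    rintro _ ⟨w, hw | hw, rfl⟩
    · exact Submodule.mem_sup_left (monomial_mem_monIdeal hw)
    · refine Submodule.mem_sup_right (Ideal.mem_span_singleton'.2 ⟨monomial (w - u) 1, ?_⟩)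
      have hw' : u ≤ w := hw
      simp [monomial_mul, tsub_add_cancel_of_le hw']
  · refine sup_le (monIdeal_mono Set.subset_union_left) ?_
    rw [Ideal.span_singleton_le_iff_mem]
    exact monomial_mem_monIdeal (Or.inr (Set.self_mem_Ici))

/-- Exponents involving some coordinate outside `S`; the quotient by the corresponding ideal is the
polynomial ring in the variables from `S`. -/
def offSet (S : Finset σ) : Set (σ →₀ ℕ) := {w | ∃ i ∉ S, w i ≠ 0}

lemma isUpperSet_offSet (S : Finset σ) : IsUpperSet (offSet S) := by
  rintro v w hvw ⟨i, hi, h⟩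
  exact ⟨i, hi, by have := hvw i; omega⟩

lemma depthGE_offSet (S : Finset σ) :
    DepthGE (maxHomIdeal k σ) S.card (MvPolynomial σ k ⧸ monIdeal k (offSet S)) := by
  classical
  induction S using Finset.induction_on with
  | empty => intro i hi; simp at hi
  | insert a S ha ih =>
    rw [Finset.card_insert_of_notMem ha]
    refine DepthGE.succ_of_regular (X a) (Ideal.subset_span ⟨a, rfl⟩) ?_ ?_ ih
    · intro r hr
      change monomial (Finsupp.single a 1) 1 * r ∈ _ at hr
      rw [← mem_monIdeal_colon (isUpperSet_offSet _)] at hr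
      refine monIdeal_mono ?_ hr
      rintro w ⟨i, hi, h⟩
      refine ⟨i, hi, ?_⟩
      have : a ≠ i := fun e => hi (e ▸ Finset.mem_insert_self a S)
      simpa [Finsupp.single_apply, this] using h
    · change _ = _ ⊔ Ideal.span {monomial (Finsupp.single a 1) 1}
      rw [← monIdeal_union_Ici]
      congr 1
      ext w
      simp only [offSet, Set.mem_union, Set.mem_ofPred_eq, Set.mem_Ici, Finsupp.single_le_iff,
        Finset.mem_insert, not_or]
      constructor
      · rintro ⟨i, hi, h⟩
        by_cases hia : i = a
        · subst hia; right; omega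
        · exact Or.inl ⟨i, ⟨hia, hi⟩, h⟩
      · rintro (⟨i, hi, h⟩ | h)
        · exact ⟨i, hi.2, h⟩
        · exact ⟨a, ha, by omega⟩

/-- A Stanley-type filtration criterion. Suppose the monomials outside the monomial ideal of `U`
are labelled, monotonically, by finitely many elements of a poset, in such a way that each fibre
is a translated coordinate orthant `u + ℕ^S` with `d ≤ |S|`. Adding the fibres to `U`, starting from
the maximal labels, filters the quotient by polynomial rings in at least `d` variables, so that its
depth is at least `d`. -/
lemma depthGE_of_label {Λ : Type} [PartialOrder Λ] (d : ℕ) (π : (σ →₀ ℕ) → Λ)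
    (U : Set (σ →₀ ℕ)) (hU : IsUpperSet U) (hfin : (π '' Uᶜ).Finite)
    (hmono : ∀ v w, v ≤ w → w ∉ U → π v ≤ π w)
    (hfib : ∀ v ∉ U, ∃ (u : σ →₀ ℕ) (S : Finset σ), d ≤ S.card ∧
      ∀ w, (w ∉ U ∧ π w = π v) ↔ (u ≤ w ∧ ∀ i ∉ S, w i = u i)) :
    DepthGE (maxHomIdeal k σ) d (MvPolynomial σ k ⧸ monIdeal k U) := by
  classical
  generalize hn : (π '' Uᶜ).ncard = n
  induction n using Nat.strong_induction_on generalizing U with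
  | _ n ih =>
    by_cases hne : (π '' Uᶜ).Nonempty
    swap
    · have hUu : ∀ w, w ∈ U := by
        intro w
        by_contra hw
        exact hne ⟨_, w, hw, rfl⟩
      have htop : monIdeal k U = ⊤ := (Ideal.eq_top_iff_one _).2 (monomial_mem_monIdeal (hUu 0))
      have : Subsingleton (MvPolynomial σ k ⧸ monIdeal k U) :=
        Ideal.Quotient.subsingleton_iff.2 htop
      exact DepthGE.of_subsingleton _ _ _
    obtain ⟨_, hmax⟩ := hfin.exists_maximal hne
    obtain ⟨⟨v, hv, rfl⟩, hmax⟩ := hmax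
    have hmax' : ∀ w ∉ U, π v ≤ π w → π w = π v := fun w hw hle =>
      le_antisymm (hmax ⟨w, hw, rfl⟩ hle) hle
    obtain ⟨u, S, hS, hu⟩ := hfib v hv
    obtain ⟨huU, huv⟩ := (hu u).2 ⟨le_rfl, fun _ _ => rfl⟩
    have habove : ∀ w, u ≤ w → w ∉ U → π w = π v := fun w huw hw =>
      hmax' w hw (huv ▸ hmono u w huw hw)
    have hcol : {w | u + w ∈ U} = offSet S := by
      ext w
      have h1 := hu (u + w)
      rw [← not_iff_not]
      constructor
      · intro h
        have h2 := h1.1 ⟨h, habove _ (le_add_of_nonneg_right zero_le) h⟩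
        rintro ⟨i, hi, h3⟩
        have := h2.2 i hi
        simp only [Finsupp.add_apply] at this
        omega
      · intro h
        refine (h1.2 ⟨le_add_of_nonneg_right zero_le, fun i hi => ?_⟩).1
        by_contra h3
        exact h ⟨i, hi, by simpa using h3⟩
    have hmem : ∀ w, w ∉ U ∪ Set.Ici u ↔ w ∉ U ∧ π w ≠ π v := by
      intro w
      simp only [Set.mem_union, Set.mem_Ici, not_or]
      refine and_congr_right fun hw => ⟨fun h1 h2 => h1 ((hu w).1 ⟨hw, h2⟩).1,
        fun h1 h2 => h1 (habove w h2 hw)⟩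
    have hsub : π '' (U ∪ Set.Ici u)ᶜ ⊆ π '' Uᶜ :=
      Set.image_mono (Set.compl_subset_compl.2 Set.subset_union_left)
    refine DepthGE.of_colon (monomial u 1) (J := monIdeal k {w | u + w ∈ U})
      (fun r => mem_monIdeal_colon hU u r) (monIdeal_union_Ici U u) ?_ ?_
    · rw [hcol]
      exact (depthGE_offSet S).mono hS
    · refine ih _ ?_ (U ∪ Set.Ici u) (hU.union (isUpperSet_Ici u)) (hfin.subset hsub) ?_ ?_ rfl
      · rw [← hn]
        refine Set.ncard_lt_ncard (LE.le.ssubset_of_mem_notMem hsub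
          (a := π v) ⟨v, hv, rfl⟩ ?_) hfin
        rintro ⟨w, hw, hwv⟩
        exact ((hmem w).1 hw).2 hwv
      · exact fun v w hvw hw => hmono v w hvw ((hmem w).1 hw).1
      · intro v' hv'
        obtain ⟨u', S', hS', hu'⟩ := hfib v' ((hmem v').1 hv').1
        refine ⟨u', S', hS', fun w => ?_⟩
        rw [← hu', hmem]
        constructor
        · rintro ⟨⟨h1, -⟩, h2⟩
          exact ⟨h1, h2⟩
        · rintro ⟨h1, h2⟩
          exact ⟨⟨h1, h2 ▸ ((hmem v').1 hv').2⟩, h2⟩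

end MonomialIdeals

/-! ### Upper bounds for the depth through annihilators -/

section UpperBound

open RingTheory.Sequence Pointwise

/-- Over a Noetherian local ring, a regular sequence on `M` yields a chain of primes of the same
length above any prime `q` killing a nonzero element of `M`. If `x` is regular on `M`, Nakayama's
lemma gives an element killed by `q` outside `x M`; its class in `M / x M` is killed by `q + (x)`,
hence a larger prime kills a nonzero element of `M / x M`. -/
lemma exists_ltSeries_of_isWeaklyRegular {A : Type*} [CommRing A] [IsNoetherianRing A]
    [IsLocalRing A] (J : Ideal A) (rs : List A) {M : Type*} [AddCommGroup M] [Module A M]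
    [Module.Finite A M] (hmem : ∀ r ∈ rs, r ∈ IsLocalRing.maximalIdeal A)
    (hreg : IsWeaklyRegular M rs) (q : PrimeSpectrum.zeroLocus (J : Set A))
    (hq : ∃ x : M, x ≠ 0 ∧ ∀ r ∈ q.1.asIdeal, r • x = 0) :
    ∃ l : LTSeries (PrimeSpectrum.zeroLocus (J : Set A)), l.length = rs.length ∧ l.head = q := by
  induction rs generalizing M q with
  | nil => exact ⟨RelSeries.singleton _ q, rfl, rfl⟩
  | cons x rs ih =>
    rw [isWeaklyRegular_cons_iff] at hreg
    obtain ⟨hx, hreg⟩ := hreg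
    let N : Submodule A M :=
      { carrier := {n | ∀ r ∈ q.1.asIdeal, r • n = 0}
        add_mem' := fun ha hb r hr => by rw [smul_add, ha r hr, hb r hr, add_zero]
        zero_mem' := fun r _ => smul_zero r
        smul_mem' := fun c n hn r hr => by rw [smul_comm, hn r hr, smul_zero] }
    have hN : N ≠ ⊥ := by
      obtain ⟨y, hy, hyq⟩ := hq
      exact (Submodule.ne_bot_iff N).2 ⟨y, hyq, hy⟩
    have hxm : x ∈ IsLocalRing.maximalIdeal A := hmem x List.mem_cons_self
    have hnle : ¬ N ≤ x • (⊤ : Submodule A M) := by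
      intro hle
      refine hN (Submodule.eq_bot_of_le_smul_of_le_jacobson_bot (Ideal.span {x}) N
        (IsNoetherian.noetherian N) ?_ ?_)
      · intro n hn
        obtain ⟨n', -, rfl⟩ := (Submodule.mem_smul_pointwise_iff_exists _ _ _).1 (hle hn)
        refine Submodule.smul_mem_smul (Ideal.mem_span_singleton_self x) fun r hr => hx ?_
        have := hn r hr
        simp only [smul_zero]
        rwa [smul_comm]
      · rw [IsLocalRing.jacobson_eq_maximalIdeal _ bot_ne_top, Ideal.span_singleton_le_iff_mem]
        exact hxm
    obtain ⟨n, hnN, hnx⟩ := SetLike.not_le_iff_exists.1 hnle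
    let y : QuotSMulTop x M := Submodule.Quotient.mk n
    have hy : y ≠ 0 := fun h => hnx ((Submodule.Quotient.mk_eq_zero _).1 h)
    obtain ⟨P, hP, hle⟩ := exists_le_isAssociatedPrime_of_isNoetherianRing A y hy
    obtain ⟨hPp, z, hz⟩ := isAssociatedPrime_iff.1 hP
    have hqP : q.1.asIdeal ≤ P := fun r hr => hle <| Submodule.mem_colon_singleton.2 <| by
      rw [Submodule.mem_bot, ← Submodule.Quotient.mk_smul, hnN r hr, Submodule.Quotient.mk_zero]
    have hxP : x ∈ P := hle <| Submodule.mem_colon_singleton.2 <| by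
      rw [Submodule.mem_bot, ← Submodule.Quotient.mk_smul, Submodule.Quotient.mk_eq_zero]
      exact Submodule.smul_mem_pointwise_smul _ _ _ trivial
    have hxq : x ∉ q.1.asIdeal := by
      intro hxq
      obtain ⟨y, hy, hyq⟩ := hq
      exact hy (hx (by simpa using hyq x hxq))
    have hlt : q.1 < ⟨P, hPp⟩ := lt_of_le_of_ne hqP fun h => hxq (by rw [h]; exact hxP)
    have hJP : (⟨P, hPp⟩ : PrimeSpectrum A) ∈ PrimeSpectrum.zeroLocus (J : Set A) :=
      fun r hr => hqP (q.2 hr)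
    have hzP : ∀ r ∈ P, r • z = 0 := by
      intro r hr
      rw [hz] at hr
      simpa [Submodule.mem_colon_singleton] using hr
    have hz0 : z ≠ 0 := by
      rintro rfl
      exact hPp.ne_top (by rw [hz]; simp)
    obtain ⟨l, hl, hlh⟩ := ih (M := QuotSMulTop x M)
      (fun r hr => hmem r (List.mem_cons_of_mem _ hr)) hreg ⟨⟨P, hPp⟩, hJP⟩ ⟨z, hz0, hzP⟩
    refine ⟨l.cons q (by rw [hlh]; exact hlt), ?_, rfl⟩
    simp [hl]

/-- A regular sequence in a prime `m` on a finite module is no longer than the dimension of `R / p`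
whenever `p` kills an element that survives localization at `m`. -/
lemma length_le_ringKrullDim_quotient {R : Type*} [CommRing R] [IsNoetherianRing R] (m : Ideal R)
    [m.IsPrime] {M : Type*} [AddCommGroup M] [Module R M] [Module.Finite R M] (rs : List R)
    (hmem : ∀ r ∈ rs, r ∈ m) (hreg : IsWeaklyRegular M rs) (p : Ideal R) (x : M)
    (hx : ∀ s ∉ m, s • x ≠ 0) (hp : ∀ r ∈ p, r • x = 0) :
    (rs.length : WithBot ℕ∞) ≤ ringKrullDim (R ⧸ p) := by
  let A := Localization.AtPrime m
  let f := LocalizedModule.mkLinearMap m.primeCompl M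
  have hA : IsNoetherianRing A := IsLocalization.isNoetherianRing m.primeCompl A inferInstance
  have hreg' := hreg.of_isLocalizedModule A m.primeCompl f
  have hfx : f x ≠ 0 := by
    intro h
    obtain ⟨s, hs⟩ := (IsLocalizedModule.eq_zero_iff m.primeCompl f).1 h
    exact hx s s.2 hs
  have hpx : ∀ r ∈ p.map (algebraMap R A), r • f x = 0 := by
    have : p.map (algebraMap R A) ≤ (⊥ : Submodule A (LocalizedModule m.primeCompl M)).colon {f x} := by
      rw [Ideal.map_le_iff_le_comap]
      intro r hr
      rw [Ideal.mem_comap, Submodule.mem_colon_singleton, Submodule.mem_bot, algebraMap_smul,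
        ← map_smul, hp r hr, map_zero]
    intro r hr
    simpa [Submodule.mem_colon_singleton] using this hr
  obtain ⟨P, hP, hle⟩ := exists_le_isAssociatedPrime_of_isNoetherianRing A (f x) hfx
  obtain ⟨hPp, z, hz⟩ := isAssociatedPrime_iff.1 hP
  have hpP : (⟨P, hPp⟩ : PrimeSpectrum A) ∈
      PrimeSpectrum.zeroLocus ((p.map (algebraMap R A) : Ideal A) : Set A) := fun r hr =>
    hle (Submodule.mem_colon_singleton.2 (by simpa using hpx r hr))
  obtain ⟨l, hl, -⟩ := exists_ltSeries_of_isWeaklyRegular (p.map (algebraMap R A))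
    (rs.map (algebraMap R A)) (M := LocalizedModule m.primeCompl M) (by
      intro r hr
      obtain ⟨a, ha, rfl⟩ := List.mem_map.1 hr
      exact (IsLocalization.AtPrime.to_map_mem_maximal_iff A m a).2 (hmem a ha)) hreg'
    ⟨_, hpP⟩ ⟨z, by rintro rfl; exact hPp.ne_top (by rw [hz]; simp), fun r hr => by
      change r ∈ P at hr
      rw [hz] at hr
      simpa [Submodule.mem_colon_singleton] using hr⟩
  rw [List.length_map] at hl
  rw [← hl, ringKrullDim_quotient]
  let g : PrimeSpectrum.zeroLocus ((p.map (algebraMap R A) : Ideal A) : Set A) →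
      PrimeSpectrum.zeroLocus (p : Set R) := fun P =>
    ⟨PrimeSpectrum.comap (algebraMap R A) P.1, fun r hr => P.2 (Ideal.mem_map_of_mem _ hr)⟩
  have hg : StrictMono g := by
    intro P Q hPQ
    refine lt_of_le_of_ne (fun r hr => hPQ.le hr) fun h => hPQ.ne ?_
    exact Subtype.ext (PrimeSpectrum.localization_comap_injective A m.primeCompl
      (congrArg Subtype.val h))
  exact (Order.LTSeries.length_le_krullDim l).trans (Order.krullDim_le_of_strictMono g hg)

variable {σ k : Type} [Field k]

lemma mem_maxHomIdeal {p : MvPolynomial σ k} : p ∈ maxHomIdeal k σ ↔ coeff 0 p = 0 := by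
  rw [maxHomIdeal, ← Set.image_univ, mem_ideal_span_X_image]
  constructor
  · intro h
    by_contra h0
    obtain ⟨i, -, hi⟩ := h 0 (mem_support_iff.2 h0)
    exact hi rfl
  · intro h m hm
    have hm0 : m ≠ 0 := by
      rintro rfl
      exact mem_support_iff.1 hm h
    obtain ⟨i, hi⟩ := Finsupp.ne_iff.1 hm0
    exact ⟨i, trivial, hi⟩

lemma isPrime_maxHomIdeal : (maxHomIdeal k σ).IsPrime := by
  have : maxHomIdeal k σ = RingHom.ker (constantCoeff (σ := σ) (R := k)) := by
    ext p
    rw [mem_maxHomIdeal, RingHom.mem_ker, constantCoeff_eq]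
  rw [this]
  exact RingHom.ker_isPrime _

lemma ringKrullDim_offSet (S : Finset σ) :
    ringKrullDim (MvPolynomial σ k ⧸ monIdeal k (offSet S)) ≤ (S.card : WithBot ℕ∞) := by
  let φ : MvPolynomial S k →+* MvPolynomial σ k ⧸ monIdeal k (offSet S) :=
    (Ideal.Quotient.mk _).comp (rename (Subtype.val : S → σ)).toRingHom
  have hφ : Function.Surjective φ := by
    intro q
    obtain ⟨p, rfl⟩ := Ideal.Quotient.mk_surjective q
    induction p using MvPolynomial.induction_on with
    | C a => exact ⟨C a, by simp [φ]⟩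
    | add p q hp hq =>
      obtain ⟨a, ha⟩ := hp
      obtain ⟨b, hb⟩ := hq
      exact ⟨a + b, by rw [map_add, map_add, ha, hb]⟩
    | mul_X p i hp =>
      obtain ⟨a, ha⟩ := hp
      by_cases hi : i ∈ S
      · exact ⟨a * X ⟨i, hi⟩, by rw [map_mul, map_mul, ha]; simp [φ]⟩
      · refine ⟨0, ?_⟩
        rw [map_zero, eq_comm, Ideal.Quotient.eq_zero_iff_mem]
        refine Ideal.mul_mem_left _ _ (monomial_mem_monIdeal ⟨i, hi, ?_⟩)
        simp
  refine (ringKrullDim_le_of_surjective φ hφ).trans ?_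
  rw [MvPolynomial.ringKrullDim_of_isNoetherianRing, ringKrullDim_eq_zero_of_field, zero_add]
  simp

/-- If the colon ideal of a monomial outside the ideal of `U` is generated by the variables
outside `S`, then the depth of the quotient is at most `|S|`. -/
lemma length_le_of_colon [Finite σ] {U : Set (σ →₀ ℕ)} (hU : IsUpperSet U) {u : σ →₀ ℕ} (hu : u ∉ U)
    (S : Finset σ) (hS : {w | u + w ∈ U} = offSet S) (rs : List (MvPolynomial σ k))
    (hmem : ∀ r ∈ rs, r ∈ maxHomIdeal k σ)
    (hreg : IsWeaklyRegular (MvPolynomial σ k ⧸ monIdeal k U) rs) : rs.length ≤ S.card := by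
  have := isPrime_maxHomIdeal (σ := σ) (k := k)
  have h := length_le_ringKrullDim_quotient (maxHomIdeal k σ) rs hmem hreg
    (monIdeal k (offSet S)) (Submodule.Quotient.mk (monomial u 1)) ?_ ?_
  · exact_mod_cast h.trans (ringKrullDim_offSet S)
  · intro s hs h
    rw [← Submodule.Quotient.mk_smul, Submodule.Quotient.mk_eq_zero, smul_eq_mul,
      mem_monIdeal hU] at h
    refine hu (h u ?_)
    rw [mem_maxHomIdeal] at hs
    have := coeff_mul_monomial (0 : σ →₀ ℕ) u (1 : k) s
    rw [zero_add] at this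
    rwa [this, mul_one]
  · intro r hr
    rw [← Submodule.Quotient.mk_smul, Submodule.Quotient.mk_eq_zero, smul_eq_mul, mul_comm,
      ← mem_monIdeal_colon hU, hS]
    exact hr

end UpperBound

/-! ### The depth of a monomial quotient -/

section Depth

open RingTheory.Sequence Pointwise

variable {σ k : Type} [Field k]

lemma exists_isRegular_of_depthGE [Finite σ] {U : Set (σ →₀ ℕ)} (hU : IsUpperSet U) (hne : U ≠ Set.univ)
    {d : ℕ} (h : DepthGE (maxHomIdeal k σ) d (MvPolynomial σ k ⧸ monIdeal k U)) :
    ∃ rs : List (MvPolynomial σ k), rs.length = d ∧ (∀ r ∈ rs, r ∈ maxHomIdeal k σ) ∧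
      IsRegular (MvPolynomial σ k ⧸ monIdeal k U) rs := by
  have h0 : (0 : σ →₀ ℕ) ∉ U := fun h => hne (Set.eq_univ_of_forall fun w => hU (zero_le) h)
  refine ModuleCat.exists_isRegular_of_exists_subsingleton_ext (maxHomIdeal k σ) d
    (ModuleCat.of _ (MvPolynomial σ k ⧸ monIdeal k U)) ?_
    (ModuleCat.of _ (MvPolynomial σ k ⧸ maxHomIdeal k σ)) ?_ h
  · refine lt_top_iff_ne_top.2 fun htop => ?_
    have hle : monIdeal k U ≤ maxHomIdeal k σ := by
      intro p hp
      rw [mem_maxHomIdeal]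
      by_contra hp0
      exact h0 ((mem_monIdeal hU).1 hp 0 hp0)
    have hz : maxHomIdeal k σ • (⊤ : Submodule (MvPolynomial σ k) (MvPolynomial σ k ⧸ monIdeal k U))
        ≤ LinearMap.ker (Submodule.factor hle) := by
      rw [Submodule.smul_le]
      intro r hr n _
      obtain ⟨n, rfl⟩ := Submodule.mkQ_surjective _ n
      rw [LinearMap.mem_ker, map_smul]
      exact (Submodule.Quotient.mk_eq_zero (maxHomIdeal k σ)).2 (Ideal.mul_mem_right n _ hr)
    have h1 : Submodule.factor hle (Submodule.Quotient.mk 1) = 0 :=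
      hz (by
        change Submodule.Quotient.mk 1 ∈ maxHomIdeal k σ • (⊤ : Submodule (MvPolynomial σ k)
          (MvPolynomial σ k ⧸ monIdeal k U)) at *
        rw [htop]
        trivial)
    have h2 : (1 : MvPolynomial σ k) ∈ maxHomIdeal k σ :=
      (Submodule.Quotient.mk_eq_zero (maxHomIdeal k σ)).1 h1
    rw [mem_maxHomIdeal] at h2
    simp at h2
  · change Module.support _ (MvPolynomial σ k ⧸ maxHomIdeal k σ) = _
    rw [Module.support_eq_zeroLocus, Ideal.annihilator_quotient]

lemma idealDepth_monIdeal [Finite σ] {U : Set (σ →₀ ℕ)} (hU : IsUpperSet U) {u : σ →₀ ℕ} (hu : u ∉ U)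
    (S : Finset σ) (hS : {w | u + w ∈ U} = offSet S)
    (h : DepthGE (maxHomIdeal k σ) S.card (MvPolynomial σ k ⧸ monIdeal k U)) :
    idealDepth (maxHomIdeal k σ) (MvPolynomial σ k ⧸ monIdeal k U) = S.card := by
  refine IsGreatest.csSup_eq ⟨?_, ?_⟩
  · exact exists_isRegular_of_depthGE hU (fun h => hu (h ▸ trivial)) h
  · rintro n ⟨rs, rfl, hmem, hreg⟩
    exact length_le_of_colon hU hu S hS rs hmem hreg.toIsWeaklyRegular

lemma monIdeal_mul (U V : Set (σ →₀ ℕ)) :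
    monIdeal k U * monIdeal k V = monIdeal k {w | ∃ u ∈ U, ∃ v ∈ V, u + v = w} := by
  rw [monIdeal, monIdeal, Ideal.span_mul_span', monIdeal]
  congr 1
  ext p
  constructor
  · rintro ⟨_, ⟨u, hu, rfl⟩, _, ⟨v, hv, rfl⟩, rfl⟩
    exact ⟨u + v, ⟨u, hu, v, hv, rfl⟩, by simp [monomial_mul]⟩
  · rintro ⟨_, ⟨u, hu, v, hv, rfl⟩, rfl⟩
    exact ⟨_, ⟨u, hu, rfl⟩, _, ⟨v, hv, rfl⟩, by simp [monomial_mul]⟩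

end Depth

/-! ### The Veronese-type condition on the coefficient variables -/

section Veronese

variable {s : ℕ}

/-- The exponents of the `e`-th power of the ideal of all squarefree monomials of degree `s - 1` in
`s` variables: the total deficit with respect to `(e, …, e)` is at most `e`. The truncated
subtraction is the positive part. -/
def InPow (e : ℕ) (z : Fin s → ℕ) : Prop := ∑ l, (e - z l) ≤ e

lemma InPow.mono {e : ℕ} {z z' : Fin s → ℕ} (h : z ≤ z') (hz : InPow e z) : InPow e z' :=
  (Finset.sum_le_sum fun l _ => by have : z l ≤ z' l := h l; omega).trans hz

lemma InPow.anti {e e' : ℕ} {z : Fin s → ℕ} (h : e' ≤ e) (hz : InPow e z) : InPow e' z := by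
  unfold InPow at *
  by_cases h0 : ∃ l, z l < e'
  · obtain ⟨l, hl⟩ := h0
    have h1 : ∑ q, (e' - z q) + (e - e') ≤ ∑ q, (e - z q) := by
      rw [← Finset.add_sum_erase _ _ (Finset.mem_univ l),
        ← Finset.add_sum_erase _ (fun q => e - z q) (Finset.mem_univ l)]
      have : ∑ q ∈ Finset.univ.erase l, (e' - z q) ≤ ∑ q ∈ Finset.univ.erase l, (e - z q) :=
        Finset.sum_le_sum fun q _ => by omega
      omega
    omega
  · push Not at h0
    rw [Finset.sum_eq_zero fun l _ => Nat.sub_eq_zero_of_le (h0 l)]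
    omega

lemma InPow.add {e e' : ℕ} {z z' : Fin s → ℕ} (hz : InPow e z) (hz' : InPow e' z') :
    InPow (e + e') (z + z') := by
  unfold InPow at *
  have : ∑ l, (e + e' - (z + z') l) ≤ ∑ l, (e - z l) + ∑ l, (e' - z' l) := by
    rw [← Finset.sum_add_distrib]
    exact Finset.sum_le_sum fun l _ => by simp only [Pi.add_apply]; omega
  omega

lemma inPow_zero (z : Fin s → ℕ) : InPow 0 z := by simp [InPow]

lemma exists_le_sum_eq (c : Fin s → ℕ) (t : ℕ) (ht : t ≤ ∑ l, c l) :
    ∃ c' ≤ c, ∑ l, c' l = t := by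
  classical
  induction t with
  | zero => exact ⟨0, fun l => Nat.zero_le _, by simp⟩
  | succ t ih =>
    obtain ⟨c', hle, hsum⟩ := ih (by omega)
    obtain ⟨l, -, hl⟩ := Finset.exists_lt_of_sum_lt (s := Finset.univ) (f := c') (g := c) (by omega)
    refine ⟨Function.update c' l (c' l + 1), ?_, ?_⟩
    · intro q
      by_cases hq : q = l
      · subst hq; simpa using hl
      · simpa [hq] using hle q
    · rw [Finset.sum_update_of_mem (Finset.mem_univ l), ← hsum,
        ← Finset.add_sum_erase _ c' (Finset.mem_univ l), Finset.sdiff_singleton_eq_erase]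
      omega

/-- The deficit of an exponent in the `(e + e')`-th power can be shared between an exponent in the
`e`-th and one in the `e'`-th power. -/
lemma InPow.split {e e' : ℕ} {z : Fin s → ℕ} (hz : InPow (e + e') z) :
    ∃ z₁ z₂, z₁ + z₂ = z ∧ InPow e z₁ ∧ InPow e' z₂ := by
  unfold InPow at *
  obtain ⟨c, hc, hsum⟩ := exists_le_sum_eq (fun l => e + e' - z l)
    (min e (∑ l, (e + e' - z l))) (min_le_right _ _)
  have hadd : ∑ l, c l + ∑ l, (e + e' - z l - c l) = ∑ l, (e + e' - z l) := by
    rw [← Finset.sum_add_distrib]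
    exact Finset.sum_congr rfl fun l _ => by have := hc l; dsimp only at this; omega
  have h1 : ∑ l, c l ≤ e := by omega
  have h2 : ∑ l, (e + e' - z l - c l) ≤ e' := by omega
  have h1' : ∀ l, c l ≤ e := fun l => (Finset.single_le_sum (f := c)
    (fun _ _ => Nat.zero_le _) (Finset.mem_univ l)).trans h1
  have h2' : ∀ l, e + e' - z l - c l ≤ e' := fun l =>
    (Finset.single_le_sum (f := fun l => e + e' - z l - c l)
      (fun _ _ => Nat.zero_le _) (Finset.mem_univ l)).trans h2
  refine ⟨fun l => e - c l, fun l => z l - (e - c l), ?_, ?_, ?_⟩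
  · funext l
    have := h1' l
    have := h2' l
    simp only [Pi.add_apply]
    omega
  · refine (Finset.sum_le_sum fun l _ => ?_).trans h1
    dsimp only
    omega
  · refine (Finset.sum_le_sum fun l _ => ?_).trans h2
    have := h1' l
    have := h2' l
    have := hc l
    dsimp only at this ⊢
    omega

/-- The deficit with respect to `(e, …, e)` accumulated strictly before `l` does not exceed `e`. -/
def Active (e : ℕ) (z : Fin s → ℕ) (l : ℕ) : Prop := ∑ q with q.val < l, (e - z q) ≤ e

lemma active_iff_inPow {e : ℕ} {z : Fin s → ℕ} : Active e z s ↔ InPow e z := by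
  rw [Active, InPow, Finset.filter_true_of_mem fun q _ => q.2]

lemma Active.anti {e : ℕ} {z : Fin s → ℕ} {l l' : ℕ} (h : l' ≤ l) (hz : Active e z l) :
    Active e z l' := by
  refine le_trans (Finset.sum_le_sum_of_subset fun q hq => ?_) hz
  simp only [Finset.mem_filter, Finset.mem_univ, true_and] at hq ⊢
  omega

lemma Active.mono {e : ℕ} {z z' : Fin s → ℕ} {l : ℕ} (h : z ≤ z') (hz : Active e z l) :
    Active e z' l :=
  (Finset.sum_le_sum fun q _ => by have : z q ≤ z' q := h q; omega).trans hz

open Classical in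
/-- The label of an exponent `z`: at the places up to the first one where the accumulated deficit
exceeds `e`, it records `min (z l) e`, shifted by one; at the later places it vanishes. -/
noncomputable def zLabel (e : ℕ) (z : Fin s → ℕ) : Fin s → ℕ :=
  fun l => if Active e z l then min (z l) e + 1 else 0

open Classical in
/-- The root of the fibre of `zLabel e` through `z`. -/
noncomputable def zRoot (e : ℕ) (z : Fin s → ℕ) : Fin s → ℕ :=
  fun l => if Active e z l then min (z l) e else 0

open Classical in
/-- The places at which the exponent is constant along the fibre of `zLabel e` through `z`. -/
noncomputable def zFix (e : ℕ) (z : Fin s → ℕ) : Finset (Fin s) :=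
  Finset.univ.filter fun l => Active e z l ∧ z l < e

lemma mem_zFix {e : ℕ} {z : Fin s → ℕ} {l : Fin s} : l ∈ zFix e z ↔ Active e z l ∧ z l < e := by
  simp [zFix]

lemma zLabel_le (e : ℕ) (z : Fin s → ℕ) (l : Fin s) : zLabel e z l ≤ e + 1 := by
  unfold zLabel
  split_ifs
  · exact Nat.succ_le_succ (min_le_right _ _)
  · exact Nat.zero_le _

lemma zLabel_mono (e : ℕ) {z z' : Fin s → ℕ} (h : z ≤ z') : zLabel e z ≤ zLabel e z' := by
  intro l
  unfold zLabel
  by_cases hz : Active e z l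
  · have : z l ≤ z' l := h l
    rw [if_pos hz, if_pos (hz.mono h)]
    exact Nat.succ_le_succ (min_le_min_right e this)
  · rw [if_neg hz]
    exact Nat.zero_le _

/-- Every fixed place before the last one contributes to the accumulated deficit there. -/
lemma card_zFix_le (e : ℕ) (z : Fin s → ℕ) : (zFix e z).card ≤ e + 1 := by
  by_cases hne : (zFix e z).Nonempty
  · set l := (zFix e z).max' hne with hl
    have hlm : l ∈ zFix e z := Finset.max'_mem _ _
    have h1 : ((zFix e z).erase l).card ≤ ∑ q with q.val < l.val, (e - z q) := by
      rw [Finset.card_eq_sum_ones]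
      calc ∑ q ∈ (zFix e z).erase l, 1 ≤ ∑ q ∈ (zFix e z).erase l, (e - z q) := by
            refine Finset.sum_le_sum fun q hq => ?_
            have := (mem_zFix.1 (Finset.mem_of_mem_erase hq)).2
            omega
        _ ≤ _ := by
            refine Finset.sum_le_sum_of_subset fun q hq => ?_
            have h2 := Finset.lt_max'_of_mem_erase_max' _ hne hq
            simpa using h2
    have h2 := (mem_zFix.1 hlm).1
    unfold Active at h2
    have h3 := Finset.card_erase_add_one hlm
    omega
  · rw [Finset.not_nonempty_iff_eq_empty] at hne
    simp [hne]

lemma active_iff_of_root {e : ℕ} {v w : Fin s → ℕ} (h1 : zRoot e v ≤ w)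
    (h2 : ∀ l ∈ zFix e v, w l = zRoot e v l) (l : ℕ) : Active e w l ↔ Active e v l := by
  induction l using Nat.strong_induction_on with
  | _ l ih =>
    by_cases h : ∀ q : Fin s, q.val < l → Active e v q
    · unfold Active
      have : ∑ q with q.val < l, (e - w q) = ∑ q with q.val < l, (e - v q) := by
        refine Finset.sum_congr rfl fun q hq => ?_
        have hq' := h q (by simpa using hq)
        have h3 : _ ≤ w q := h1 q
        have h4 := h2 q
        simp only [zRoot, mem_zFix, hq', true_and, if_true] at h3 h4
        by_cases hv : v q < e
        · have := h4 hv
          omega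
        · omega
      rw [this]
    · push Not at h
      obtain ⟨q, hq, hqv⟩ := h
      exact ⟨fun hw => absurd ((ih q hq).1 (hw.anti hq.le)) hqv, fun hv => absurd (hv.anti hq.le) hqv⟩

lemma zLabel_eq_iff {e : ℕ} {v w : Fin s → ℕ} :
    zLabel e w = zLabel e v ↔ zRoot e v ≤ w ∧ ∀ l ∈ zFix e v, w l = zRoot e v l := by
  constructor
  · intro h
    have key : ∀ l : Fin s, Active e v l → min (w l) e = min (v l) e := by
      intro l hl
      have := congrFun h l
      simp only [zLabel, if_pos hl] at this
      split_ifs at this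
      omega
    constructor
    · intro l
      unfold zRoot
      split_ifs with hl
      · exact (key l hl) ▸ min_le_left _ _
      · exact Nat.zero_le _
    · intro l hl
      obtain ⟨hl, hlt⟩ := mem_zFix.1 hl
      have := key l hl
      rw [zRoot, if_pos hl]
      omega
  · rintro ⟨h1, h2⟩
    funext l
    have hact := active_iff_of_root h1 h2 l
    unfold zLabel
    by_cases hl : Active e v l
    · rw [if_pos hl, if_pos (hact.2 hl)]
      have h3 : _ ≤ w l := h1 l
      have h4 := h2 l
      simp only [zRoot, mem_zFix, hl, true_and, if_true] at h3 h4
      by_cases hv : v l < e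
      · have := h4 hv
        omega
      · omega
    · rw [if_neg hl, if_neg (fun h => hl (hact.1 h))]

lemma inPow_congr {e : ℕ} {v w : Fin s → ℕ} (h : zLabel e w = zLabel e v) :
    InPow e w ↔ InPow e v := by
  obtain ⟨h1, h2⟩ := zLabel_eq_iff.1 h
  rw [← active_iff_inPow, ← active_iff_inPow]
  exact active_iff_of_root h1 h2 s

end Veronese

/-! ### The exponents of the powers of the ideal -/

section Exponents

variable {s : ℕ} (K N : ℕ) (g : ℕ → ℕ)

/-- The number `e` such that the fibre of `Qⁿ` over `x^a y^i w^j` with `a + i + j` minimal is the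
`e`-th power of the Veronese-type ideal. -/
def cost (n i j : ℕ) : ℕ := K * j + if i ≤ n then 0 else g (i - 1)

/-- The exponents of monomials in the `n`-th power of the constructed ideal (for `n ≥ 1`); here `a`,
`i`, `j` are the exponents of the three special variables, and `z` those of the coefficient
variables. The special variables have total degree at least `n (4 N + 4)`; in degree exactly
`n (4 N + 4)`, the monomials with `i + j > 2 N + 1` or `j > N` carry no condition on `z`, those with
`j ≤ n` carry the condition given by `cost`, and the remaining ones are absent. -/
def MemPow (n a i j : ℕ) (z : Fin s → ℕ) : Prop :=
  n * (4 * N + 4) < a + i + j ∨ (a + i + j = n * (4 * N + 4) ∧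
    (2 * N + 1 < i + j ∨ N < j ∨ (j ≤ n ∧ InPow (cost K g n i j) z)))

variable {K N g}

lemma MemPow.mono {n a i j a' i' j' : ℕ} {z z' : Fin s → ℕ} (ha : a ≤ a') (hi : i ≤ i')
    (hj : j ≤ j') (hz : z ≤ z') (h : MemPow K N g n a i j z) : MemPow K N g n a' i' j' z' := by
  unfold MemPow at *
  by_cases hD : n * (4 * N + 4) < a' + i' + j'
  · exact Or.inl hD
  · obtain rfl : a' = a := by omega
    obtain rfl : i' = i := by omega
    obtain rfl : j' = j := by omega
    rcases h with h | ⟨h0, h⟩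
    · exact Or.inl h
    · exact Or.inr ⟨h0, h.imp_right fun h => h.imp_right fun h => ⟨h.1, h.2.mono hz⟩⟩

lemma cost_add_le (hg : ∀ m n, m ≤ n → g n ≤ g m) (n i j i' j' : ℕ) :
    cost K g (n + 1) (i + i') (j + j') ≤ cost K g n i j + cost K g 1 i' j' := by
  have h1 : g (i + i' - 1) ≤ g (i - 1) := hg _ _ (by omega)
  have h2 : g (i + i' - 1) ≤ g (i' - 1) := hg _ _ (by omega)
  unfold cost
  rw [mul_add]
  split_ifs <;> omega

lemma MemPow.add (hg : ∀ m n, m ≤ n → g n ≤ g m) {n a i j a' i' j' : ℕ} {z z' : Fin s → ℕ}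
    (h : MemPow K N g n a i j z) (h' : MemPow K N g 1 a' i' j' z') :
    MemPow K N g (n + 1) (a + a') (i + i') (j + j') (z + z') := by
  unfold MemPow at *
  rw [add_mul]
  rw [one_mul] at h' ⊢
  generalize n * (4 * N + 4) = P at *
  rcases h with h | ⟨h0, h⟩
  · left; omega
  rcases h' with h' | ⟨h0', h'⟩
  · left; omega
  right
  refine ⟨by omega, ?_⟩
  rcases h with h | h | ⟨h1, h2⟩
  · left; omega
  · right; left; omega
  rcases h' with h' | h' | ⟨h1', h2'⟩
  · left; omega
  · right; left; omega
  · right; right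
    exact ⟨by omega, (h2.add h2').anti (cost_add_le hg n i j i' j')⟩

lemma memPow_one_top (z : Fin s → ℕ) : MemPow K N g 1 (4 * N + 4) 0 0 z :=
  Or.inr ⟨by omega, Or.inr (Or.inr ⟨by omega, (inPow_zero z).anti (by simp [cost])⟩)⟩

/-- Every exponent of the `(n + 1)`-st power splits off one of the first power. When the degree is
minimal and there is a condition on `z`, one of the exponents `(⋆, 0, 0)`, `(⋆, 1, 0)`, `(⋆, 0, 1)`,
`(⋆, 1, 1)` is split off, in such a way that the costs add up exactly. -/
lemma MemPow.split {n : ℕ} (hn : 1 ≤ n) {a i j : ℕ} {z : Fin s → ℕ}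
    (h : MemPow K N g (n + 1) a i j z) : ∃ a₁ i₁ j₁ z₁ a₂ i₂ j₂ z₂,
      a₁ + a₂ = a ∧ i₁ + i₂ = i ∧ j₁ + j₂ = j ∧ z₁ + z₂ = z ∧
      MemPow K N g n a₁ i₁ j₁ z₁ ∧ MemPow K N g 1 a₂ i₂ j₂ z₂ := by
  have hPn : 4 * N + 4 ≤ n * (4 * N + 4) := Nat.le_mul_of_pos_left _ hn
  -- the exponents for which the coefficient variables may be moved to one of the factors
  have free : ∀ t₂, t₂ ≤ i + j → ∃ i₁ j₁ i₂ j₂, i₁ + i₂ = i ∧ j₁ + j₂ = j ∧ i₂ + j₂ = t₂ := by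
    intro t₂ ht
    exact ⟨i - min i t₂, j - (t₂ - min i t₂), min i t₂, t₂ - min i t₂, by omega, by omega, by omega⟩
  unfold MemPow at h
  rw [add_mul, one_mul] at h
  rcases h with h | ⟨h0, h⟩
  · by_cases ha : 4 * N + 4 ≤ a
    · refine ⟨a - (4 * N + 4), i, j, z, 4 * N + 4, 0, 0, 0, by omega, rfl, rfl, add_zero z,
        Or.inl (by omega), memPow_one_top 0⟩
    · obtain ⟨i₁, j₁, i₂, j₂, rfl, rfl, ht⟩ := free (4 * N + 4) (by omega)
      exact ⟨a, i₁, j₁, z, 0, i₂, j₂, 0, rfl, rfl, rfl, add_zero z, Or.inl (by omega),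
        Or.inr ⟨by omega, Or.inl (by omega)⟩⟩
  by_cases ht : 2 * N + 1 < i + j
  · by_cases ha : 4 * N + 4 ≤ a
    · refine ⟨a - (4 * N + 4), i, j, z, 4 * N + 4, 0, 0, 0, by omega, rfl, rfl, add_zero z,
        Or.inr ⟨by omega, Or.inl ht⟩, memPow_one_top 0⟩
    · by_cases hb : 4 * N + 4 ≤ i + j - (2 * N + 2)
      · obtain ⟨i₁, j₁, i₂, j₂, rfl, rfl, ht⟩ := free (4 * N + 4) (by omega)
        exact ⟨a, i₁, j₁, z, 0, i₂, j₂, 0, rfl, rfl, rfl, add_zero z,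
          Or.inr ⟨by omega, Or.inl (by omega)⟩, Or.inr ⟨by omega, Or.inl (by omega)⟩⟩
      · obtain ⟨i₁, j₁, i₂, j₂, rfl, rfl, ht⟩ := free (i + j - (2 * N + 2)) (by omega)
        exact ⟨a - (4 * N + 4 - (i₂ + j₂)), i₁, j₁, z, 4 * N + 4 - (i₂ + j₂), i₂, j₂, 0,
          by omega, rfl, rfl, add_zero z, Or.inr ⟨by omega, Or.inl (by omega)⟩,
          Or.inr ⟨by omega, Or.inl (by omega)⟩⟩
  by_cases hj : N < j
  · exact ⟨a - (4 * N + 4), i, j, z, 4 * N + 4, 0, 0, 0, by omega, rfl, rfl, add_zero z,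
      Or.inr ⟨by omega, Or.inr (Or.inl hj)⟩, memPow_one_top 0⟩
  obtain ⟨hjn, hz⟩ : j ≤ n + 1 ∧ InPow (cost K g (n + 1) i j) z := by
    rcases h with h | h | h
    · exact absurd h ht
    · exact absurd h hj
    · exact h
  obtain ⟨α, hα1, hα⟩ : ∃ α ≤ 1, α ≤ i ∧ (if i - α ≤ n then 0 else g (i - α - 1)) =
      if i ≤ n + 1 then 0 else g (i - 1) := by
    by_cases hi : i ≤ n + 1
    · rcases Nat.eq_zero_or_pos i with h0 | h0
      · exact ⟨0, by omega, by omega, by simp [h0]⟩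
      · refine ⟨1, le_rfl, h0, ?_⟩
        rw [if_pos (by omega), if_pos hi]
    · refine ⟨0, by omega, by omega, ?_⟩
      rw [if_neg (by omega), if_neg hi, Nat.sub_zero]
  obtain ⟨β, hβ1, hβj, hβ⟩ : ∃ β ≤ 1, β ≤ j ∧ j - β ≤ n := by
    rcases Nat.eq_zero_or_pos j with h0 | h0
    · exact ⟨0, by omega, by omega, by omega⟩
    · exact ⟨1, by omega, by omega, by omega⟩
  have hcost : cost K g (n + 1) i j = cost K g n (i - α) (j - β) + cost K g 1 α β := by
    unfold cost
    rw [hα.2, if_pos hα1, add_zero, add_right_comm, ← mul_add, Nat.sub_add_cancel hβj]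
  rw [hcost] at hz
  obtain ⟨z₁, z₂, hz12, hz1, hz2⟩ := hz.split
  exact ⟨a - (4 * N + 4 - α - β), i - α, j - β, z₁, 4 * N + 4 - α - β, α, β, z₂, by omega, by omega,
    by omega, hz12, Or.inr ⟨by omega, Or.inr (Or.inr ⟨hβ, hz1⟩)⟩,
    Or.inr ⟨by omega, Or.inr (Or.inr ⟨hβ1, hz2⟩)⟩⟩

open Classical in
/-- The cost of a position carrying a condition on `z`; the other positions outside the `n`-th power
get the value `0`, for which `zLabel` is constant. -/
noncomputable def effCost (K N : ℕ) (g : ℕ → ℕ) (n a i j : ℕ) : ℕ :=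
  if a + i + j = n * (4 * N + 4) ∧ i + j ≤ 2 * N + 1 ∧ j ≤ N ∧ j ≤ n then cost K g n i j else 0

lemma effCost_le (hg : ∀ m n, m ≤ n → g n ≤ g m) (n a i j : ℕ) :
    effCost K N g n a i j ≤ K * min n N + g n := by
  unfold effCost cost
  split_ifs with h h'
  · have : K * j ≤ K * min n N := Nat.mul_le_mul_left _ (le_min h.2.2.2 h.2.2.1)
    omega
  · have : K * j ≤ K * min n N := Nat.mul_le_mul_left _ (le_min h.2.2.2 h.2.2.1)
    have := hg n (i - 1) (by omega)
    omega
  · exact Nat.zero_le _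

lemma memPow_congr {n a i j : ℕ} {z z' : Fin s → ℕ}
    (h : zLabel (effCost K N g n a i j) z' = zLabel (effCost K N g n a i j) z) :
    MemPow K N g n a i j z' ↔ MemPow K N g n a i j z := by
  unfold MemPow
  by_cases hc : a + i + j = n * (4 * N + 4) ∧ i + j ≤ 2 * N + 1 ∧ j ≤ N ∧ j ≤ n
  · rw [effCost, if_pos hc] at h
    rw [inPow_congr h]
  · have : ∀ z : Fin s → ℕ, (n * (4 * N + 4) < a + i + j ∨ (a + i + j = n * (4 * N + 4) ∧
        (2 * N + 1 < i + j ∨ N < j ∨ (j ≤ n ∧ InPow (cost K g n i j) z)))) ↔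
        (n * (4 * N + 4) < a + i + j ∨ (a + i + j = n * (4 * N + 4) ∧
        (2 * N + 1 < i + j ∨ N < j))) := by
      intro z
      by_cases hj : j ≤ n
      · have h1 : a + i + j = n * (4 * N + 4) → 2 * N + 1 < i + j ∨ N < j := by
          intro h0
          by_contra h2
          exact hc ⟨h0, by omega, by omega, hj⟩
        tauto
      · tauto
    rw [this, this]

end Exponents

/-! ### The depth of the powers of the ideal -/

section Construction

variable {s : ℕ}

/-- The exponents of the three special variables. -/
def specPart (v : Fin (3 + s) →₀ ℕ) : Fin 3 → ℕ := fun t => v (Fin.castAdd s t)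

/-- The exponents of the `s` coefficient variables. -/
def coeffPart (v : Fin (3 + s) →₀ ℕ) : Fin s → ℕ := fun l => v (Fin.natAdd 3 l)

/-- The exponent with prescribed parts. -/
noncomputable def mkExp (x : Fin 3 → ℕ) (z : Fin s → ℕ) : Fin (3 + s) →₀ ℕ :=
  Finsupp.equivFunOnFinite.symm (Fin.append x z)

@[simp] lemma mkExp_castAdd (x : Fin 3 → ℕ) (z : Fin s → ℕ) (t : Fin 3) :
    mkExp x z (Fin.castAdd s t) = x t := by simp [mkExp]

@[simp] lemma mkExp_natAdd (x : Fin 3 → ℕ) (z : Fin s → ℕ) (l : Fin s) :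
    mkExp x z (Fin.natAdd 3 l) = z l := by simp [mkExp]

@[simp] lemma specPart_mkExp (x : Fin 3 → ℕ) (z : Fin s → ℕ) : specPart (mkExp x z) = x := by
  funext t; simp [specPart]

@[simp] lemma coeffPart_mkExp (x : Fin 3 → ℕ) (z : Fin s → ℕ) : coeffPart (mkExp x z) = z := by
  funext l; simp [coeffPart]

@[simp] lemma specPart_add (v w : Fin (3 + s) →₀ ℕ) :
    specPart (v + w) = specPart v + specPart w := rfl

@[simp] lemma coeffPart_add (v w : Fin (3 + s) →₀ ℕ) :
    coeffPart (v + w) = coeffPart v + coeffPart w := rfl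

lemma forall_fin_three_add {P : Fin (3 + s) → Prop} :
    (∀ m, P m) ↔ (∀ t, P (Fin.castAdd s t)) ∧ ∀ l, P (Fin.natAdd 3 l) :=
  ⟨fun h => ⟨fun _ => h _, fun _ => h _⟩, fun h m => Fin.addCases h.1 h.2 m⟩

lemma exp_le_iff {v w : Fin (3 + s) →₀ ℕ} :
    v ≤ w ↔ specPart v ≤ specPart w ∧ coeffPart v ≤ coeffPart w := by
  rw [Finsupp.le_def, forall_fin_three_add]
  rfl

lemma exp_ext {v w : Fin (3 + s) →₀ ℕ} (h1 : specPart v = specPart w)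
    (h2 : coeffPart v = coeffPart w) : v = w :=
  le_antisymm (exp_le_iff.2 ⟨h1.le, h2.le⟩) (exp_le_iff.2 ⟨h1.ge, h2.ge⟩)

/-- The set of exponents described by `MemPow`. -/
def powSet (s K N : ℕ) (g : ℕ → ℕ) (n : ℕ) : Set (Fin (3 + s) →₀ ℕ) :=
  {v | MemPow K N g n (specPart v 0) (specPart v 1) (specPart v 2) (coeffPart v)}

variable {K N : ℕ} {g : ℕ → ℕ}

lemma isUpperSet_powSet (n : ℕ) : IsUpperSet (powSet s K N g n) := by
  intro v w h hv
  obtain ⟨h1, h2⟩ := exp_le_iff.1 h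
  exact MemPow.mono (h1 0) (h1 1) (h1 2) h2 hv

lemma monIdeal_powSet_pow (k : Type) [Field k] (hg : ∀ m n, m ≤ n → g n ≤ g m) {n : ℕ}
    (hn : 1 ≤ n) :
    monIdeal k (powSet s K N g 1) ^ n = monIdeal k (powSet s K N g n) := by
  induction n, hn using Nat.le_induction with
  | base => rw [pow_one]
  | succ n hn ih =>
    rw [pow_succ, ih, monIdeal_mul]
    congr 1
    ext w
    constructor
    · rintro ⟨u, hu, v, hv, rfl⟩
      exact MemPow.add hg hu hv
    · intro hw
      obtain ⟨a₁, i₁, j₁, z₁, a₂, i₂, j₂, z₂, ha, hi, hj, hz, h1, h2⟩ := MemPow.split hn hw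
      refine ⟨mkExp ![a₁, i₁, j₁] z₁, ?_, mkExp ![a₂, i₂, j₂] z₂, ?_, exp_ext ?_ ?_⟩
      · simpa [powSet] using h1
      · simpa [powSet] using h2
      · funext t
        fin_cases t
        · simpa using ha
        · simpa using hi
        · simpa using hj
      · simpa using hz

/-- The lower bound for the depth. The labels are ordered lexicographically: a larger exponent with
the same special part has the same cost, so that the monotonicity of `zLabel` applies. -/
lemma depthGE_powSet (k : Type) [Field k] (hg : ∀ m n, m ≤ n → g n ≤ g m) (n : ℕ) :
    DepthGE (maxHomIdeal k (Fin (3 + s))) (s - (K * min n N + g n + 1))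
      (MvPolynomial (Fin (3 + s)) k ⧸ monIdeal k (powSet s K N g n)) := by
  classical
  let E : (Fin 3 → ℕ) → ℕ := fun x => effCost K N g n (x 0) (x 1) (x 2)
  have hE : ∀ x, E x ≤ K * min n N + g n := fun x => effCost_le hg n _ _ _
  let π : (Fin (3 + s) →₀ ℕ) → (Fin 3 → ℕ) ×ₗ (Fin s → ℕ) := fun v =>
    toLex (specPart v, zLabel (E (specPart v)) (coeffPart v))
  have hπ : ∀ v w, π w = π v ↔ specPart w = specPart v ∧
      zLabel (E (specPart v)) (coeffPart w) = zLabel (E (specPart v)) (coeffPart v) := by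
    intro v w
    change toLex _ = toLex _ ↔ _
    rw [toLex_inj, Prod.mk.injEq]
    constructor
    · rintro ⟨h1, h2⟩
      rw [h1] at h2
      exact ⟨h1, h2⟩
    · rintro ⟨h1, h2⟩
      rw [h1]
      exact ⟨rfl, h2⟩
  refine depthGE_of_label _ π _ (isUpperSet_powSet n) ?_ ?_ ?_
  · refine Set.Finite.subset (((Set.finite_Iic (fun _ : Fin 3 => n * (4 * N + 4))).prod
      (Set.finite_Iic (fun _ : Fin s => K * min n N + g n + 1))).image toLex) ?_
    rintro _ ⟨v, hv, rfl⟩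
    have hdeg : ¬ n * (4 * N + 4) < specPart v 0 + specPart v 1 + specPart v 2 :=
      fun h => hv (Or.inl h)
    refine ⟨(specPart v, zLabel (E (specPart v)) (coeffPart v)), ⟨?_, ?_⟩, rfl⟩
    · intro t
      fin_cases t
      · change specPart v 0 ≤ n * (4 * N + 4)
        omega
      · change specPart v 1 ≤ n * (4 * N + 4)
        omega
      · change specPart v 2 ≤ n * (4 * N + 4)
        omega
    · exact fun l => (zLabel_le _ _ l).trans (Nat.succ_le_succ (hE _))
  · intro v w hvw _
    obtain ⟨h1, h2⟩ := exp_le_iff.1 hvw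
    refine Prod.Lex.toLex_le_toLex.2 ?_
    rcases h1.lt_or_eq with h | h
    · exact Or.inl h
    · refine Or.inr ⟨h, ?_⟩
      change zLabel (E (specPart v)) (coeffPart v) ≤ zLabel (E (specPart w)) (coeffPart w)
      rw [h]
      exact zLabel_mono _ h2
  · intro v hv
    refine ⟨mkExp (specPart v) (zRoot (E (specPart v)) (coeffPart v)),
      ((zFix (E (specPart v)) (coeffPart v))ᶜ).image (Fin.natAdd 3), ?_, fun w => ?_⟩
    · rw [Finset.card_image_of_injective _ (Fin.natAdd_injective _ _), Finset.card_compl,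
        Fintype.card_fin]
      have := card_zFix_le (E (specPart v)) (coeffPart v)
      have := hE (specPart v)
      omega
    · have hS1 : ∀ t : Fin 3, Fin.castAdd s t ∉
          ((zFix (E (specPart v)) (coeffPart v))ᶜ).image (Fin.natAdd 3) := by
        intro t ht
        obtain ⟨l, -, hl⟩ := Finset.mem_image.1 ht
        have := congrArg Fin.val hl
        simp at this
        omega
      have hS2 : ∀ l : Fin s, Fin.natAdd 3 l ∉
          ((zFix (E (specPart v)) (coeffPart v))ᶜ).image (Fin.natAdd 3) ↔
          l ∈ zFix (E (specPart v)) (coeffPart v) := by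
        intro l
        rw [(Fin.natAdd_injective s 3).mem_finset_image, Finset.mem_compl, not_not]
      rw [hπ, zLabel_eq_iff, exp_le_iff, forall_fin_three_add]
      simp only [specPart_mkExp, coeffPart_mkExp, mkExp_castAdd, mkExp_natAdd, hS2]
      constructor
      · rintro ⟨-, h1, h2, h3⟩
        exact ⟨⟨h1.ge, h2⟩, fun t _ => congrFun h1 t, h3⟩
      · rintro ⟨⟨-, h2⟩, h1, h3⟩
        have h1' : specPart w = specPart v := funext fun t => h1 t (hS1 t)
        refine ⟨fun hw => hv ?_, h1', h2, h3⟩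
        change MemPow K N g n _ _ _ _ at hw
        rw [h1'] at hw
        exact (memPow_congr (zLabel_eq_iff.2 ⟨h2, h3⟩)).1 hw

/-- At a special part of maximal cost `e`, the monomial with `e + 1` coefficient exponents `e - 1`
and the remaining ones `e` is just outside the ideal: multiplying by one of these `e + 1` variables
or by a special variable leads into it, while the other coefficient variables have no effect. -/
lemma idealDepth_powSet (k : Type) [Field k] (hg : ∀ m n, m ≤ n → g n ≤ g m)
    (hgN : ∀ n, N ≤ n → g n = 0) {n : ℕ} (hn : 1 ≤ n) (he : 1 ≤ K * min n N + g n)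
    (hes : K * min n N + g n + 1 ≤ s) :
    idealDepth (maxHomIdeal k (Fin (3 + s)))
      (MvPolynomial (Fin (3 + s)) k ⧸ monIdeal k (powSet s K N g n)) =
      s - (K * min n N + g n + 1) := by
  classical
  have hlow := depthGE_powSet (s := s) (K := K) (N := N) k hg n
  obtain ⟨i, hij, hcost⟩ : ∃ i, i + min n N ≤ 2 * N + 1 ∧
      cost K g n i (min n N) = K * min n N + g n := by
    unfold cost
    by_cases h : n < N
    · exact ⟨n + 1, by omega, by simp⟩
    · exact ⟨0, by omega, by simp [hgN n (by omega)]⟩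
  have hP : 4 * N + 4 ≤ n * (4 * N + 4) := Nat.le_mul_of_pos_left _ hn
  generalize hedef : K * min n N + g n = e at *
  have hjn : min n N ≤ n := min_le_left _ _
  have hjN : min n N ≤ N := min_le_right _ _
  generalize min n N = j at *
  let z : Fin s → ℕ := fun l => if l.val < e + 1 then e - 1 else e
  have hcard : (Finset.univ.filter fun l : Fin s => l.val < e + 1).card = e + 1 := by
    rw [Fin.card_filter_val_lt]
    omega
  -- the deficit of `z`, computed with an arbitrary correction
  have hzsum : ∀ y : Fin s → ℕ, ∑ l, (e - (z + y) l) =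
      ∑ l with l.val < e + 1, (1 - y l) := by
    intro y
    rw [Finset.sum_filter]
    refine Finset.sum_congr rfl fun l _ => ?_
    simp only [Pi.add_apply, z]
    split_ifs <;> omega
  have hin : ∀ y : Fin s → ℕ, InPow e (z + y) ↔ ∃ l : Fin s, l.val < e + 1 ∧ y l ≠ 0 := by
    intro y
    unfold InPow
    rw [hzsum]
    constructor
    · intro h
      by_contra! hc
      rw [Finset.sum_congr rfl (g := fun _ => 1) fun l hl => by
        rw [hc l (Finset.mem_filter.1 hl).2], ← Finset.card_eq_sum_ones, hcard] at h
      omega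
    · rintro ⟨l, hl, hy⟩
      have hmem : l ∈ Finset.univ.filter fun l : Fin s => l.val < e + 1 := by simpa using hl
      have h1 : ∑ l with l.val < e + 1, (1 - y l) <
          ∑ l : Fin s with l.val < e + 1, 1 :=
        Finset.sum_lt_sum (fun _ _ => by omega) ⟨l, hmem, by omega⟩
      rw [← Finset.card_eq_sum_ones, hcard] at h1
      omega
  let u : Fin (3 + s) →₀ ℕ := mkExp ![n * (4 * N + 4) - i - j, i, j] z
  have hmem : ∀ w, u + w ∈ powSet s K N g n ↔ (∃ t, specPart w t ≠ 0) ∨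
      ∃ l : Fin s, l.val < e + 1 ∧ coeffPart w l ≠ 0 := by
    intro w
    have hu : u + w ∈ powSet s K N g n ↔ MemPow K N g n (n * (4 * N + 4) - i - j + specPart w 0)
        (i + specPart w 1) (j + specPart w 2) (z + coeffPart w) := by
      simp [powSet, u]
    rw [hu, ← hin]
    by_cases hw : ∃ t, specPart w t ≠ 0
    · refine iff_of_true (Or.inl ?_) (Or.inl hw)
      have h3 : specPart w 0 ≠ 0 ∨ specPart w 1 ≠ 0 ∨ specPart w 2 ≠ 0 := by
        simpa [Fin.exists_fin_succ] using hw
      omega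
    · have h0 : ∀ t, specPart w t = 0 := by simpa using hw
      simp only [h0, add_zero, ne_eq, not_true_eq_false, exists_false, false_or]
      unfold MemPow
      rw [hcost]
      constructor
      · rintro (h | ⟨-, h | h | h⟩)
        · omega
        · omega
        · omega
        · exact h.2
      · exact fun h => Or.inr ⟨by omega, Or.inr (Or.inr ⟨hjn, h⟩)⟩
  have hu0 : u ∉ powSet s K N g n := by
    have := hmem 0
    rw [add_zero] at this
    rw [this]
    simp [specPart, coeffPart]
  let S : Finset (Fin (3 + s)) :=
    (Finset.univ.filter fun l : Fin s => ¬ l.val < e + 1).image (Fin.natAdd 3)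
  have hScard : S.card = s - (e + 1) := by
    rw [Finset.card_image_of_injective _ (Fin.natAdd_injective _ _), ← Finset.compl_filter,
      Finset.card_compl, hcard, Fintype.card_fin]
  rw [← hScard] at hlow ⊢
  refine idealDepth_monIdeal (isUpperSet_powSet n) hu0 S ?_ hlow
  have hS1 : ∀ t : Fin 3, Fin.castAdd s t ∉ S := by
    intro t ht
    obtain ⟨l, -, hl⟩ := Finset.mem_image.1 ht
    have := congrArg Fin.val hl
    simp at this
    omega
  have hS2 : ∀ l : Fin s, Fin.natAdd 3 l ∉ S ↔ l.val < e + 1 := by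
    intro l
    rw [(Fin.natAdd_injective s 3).mem_finset_image]
    simp
  ext w
  rw [Set.mem_ofPred_eq, hmem]
  constructor
  · rintro (⟨t, ht⟩ | ⟨l, hl, hl'⟩)
    · exact ⟨_, hS1 t, ht⟩
    · exact ⟨_, (hS2 l).2 hl, hl'⟩
  · rintro ⟨m, hm, hm'⟩
    induction m using Fin.addCases with
    | left t => exact Or.inl ⟨t, hm'⟩
    | right l => exact Or.inr ⟨l, (hS2 l).1 hm, hm'⟩

end Construction

/-- **Theorem 6.7** (conjecture of Herzog–Hibi): every convergent (eventually constant)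
non-negative numerical function `f` is the depth function `n ↦ depth S/Qⁿ` of a monomial
ideal `Q` in some polynomial ring `S` over `k`. -/
theorem exists_monomialIdeal_depth_function
    {k : Type} [Field k] (f : ℕ → ℕ) (hf : ∃ N : ℕ, ∀ n ≥ N, f n = f N) :
    ∃ (s : ℕ) (Q : Ideal (MvPolynomial (Fin s) k)), IsMonomialIdeal Q ∧
      ∀ n : ℕ, 1 ≤ n →
        idealDepth (maxHomIdeal k (Fin s)) (MvPolynomial (Fin s) k ⧸ Q ^ n) = f n := by
  obtain ⟨N₀, hN₀⟩ := hf
  -- `f` is constant on `[N, ∞)`; since `N` is positive, the largest costs below are positive too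
  obtain ⟨N, hN1, hN⟩ : ∃ N, 1 ≤ N ∧ ∀ n, N ≤ n → f n = f N :=
    ⟨N₀ + 1, by omega, fun n hn => (hN₀ n (by omega)).trans (hN₀ _ (by omega)).symm⟩
  obtain ⟨K, hK1, hK⟩ : ∃ K, 1 ≤ K ∧ ∀ n, f n ≤ K := by
    refine ⟨1 + ∑ n ∈ Finset.range (N + 1), f n, by omega, fun n => ?_⟩
    have h : ∀ m ≤ N, f m ≤ ∑ n ∈ Finset.range (N + 1), f n := fun m hm =>
      Finset.single_le_sum (f := f) (fun _ _ => Nat.zero_le _) (Finset.mem_range.2 (by omega))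
    rcases le_total n N with hn | hn
    · have := h n hn
      omega
    · have := h N le_rfl
      have := hN n hn
      omega
  -- the slope `K` is steep enough to make `f n + K * min n N` monotone
  have hmono : ∀ m n, m ≤ n → f m + K * min m N ≤ f n + K * min n N := by
    intro m n hmn
    by_cases h : m < n ∧ m < N
    · have h1 : K * (min m N + 1) ≤ K * min n N := Nat.mul_le_mul_left _ (by omega)
      have h2 := hK m
      rw [mul_add, mul_one] at h1
      omega
    · by_cases hm : m < N
      · obtain rfl : m = n := by omega
        exact le_rfl
      · rw [hN m (by omega), hN n (by omega), min_eq_right (by omega : N ≤ m),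
          min_eq_right (by omega : N ≤ n)]
  let C := f N + K * N
  have hC : ∀ n, f n + K * min n N ≤ C := by
    intro n
    have h := hmono n (max n N) (le_max_left _ _)
    rwa [hN _ (le_max_right n N), min_eq_right (le_max_right n N)] at h
  let g : ℕ → ℕ := fun n => C - f n - K * min n N
  have hg : ∀ m n, m ≤ n → g n ≤ g m := by
    intro m n hmn
    have := hmono m n hmn
    simp only [g]
    omega
  have hgN : ∀ n, N ≤ n → g n = 0 := by
    intro n hn
    simp only [g, C]
    rw [hN n hn, min_eq_right hn]
    omega
  refine ⟨3 + (C + 1), monIdeal k (powSet (C + 1) K N g 1), ⟨_, rfl⟩, fun n hn => ?_⟩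
  have hKn : 1 ≤ K * min n N := Nat.mul_pos hK1 (by omega)
  have hCn := hC n
  have he : K * min n N + g n = C - f n := by
    simp only [g]
    omega
  rw [monIdeal_powSet_pow k hg hn, idealDepth_powSet k hg hgN hn (by omega) (by omega), he]
  omega
end

section
/- Let k be a field and let Γ be any finite set of positive integers. Then there exist a polynomial ring S over k with maximal homogeneous ideal m and a monomial ideal Q ⊆ S such that m is an associated prime of S/Q^n if and only if n ∈ Γ. -/
/-!
For a monomial ideal `I`, the maximal homogeneous ideal `m` is an associated prime of `S / I`
exactly when `I` has a socle monomial: a monomial outside `I` all of whose multiples by a variable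
lie in `I` (`mem_assPrimes`). The theorem therefore concerns exponent vectors only. The set of `n`
such that `m` is associated to `S / Q ^ n` is built from two ingredients.

*A basic block.* Let `d = t + 2`, let `J ⊆ k[b₀, …, b_r]` be generated by the products of `r`
distinct variables, let `A = {0, 1, d - 1, d}` and `I_A = (x ^ a * y ^ (d - a) : a ∈ A)`, and put
`Q = J * I_A + J * (b₀, …, b_r) * (x, y) ^ d + (x, y) ^ (d + 1)`.
In `(x, y)`-degree below `d * n` the ideal `Q ^ n` is zero, in degree `d * n` it is
`J ^ n * (I_A ^ n + (b₀, …, b_r) * (x, y) ^ (d * n))`, and in degree `d * n + h` with `h ≥ 1` it is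
`J ^ (n - h)` (`Up_PV`). A socle monomial can come from `x ^ i * y ^ (d * n - i)` with `i` in a gap
of the sumset `nA`, and such gaps exist exactly for `n < t`; or from a socle monomial of a power
of `J`, which requires `1 ≤ r ≤ n`. Conversely each of these conditions yields one (`Soc_PV`).
With `r = 0` the block realizes `{n | n < t}`, and with `t = m`, `r = m + 1` it realizes
`{n | n ≠ m}`.

*Gluing.* Given monomial ideals in `k[z, a]` and `k[z, b]`, sharing only the variable `z`, the
powers of the product of their extensions to `k[z, a, b]` have a socle monomial exactly when the
corresponding powers of both ideals do (`Up_glue`, `Soc_glue`). So finite intersections of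
realizable sets are realizable, and every finite set of positive integers is the intersection of
some `{n | n < M}` with finitely many sets `{n | n ≠ m}` (`Realizable.finset`).
-/

open MvPolynomial TensorProduct

/-! ### Exponent sets, their powers and socles -/

/-- The exponents of the monomials in `Q ^ n`, where `Q` is the monomial ideal generated by the
monomials with exponent in `G`: sums of `n` elements of `G` and an arbitrary exponent. -/
def Up {σ : Type} (G : (σ → ℕ) → Prop) : ℕ → (σ → ℕ) → Prop
  | 0, _ => True
  | n + 1, u => ∃ g v, G g ∧ Up G n v ∧ u = g + v

/-- `U` (thought of as the set of exponents of a monomial ideal `I`) has a socle monomial: a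
monomial outside `I` all of whose products with a variable lie in `I`. -/
def Soc {σ : Type} [DecidableEq σ] (U : (σ → ℕ) → Prop) : Prop :=
  ∃ u, ¬ U u ∧ ∀ i, U (u + Pi.single i 1)

/-! ### Powers of the squarefree Veronese ideal -/

/-- The exponents in `J ^ n`, where `J ⊆ k[b₀, …, b_r]` is generated by the products of `r`
distinct variables. With truncated subtraction `n - β k`, the condition says that `β` dominates
some `γ ≤ (n, …, n)` of degree `r * n`. -/
def F {r : ℕ} (n : ℕ) (β : Fin (r + 1) → ℕ) : Prop := ∑ k, (n - β k) ≤ n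

section F
variable {r : ℕ}

theorem F_zero (β : Fin (r + 1) → ℕ) : F 0 β := by simp [F]

theorem F_add {a b : ℕ} {β γ : Fin (r + 1) → ℕ} (h : F a β) (h' : F b γ) :
    F (a + b) (β + γ) := by
  unfold F at *
  refine le_trans (Finset.sum_le_sum (g := fun k => (a - β k) + (b - γ k)) ?_) ?_
  · intro k _; simp only [Pi.add_apply]; omega
  · rw [Finset.sum_add_distrib]; omega

theorem F_le {a b : ℕ} {β γ : Fin (r + 1) → ℕ} (h : F a β) (hab : b ≤ a) (hβ : β ≤ γ) :
    F b γ := by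
  unfold F at *
  by_cases hz : ∀ k, b ≤ γ k
  · rw [Finset.sum_eq_zero] <;> [omega; (intro k _; have := hz k; omega)]
  · push Not at hz
    obtain ⟨k, hk⟩ := hz
    have h1 : ∑ j ∈ Finset.univ.erase k, (b - γ j) ≤ ∑ j ∈ Finset.univ.erase k, (a - β j) :=
      Finset.sum_le_sum fun j _ => by have : β j ≤ γ j := hβ j; omega
    rw [← Finset.add_sum_erase _ _ (Finset.mem_univ k)] at h ⊢
    have : β k ≤ γ k := hβ k
    omega

/-- `J ^ n` is generated in degree `r * n`. -/
theorem F_deg {n : ℕ} {β : Fin (r + 1) → ℕ} (h : F n β) : r * n ≤ ∑ k, β k := by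
  unfold F at h
  have : ∑ k : Fin (r + 1), n ≤ ∑ k, ((n - β k) + β k) :=
    Finset.sum_le_sum fun k _ => by omega
  rw [Finset.sum_add_distrib] at this
  simp at this
  linarith [add_mul r 1 n]

/-- `J ^ (n + 1) ⊆ J * J ^ n`: a product of all variables but the one of least exponent can be
divided off. -/
theorem F_split {n : ℕ} {β : Fin (r + 1) → ℕ} (h : F (n + 1) β) :
    ∃ γ δ : Fin (r + 1) → ℕ, F 1 γ ∧ ∑ k, γ k = r ∧ F n δ ∧ β = γ + δ := by
  obtain ⟨k₀, hk₀⟩ := Finite.exists_min β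
  unfold F at *
  rw [← Finset.add_sum_erase _ _ (Finset.mem_univ k₀)] at h
  have hpos : ∀ k, k ≠ k₀ → 1 ≤ β k := by
    intro k hk
    by_contra h0
    have h1 := hk₀ k
    have h2 := Finset.single_le_sum (f := fun k => n + 1 - β k) (s := Finset.univ.erase k₀)
      (fun _ _ => Nat.zero_le _) (Finset.mem_erase.2 ⟨hk, Finset.mem_univ k⟩)
    omega
  refine ⟨fun k => if k = k₀ then 0 else 1, fun k => if k = k₀ then β k else β k - 1, ?_, ?_, ?_, ?_⟩
  · rw [← Finset.add_sum_erase _ _ (Finset.mem_univ k₀), Finset.sum_eq_zero]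
    · simp
    · intro k hk
      simp [(Finset.mem_erase.1 hk).1]
  · rw [← Finset.add_sum_erase _ _ (Finset.mem_univ k₀), Finset.sum_congr rfl (g := fun _ => 1)]
    · simp
    · intro k hk
      simp [(Finset.mem_erase.1 hk).1]
  · rw [← Finset.add_sum_erase _ _ (Finset.mem_univ k₀)]
    rw [Finset.sum_congr rfl (g := fun k => n + 1 - β k)]
    · simp only [if_true]
      by_cases hd : n + 1 ≤ β k₀
      · rw [Finset.sum_eq_zero]
        · omega
        · intro k _
          have := hk₀ k
          omega
      · omega
    · intro k hk
      have h1 := (Finset.mem_erase.1 hk).1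
      have := hpos k h1
      simp only [h1, if_false]
      omega
  · funext k
    by_cases hk : k = k₀
    · simp [hk]
    · have := hpos k hk
      simp only [Pi.add_apply, hk, if_false]
      omega

/-- A socle monomial of `J ^ n` forces `1 ≤ r ≤ n`: every variable has exponent below `n` and the
total deficiency is exactly `n + 1`, while there are `r + 1` variables. -/
theorem F_soc {n : ℕ} {β : Fin (r + 1) → ℕ} (h : ¬ F n β)
    (h' : ∀ k, F n (β + Pi.single k 1)) : 1 ≤ r ∧ r ≤ n := by
  unfold F at *
  have key : ∀ k, 1 ≤ n - β k ∧ ∑ j, (n - β j) ≤ n + 1 := by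
    intro k
    have h1 := h' k
    rw [← Finset.add_sum_erase _ _ (Finset.mem_univ k)] at h h1 ⊢
    rw [Finset.sum_congr rfl (g := fun j => n - β j)] at h1
    · simp only [Pi.add_apply, Pi.single_eq_same] at h1
      omega
    · intro j hj
      simp [(Finset.mem_erase.1 hj).1]
  have h1 : ∑ k : Fin (r + 1), 1 ≤ ∑ k, (n - β k) := Finset.sum_le_sum fun k _ => (key k).1
  have h2 := (key 0).2
  simp at h1
  refine ⟨?_, by omega⟩
  by_contra hr
  obtain rfl : r = 0 := by omega
  simp at h

end F

/-! ### The basic block -/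

/-- With `d = t + 2` and `A = {0, 1, d - 1, d}`, `Adm t n i` says that `i` lies in the `n`-fold
sumset `nA`, that is, `x ^ i * y ^ (d * n - i) ∈ I_A ^ n` for
`I_A = (x ^ a * y ^ (d - a) : a ∈ A)`. Here `l` counts the summands from `{d - 1, d}`. -/
def Adm (t n i : ℕ) : Prop := ∃ l ≤ n, l * (t + 1) ≤ i ∧ i ≤ l * (t + 1) + n

theorem Adm_add {t a b i i' : ℕ} (h : Adm t a i) (h' : Adm t b i') : Adm t (a + b) (i + i') := by
  obtain ⟨l, h1, h2, h3⟩ := h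
  obtain ⟨l', h1', h2', h3'⟩ := h'
  exact ⟨l + l', by omega, by rw [add_mul]; omega, by rw [add_mul]; omega⟩

theorem Adm_mul {t n q : ℕ} (h : q ≤ n) : Adm t n (q * (t + 2)) :=
  ⟨q, h, by ring_nf; omega, by ring_nf; omega⟩

theorem Adm_split {t n i : ℕ} (h : Adm t (n + 1) i) :
    ∃ i₁ i₂, i₁ ≤ t + 2 ∧ Adm t 1 i₁ ∧ i₂ ≤ (t + 2) * n ∧ Adm t n i₂ ∧ i = i₁ + i₂ := by
  obtain ⟨l, h1, h2, h3⟩ := h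
  obtain ⟨c, rfl⟩ := Nat.exists_eq_add_of_le h2
  have hc : c ≤ n + 1 := by omega
  obtain ⟨l₁, l₂, hl₁, hl₂, rfl⟩ : ∃ l₁ l₂, l₁ ≤ 1 ∧ l₂ ≤ n ∧ l = l₁ + l₂ := by
    rcases Nat.eq_zero_or_pos l with h0 | h0
    · exact ⟨0, 0, by omega, by omega, by omega⟩
    · exact ⟨1, l - 1, by omega, by omega, by omega⟩
  obtain ⟨c₁, c₂, hc₁, hc₂, rfl⟩ : ∃ l₁ l₂, l₁ ≤ 1 ∧ l₂ ≤ n ∧ c = l₁ + l₂ := by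
    rcases Nat.eq_zero_or_pos c with h0 | h0
    · exact ⟨0, 0, by omega, by omega, by omega⟩
    · exact ⟨1, c - 1, by omega, by omega, by omega⟩
  have e1 := Nat.mul_le_mul_right (t + 1) hl₁
  have e2 := Nat.mul_le_mul_right (t + 1) hl₂
  refine ⟨l₁ * (t + 1) + c₁, l₂ * (t + 1) + c₂, by omega, ⟨l₁, hl₁, by omega, by omega⟩, ?_,
    ⟨l₂, hl₂, by omega, by omega⟩, by ring⟩
  have : (t + 2) * n = n * (t + 1) + n := by ring
  omega

/-- For `n ≥ t` the sumset `nA` is the whole interval `[0, d * n]`. -/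
theorem Adm_full {t n i : ℕ} (h : t ≤ n) (hi : i ≤ (t + 2) * n) : Adm t n i := by
  have h1 := Nat.div_add_mod i (t + 1)
  have h2 := Nat.mod_lt i (show 0 < t + 1 by omega)
  rw [mul_comm] at h1
  have e : (t + 2) * n = n * (t + 1) + n := by ring
  by_cases hq : i / (t + 1) ≤ n
  · exact ⟨_, hq, by omega, by omega⟩
  · have := Nat.mul_le_mul_right (t + 1) (show n ≤ i / (t + 1) by omega)
    exact ⟨n, le_rfl, by omega, by omega⟩

/-- For `n < t` the number `n + 1` lies in a gap of `nA`. -/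
theorem not_Adm {t n : ℕ} (h : n < t) : ¬ Adm t n (n + 1) := by
  rintro ⟨l, h1, h2, h3⟩
  rcases Nat.eq_zero_or_pos l with rfl | h0
  · omega
  · have := Nat.mul_le_mul_right (t + 1) h0
    omega

/-- The monomial `x ^ i * y ^ j * b ^ β` lies in `Q ^ n`, where `d = t + 2` and
`Q = J * I_A + J * (b₀, …, b_r) * (x, y) ^ d + (x, y) ^ (d + 1)`.
In `(x, y)`-degree `d * n` the power `Q ^ n` is `J ^ n * (I_A ^ n + (b₀, …, b_r) * (x, y) ^ (d * n))`,
and in `(x, y)`-degree `d * n + (h + 1)` it is `J ^ (n - (h + 1))`, which is the unit ideal when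
`n ≤ h + 1` because the subtraction truncates. -/
def P (t : ℕ) {r : ℕ} (n i j : ℕ) (β : Fin (r + 1) → ℕ) : Prop :=
  (i + j = (t + 2) * n ∧ F n β ∧ (Adm t n i ∨ r * n < ∑ k, β k)) ∨
  (∃ h, i + j = (t + 2) * n + (h + 1) ∧ F (n - (h + 1)) β)

theorem P_zero {t r i j : ℕ} (β : Fin (r + 1) → ℕ) : P t 0 i j β := by
  rcases Nat.eq_zero_or_pos (i + j) with h | h
  · exact Or.inl ⟨by omega, F_zero β, Or.inl ⟨0, by omega, by omega, by omega⟩⟩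
  · exact Or.inr ⟨i + j - 1, by omega, by simpa using F_zero β⟩

theorem P_add {t r n i j i' j' : ℕ} {β β' : Fin (r + 1) → ℕ} (h : P t 1 i j β)
    (h' : P t n i' j' β') : P t (n + 1) (i + i') (j + j') (β + β') := by
  have e : (t + 2) * (n + 1) = (t + 2) * n + (t + 2) := by ring
  unfold P
  rcases h with ⟨h1, h2, h3⟩ | ⟨k, h1, h2⟩ <;> rcases h' with ⟨h1', h2', h3'⟩ | ⟨k', h1', h2'⟩
  · refine Or.inl ⟨by omega, add_comm 1 n ▸ F_add h2 h2', ?_⟩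
    have d1 := F_deg h2
    have d2 := F_deg h2'
    have e2 : r * (n + 1) = r * n + r := by ring
    simp only [Pi.add_apply, Finset.sum_add_distrib]
    rcases h3 with h3 | h3
    · rcases h3' with h3' | h3'
      · exact Or.inl (add_comm 1 n ▸ Adm_add h3 h3')
      · right; omega
    · right; omega
  · exact Or.inr ⟨k', by omega, F_le (F_add h2 h2') (by omega) le_rfl⟩
  · exact Or.inr ⟨k, by omega, F_le (F_add h2 h2') (by omega) le_rfl⟩
  · exact Or.inr ⟨k + k' + 1, by omega, F_le (F_add h2 h2') (by omega) le_rfl⟩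

/-- `Q ^ (n + 1) ⊆ Q * Q ^ n` in terms of `P`. -/
theorem P_split {t r n i j : ℕ} {β : Fin (r + 1) → ℕ} (h : P t (n + 1) i j β) :
    ∃ i₁ j₁ β₁ i₂ j₂ β₂, P t 1 i₁ j₁ β₁ ∧ P t n i₂ j₂ β₂ ∧ i = i₁ + i₂ ∧ j = j₁ + j₂ ∧
      β = β₁ + β₂ := by
  rcases Nat.eq_zero_or_pos n with rfl | hn
  · exact ⟨i, j, β, 0, 0, 0, h, P_zero _, rfl, rfl, rfl⟩
  have e : (t + 2) * (n + 1) = (t + 2) * n + (t + 2) := by ring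
  have a0 : Adm t 1 0 := ⟨0, by omega, by omega, by omega⟩
  have ad : Adm t 1 (t + 2) := ⟨1, by omega, by omega, by omega⟩
  rcases h with ⟨h1, h2, h3⟩ | ⟨k, h1, h2⟩
  · obtain ⟨γ, δ, f1, f2, f3, rfl⟩ := F_split h2
    rcases h3 with h3 | h3
    · obtain ⟨i₁, i₂, b1, b2, b3, b4, rfl⟩ := Adm_split h3
      exact ⟨i₁, t + 2 - i₁, γ, i₂, (t + 2) * n - i₂, δ,
        Or.inl ⟨by omega, f1, Or.inl b2⟩, Or.inl ⟨by omega, f3, Or.inl b4⟩, rfl, by omega, rfl⟩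
    · simp only [Pi.add_apply, Finset.sum_add_distrib] at h3
      have e2 : r * (n + 1) = r * n + r := by ring
      -- Here `γ` has degree exactly `r`, so the surplus in `b`-degree stays in `δ`, and it suffices
      -- to divide off `x ^ d` or `y ^ d`.
      have hdn : t + 2 ≤ (t + 2) * n := Nat.le_mul_of_pos_right _ hn
      by_cases hi : i ≤ (t + 2) * n
      · exact ⟨0, t + 2, γ, i, (t + 2) * n - i, δ,
          Or.inl ⟨by omega, f1, Or.inl a0⟩, Or.inl ⟨by omega, f3, Or.inr (by omega)⟩,
          by omega, by omega, rfl⟩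
      · exact ⟨t + 2, 0, γ, i - (t + 2), j, δ,
          Or.inl ⟨by omega, f1, Or.inl ad⟩, Or.inl ⟨by omega, f3, Or.inr (by omega)⟩,
          by omega, by omega, rfl⟩
  · rcases k with _ | k
    -- Degree `d * n + d + 1`: divide off a monomial of degree `d + 1` in `x, y` so that the exponent
    -- `q * d` of `x` in the quotient is a multiple of `d`, hence lies in `nA`.
    · set q := min n (i / (t + 2)) with hq
      have hqn : q ≤ n := min_le_left _ _
      have hqi : q * (t + 2) ≤ i :=
        (Nat.mul_le_mul_right _ (min_le_right _ _)).trans (Nat.div_mul_le_self _ _)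
      have hqi' : i ≤ q * (t + 2) + (t + 3) := by
        rcases min_choice n (i / (t + 2)) with hm | hm
        · rw [hq, hm, mul_comm]; omega
        · have := Nat.div_add_mod i (t + 2)
          have := Nat.mod_lt i (show 0 < t + 2 by omega)
          rw [hq, hm, mul_comm]; omega
      have hqm : q * (t + 2) ≤ (t + 2) * n := by
        rw [mul_comm]; exact Nat.mul_le_mul_left _ hqn
      exact ⟨i - q * (t + 2), t + 3 - (i - q * (t + 2)), 0, q * (t + 2),
        (t + 2) * n - q * (t + 2), β, Or.inr ⟨0, by omega, F_zero _⟩,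
        Or.inl ⟨by omega, by simpa using h2, Or.inl (Adm_mul hqn)⟩, by omega, by omega, by simp⟩
    · refine ⟨min i (t + 3), t + 3 - min i (t + 3), 0, i - min i (t + 3),
        j - (t + 3 - min i (t + 3)), β, Or.inr ⟨0, by omega, F_zero _⟩,
        Or.inr ⟨k, by omega, ?_⟩, by omega, by omega, by simp⟩
      rwa [show n + 1 - (k + 1 + 1) = n - (k + 1) by omega] at h2

/-- The variables of the basic block: `none` is `x`, `some none` is `y` and `some (some k)` is
`b_k`. -/
abbrev Bv (r : ℕ) := Option (Option (Fin (r + 1)))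

/-- `P` as a condition on exponent vectors. -/
def PV (t : ℕ) {r : ℕ} (n : ℕ) (u : Bv r → ℕ) : Prop :=
  P t n (u none) (u (some none)) (fun k => u (some (some k)))

theorem Up_PV {t r n : ℕ} (u : Bv r → ℕ) : Up (PV t 1) n u ↔ PV t n u := by
  induction n generalizing u with
  | zero => exact iff_of_true trivial (P_zero _)
  | succ n ih =>
    constructor
    · rintro ⟨g, v, hg, hv, rfl⟩
      exact P_add hg ((ih v).1 hv)
    · intro h
      obtain ⟨i₁, j₁, β₁, i₂, j₂, β₂, h1, h2, e1, e2, e3⟩ := P_split h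
      refine ⟨fun o => o.elim i₁ fun o => o.elim j₁ β₁, fun o => o.elim i₂ fun o => o.elim j₂ β₂,
        h1, (ih _).2 h2, ?_⟩
      funext o
      rcases o with _ | _ | k
      · exact e1
      · exact e2
      · exact congrFun e3 k

/-- The basic block has a socle monomial in `Q ^ n` exactly when `n < t` (from a gap of `nA`) or
`1 ≤ r ≤ n` (from a socle monomial of `J ^ n`). -/
theorem Soc_PV {t r n : ℕ} (hn : 1 ≤ n) :
    Soc (PV t (r := r) n) ↔ n < t ∨ (1 ≤ r ∧ r ≤ n) := by
  have hsing : ∀ k : Fin (r + 1), ∀ u : Bv r → ℕ,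
      (fun l => (u + Pi.single (some (some k)) 1 : Bv r → ℕ) (some (some l))) =
        (fun l => u (some (some l))) + Pi.single k 1 := by
    intro k u
    funext l
    by_cases hl : l = k
    · subst hl; simp
    · simp [hl]
  constructor
  · rintro ⟨u, hu, hs⟩
    by_contra! hcon
    obtain ⟨htn, hr⟩ := hcon
    have hb : ∀ k : Fin (r + 1), P t n (u none) (u (some none))
        ((fun l => u (some (some l))) + Pi.single k 1) := by
      intro k
      have := hs (some (some k))
      unfold PV at this
      rw [hsing] at this
      simpa using this
    unfold PV at hu
    set β : Fin (r + 1) → ℕ := fun l => u (some (some l))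
    rcases hb 0 with ⟨h1, -, -⟩ | ⟨h, h1, -⟩
    · have := F_soc (n := n) (β := β)
        (fun hF => hu (Or.inl ⟨h1, hF, Or.inl (Adm_full htn (by omega))⟩))
        (fun k => by
          rcases hb k with ⟨-, h2, -⟩ | ⟨h, h2, -⟩
          · exact h2
          · omega)
      have := hr this.1
      omega
    · have := F_soc (n := n - (h + 1)) (β := β) (fun hF => hu (Or.inr ⟨h, h1, hF⟩))
        (fun k => by
          rcases hb k with ⟨h2, -, -⟩ | ⟨h', h2, h3⟩
          · omega
          · obtain rfl : h = h' := by omega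
            exact h3)
      have := hr this.1
      omega
  -- Criterion for `x ^ i * y ^ (d * n - i) * b ^ β` to be a socle monomial; the condition
  -- `F (n - 1) β` takes care of multiplication by `x` and `y`.
  · have build : ∀ i, ∀ β : Fin (r + 1) → ℕ, i ≤ (t + 2) * n →
        ¬ (F n β ∧ (Adm t n i ∨ r * n < ∑ k, β k)) → F (n - 1) β →
        (∀ k, F n (β + Pi.single k 1) ∧
          (Adm t n i ∨ r * n < ∑ l, (β + Pi.single k 1 : Fin (r + 1) → ℕ) l)) →
        Soc (PV t (r := r) n) := by
      intro i β hi h1 h2 h3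
      refine ⟨fun o => o.elim i fun o => o.elim ((t + 2) * n - i) β, ?_, ?_⟩
      · rintro (⟨-, h⟩ | ⟨h, h4, -⟩)
        · exact h1 h
        · simp only [Option.elim] at h4
          omega
      · rintro (_ | _ | k)
        · exact Or.inr ⟨0, by simp; omega, by simpa using h2⟩
        · exact Or.inr ⟨0, by simp; omega, by simpa using h2⟩
        · unfold PV
          rw [hsing]
          exact Or.inl ⟨by simp; omega, by simpa using (h3 k).1, by simpa using (h3 k).2⟩
    rintro (h | ⟨hr, hrn⟩)
    -- Socle monomial for `n < t`: `i = n + 1` is in a gap of `nA`, and `b ^ β = (b₁ ⋯ b_r) ^ n` is a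
    -- generator of `J ^ n`.
    · have hβ : F n (fun k : Fin (r + 1) => if k = 0 then 0 else n) := by
        unfold F
        rw [Fin.sum_univ_succ]
        simp
      have hd : ∑ k : Fin (r + 1), (if k = 0 then 0 else n) = r * n := by
        rw [Fin.sum_univ_succ]
        simp
      refine build (n + 1) _ (by nlinarith) ?_ (F_le hβ (by omega) le_rfl) fun k =>
        ⟨F_le hβ le_rfl (by simp), Or.inr ?_⟩
      · rintro ⟨-, h1 | h1⟩
        · exact not_Adm h h1
        · exact absurd h1 (by rw [hd]; omega)
      · simp only [Pi.add_apply, Finset.sum_add_distrib, hd]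
        simp
    -- Socle monomial for `1 ≤ r ≤ n`: `b ^ β` with deficiencies `n - r + 1, 1, …, 1`, which sum
    -- to `n + 1`, is a socle monomial of `J ^ n`, and it lies in `J ^ (n - 1)`.
    · have hs : ∀ m, r - 1 ≤ m → m ≤ n → ∑ k : Fin (r + 1), (m - (if k = 0 then r - 1 else n - 1)) =
          (m - (r - 1)) + r * (m - (n - 1)) := by
        intro m _ _
        rw [Fin.sum_univ_succ]
        simp
      have hs1 := hs n (by omega) le_rfl
      have hs2 := hs (n - 1) (by omega) (by omega)
      rw [show n - (n - 1) = 1 by omega] at hs1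
      rw [show n - 1 - (n - 1) = 0 by omega] at hs2
      refine build 0 (fun k => if k = 0 then r - 1 else n - 1) (by omega) ?_ ?_ fun k =>
        ⟨?_, Or.inl ⟨0, by omega, by omega, by omega⟩⟩
      · rintro ⟨h1, -⟩
        have h2 : ∑ k : Fin (r + 1), (n - (if k = 0 then r - 1 else n - 1)) ≤ n := h1
        omega
      · change ∑ k : Fin (r + 1), (n - 1 - (if k = 0 then r - 1 else n - 1)) ≤ n - 1
        omega
      · unfold F
        have hlt : ∑ l : Fin (r + 1), (n - ((fun k => if k = 0 then r - 1 else n - 1) +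
            Pi.single k 1 : Fin (r + 1) → ℕ) l) <
            ∑ k : Fin (r + 1), (n - (if k = 0 then r - 1 else n - 1)) := by
          refine Finset.sum_lt_sum (fun l _ => ?_) ⟨k, Finset.mem_univ k, ?_⟩
          · simp only [Pi.add_apply]; omega
          · simp only [Pi.add_apply, Pi.single_eq_same]
            split_ifs <;> omega
        omega

/-! ### Gluing along a variable -/

section glue
variable {α β : Type}

theorem Up_mono {σ : Type} {G : (σ → ℕ) → Prop} {n : ℕ} {u w : σ → ℕ} (h : Up G n u)
    (huw : u ≤ w) : Up G n w := by
  induction n generalizing u w with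
  | zero => trivial
  | succ n ih =>
    obtain ⟨g, v, hg, hv, rfl⟩ := h
    refine ⟨g, v + (w - (g + v)), hg, ih hv (by simp), ?_⟩
    rw [← add_assoc, add_tsub_cancel_of_le huw]

/-- The exponent vector with value `c` at the distinguished variable `none` and `a` elsewhere. -/
def ocons {α : Type} (c : ℕ) (a : α → ℕ) : Option α → ℕ := fun o => o.elim c a

theorem ocons_eta {α : Type} (u : Option α → ℕ) : ocons (u none) (fun i => u (some i)) = u := by
  funext o; cases o <;> rfl

theorem ocons_add {α : Type} (c d : ℕ) (a b : α → ℕ) : ocons c a + ocons d b =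
    ocons (c + d) (a + b) := by
  funext o; cases o <;> rfl

theorem ocons_none [DecidableEq α] (c : ℕ) (a : α → ℕ) : ocons c a + Pi.single none 1 =
    ocons (c + 1) a := by
  funext o; cases o <;> simp [ocons]

theorem ocons_some [DecidableEq α] (c : ℕ) (a : α → ℕ) (i : α) :
    ocons c a + Pi.single (some i) 1 = ocons c (a + Pi.single i 1) := by
  funext o; cases o <;> simp [ocons, Pi.single_apply]

theorem ocons_le {c d : ℕ} {a b : α → ℕ} (h : c ≤ d) (h' : a ≤ b) : ocons c a ≤ ocons d b := by
  intro o; cases o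
  · exact h
  · exact h' _

/-- The exponents of the product of the extensions of two monomial ideals `I ⊆ k[z, a]` and
`K ⊆ k[z, b]` to `k[z, a, b]`, the variable `z` being `none`. -/
def Glue (U : (Option α → ℕ) → Prop) (V : (Option β → ℕ) → Prop) (u : Option (α ⊕ β) → ℕ) : Prop :=
  ∃ c d, u none = c + d ∧ U (ocons c fun i => u (some (.inl i))) ∧
    V (ocons d fun i => u (some (.inr i)))

theorem Up_glue (G : (Option α → ℕ) → Prop) (H : (Option β → ℕ) → Prop) (n : ℕ)
    (u : Option (α ⊕ β) → ℕ) : Up (Glue G H) n u ↔ Glue (Up G n) (Up H n) u := by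
  induction n generalizing u with
  | zero => exact iff_of_true trivial ⟨u none, 0, rfl, trivial, trivial⟩
  | succ n ih =>
    constructor
    · rintro ⟨g, v, ⟨c, d, h1, h2, h3⟩, hv, rfl⟩
      obtain ⟨c', d', h1', h2', h3'⟩ := (ih v).1 hv
      refine ⟨c + c', d + d', ?_, ⟨_, _, h2, h2', ?_⟩, ⟨_, _, h3, h3', ?_⟩⟩
      · simp only [Pi.add_apply]; omega
      · rw [ocons_add]; rfl
      · rw [ocons_add]; rfl
    · rintro ⟨c, d, h1, ⟨g, v, hg, hv, e⟩, ⟨g', v', hg', hv', e'⟩⟩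
      have e0 : c = g none + v none := congrFun e none
      have e0' : d = g' none + v' none := congrFun e' none
      refine ⟨ocons (g none + g' none) (Sum.elim (fun i => g (some i)) fun i => g' (some i)),
        ocons (v none + v' none) (Sum.elim (fun i => v (some i)) fun i => v' (some i)),
        ⟨g none, g' none, rfl, ?_, ?_⟩, (ih _).2 ⟨v none, v' none, rfl, ?_, ?_⟩, ?_⟩
      · exact (ocons_eta g).symm ▸ hg
      · exact (ocons_eta g').symm ▸ hg'
      · exact (ocons_eta v).symm ▸ hv
      · exact (ocons_eta v').symm ▸ hv'
      · funext o
        rcases o with _ | i | i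
        · simp only [Pi.add_apply, ocons, Option.elim]; omega
        · exact congrFun e (some i)
        · exact congrFun e' (some i)

theorem Glue_ocons {U : (Option α → ℕ) → Prop} {V : (Option β → ℕ) → Prop} {c : ℕ} {a : α → ℕ}
    {b : β → ℕ} : Glue U V (ocons c (Sum.elim a b)) ↔
      ∃ c₁ c₂, c = c₁ + c₂ ∧ U (ocons c₁ a) ∧ V (ocons c₂ b) := Iff.rfl

theorem elim_inl [DecidableEq α] [DecidableEq β] (a : α → ℕ) (b : β → ℕ) (i : α) :
    Sum.elim a b + Pi.single (.inl i) 1 = Sum.elim (a + Pi.single i 1) b := by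
  funext o; cases o <;> simp [Pi.single_apply]

theorem elim_inr [DecidableEq α] [DecidableEq β] (a : α → ℕ) (b : β → ℕ) (i : β) :
    Sum.elim a b + Pi.single (.inr i) 1 = Sum.elim a (b + Pi.single i 1) := by
  funext o; cases o <;> simp [Pi.single_apply]

/-- With `U`, `V` the exponent sets of `I`, `K`, fix the part of an exponent vector outside `z` and
let `f`, `g` be the least powers of `z` that put it into `I`, `K`. It lies in the product from the
power `f + g` on, so a socle monomial of the product has `z`-exponent `f + g - 1`, and it is one
precisely when the two parts with `z`-exponents `f - 1` and `g - 1` are socle monomials. There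
must be a variable besides `z` on either side to force `f, g ≥ 1`. -/
theorem Soc_glue [DecidableEq α] [DecidableEq β] [Nonempty α] [Nonempty β]
    {U : (Option α → ℕ) → Prop} {V : (Option β → ℕ) → Prop}
    (hU : ∀ u w, U u → u ≤ w → U w) (hV : ∀ u w, V u → u ≤ w → V w) :
    Soc (Glue U V) ↔ Soc U ∧ Soc V := by
  classical
  constructor
  · rintro ⟨u, hu, hs⟩
    obtain ⟨c, a, b, rfl⟩ : ∃ c a b, u = ocons c (Sum.elim a b) :=
      ⟨u none, fun i => u (some (.inl i)), fun i => u (some (.inr i)), by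
        funext o; rcases o with _ | i | i <;> rfl⟩
    have h0 := hs none
    have hl := fun i => hs (some (.inl i))
    have hr := fun i => hs (some (.inr i))
    simp only [ocons_none, ocons_some, elim_inl, elim_inr, Glue_ocons] at h0 hl hr hu
    obtain ⟨d₁, d₂, hd, h1, h2⟩ := h0
    have e1 : ∃ f, U (ocons f a) := ⟨_, h1⟩
    have e2 : ∃ g, V (ocons g b) := ⟨_, h2⟩
    obtain ⟨f, hf, hf'⟩ : ∃ f, U (ocons f a) ∧ ∀ d, U (ocons d a) → f ≤ d :=
      ⟨Nat.find e1, Nat.find_spec e1, fun d hd => Nat.find_min' e1 hd⟩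
    obtain ⟨g, hg, hg'⟩ : ∃ g, V (ocons g b) ∧ ∀ d, V (ocons d b) → g ≤ d :=
      ⟨Nat.find e2, Nat.find_spec e2, fun d hd => Nat.find_min' e2 hd⟩
    have hfg : f + g = c + 1 := by
      have := hf' _ h1
      have := hg' _ h2
      by_contra hne
      exact hu ⟨c - g, g, by omega, hU _ _ hf (ocons_le (by omega) le_rfl), hg⟩
    have hl' : ∀ i, 1 ≤ f ∧ U (ocons (f - 1) (a + Pi.single i 1)) := by
      intro i
      obtain ⟨k₁, k₂, hk, q1, q2⟩ := hl i
      have := hg' _ q2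
      exact ⟨by omega, hU _ _ q1 (ocons_le (by omega) le_rfl)⟩
    have hr' : ∀ i, 1 ≤ g ∧ V (ocons (g - 1) (b + Pi.single i 1)) := by
      intro i
      obtain ⟨k₁, k₂, hk, q1, q2⟩ := hr i
      have := hf' _ q1
      exact ⟨by omega, hV _ _ q2 (ocons_le (by omega) le_rfl)⟩
    have f1 := (hl' (Classical.arbitrary α)).1
    have g1 := (hr' (Classical.arbitrary β)).1
    refine ⟨⟨ocons (f - 1) a, fun h => ?_, ?_⟩, ⟨ocons (g - 1) b, fun h => ?_, ?_⟩⟩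
    · have := hf' _ h; omega
    · rintro (_ | i)
      · rw [ocons_none, Nat.sub_add_cancel f1]; exact hf
      · rw [ocons_some]; exact (hl' i).2
    · have := hg' _ h; omega
    · rintro (_ | i)
      · rw [ocons_none, Nat.sub_add_cancel g1]; exact hg
      · rw [ocons_some]; exact (hr' i).2
  · rintro ⟨⟨u, hu, hus⟩, ⟨v, hv, hvs⟩⟩
    obtain ⟨c, a, rfl⟩ : ∃ c a, u = ocons c a := ⟨_, _, (ocons_eta u).symm⟩
    obtain ⟨d, b, rfl⟩ : ∃ c a, v = ocons c a := ⟨_, _, (ocons_eta v).symm⟩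
    have hu0 := hus none
    have hui := fun i => hus (some i)
    have hv0 := hvs none
    have hvi := fun i => hvs (some i)
    simp only [ocons_none, ocons_some] at hu0 hui hv0 hvi
    refine ⟨ocons (c + d + 1) (Sum.elim a b), ?_, ?_⟩
    · rw [Glue_ocons]
      rintro ⟨k₁, k₂, hk, q1, q2⟩
      rcases le_or_gt k₁ c with h | h
      · exact hu (hU _ _ q1 (ocons_le h le_rfl))
      · exact hv (hV _ _ q2 (ocons_le (by omega) le_rfl))
    · rintro (_ | i | i)
      · rw [ocons_none, Glue_ocons]
        exact ⟨c + 1, d + 1, by omega, hu0, hv0⟩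
      · rw [ocons_some, elim_inl, Glue_ocons]
        exact ⟨c, d + 1, by omega, hui i, hv0⟩
      · rw [ocons_some, elim_inr, Glue_ocons]
        exact ⟨c + 1, d, by omega, hu0, hvi i⟩

end glue

/-! ### Realizing finite sets -/

/-- `Z` is, on positive integers, the set of `n` such that the `n`-th power of some monomial ideal
has a socle monomial. One variable, `none`, is singled out for gluing, and there is at least one
other variable. -/
def Realizable (Z : ℕ → Prop) : Prop :=
  ∃ (α : Type) (_ : Fintype α) (_ : DecidableEq α) (_ : Nonempty α) (G : (Option α → ℕ) → Prop),
    ∀ n, 1 ≤ n → (Soc (Up G n) ↔ Z n)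

theorem Realizable.and {Y Z : ℕ → Prop} (hY : Realizable Y) (hZ : Realizable Z) :
    Realizable fun n => Y n ∧ Z n := by
  obtain ⟨α, _, _, _, G, hG⟩ := hY
  obtain ⟨β, _, _, _, H, hH⟩ := hZ
  refine ⟨α ⊕ β, inferInstance, inferInstance, inferInstance, Glue G H, fun n hn => ?_⟩
  show _ ↔ Y n ∧ Z n
  rw [← hG n hn, ← hH n hn, ← Soc_glue (fun _ _ => Up_mono) (fun _ _ => Up_mono),
    show Up (Glue G H) n = Glue (Up G n) (Up H n) from funext fun u => propext (Up_glue G H n u)]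

theorem Realizable.basic (t r : ℕ) : Realizable fun n => n < t ∨ (1 ≤ r ∧ r ≤ n) :=
  ⟨Option (Fin (r + 1)), inferInstance, inferInstance, inferInstance, PV t 1, fun n hn => by
    show _ ↔ n < t ∨ (1 ≤ r ∧ r ≤ n)
    rw [← Soc_PV hn, show Up (PV t (r := r) 1) n = PV t n from funext fun u => propext (Up_PV u)]⟩

/-- Intersect `{n < M}` with the sets `{n ≠ m}` for `m < M` outside `Γ`; here `n ≠ m` is
`n < t ∨ r ≤ n` with `t = m`, `r = m + 1`. -/
theorem Realizable.finset (Γ : Finset ℕ) : Realizable (· ∈ Γ) := by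
  obtain ⟨M, hM⟩ : ∃ M, ∀ m ∈ Γ, m < M := ⟨Γ.sup id + 1, fun m hm =>
    Nat.lt_succ_of_le (Finset.le_sup (f := id) hm)⟩
  have key : ∀ T : Finset ℕ, Realizable fun n => n < M ∧ n ∉ T := by
    intro T
    induction T using Finset.induction_on with
    | empty => simpa using Realizable.basic M 0
    | insert m T _ ih =>
      convert ih.and (Realizable.basic m (m + 1)) using 2 with n
      simp only [Finset.mem_insert]
      constructor
      · rintro ⟨h1, h2⟩
        push Not at h2
        exact ⟨⟨h1, h2.2⟩, by omega⟩
      · rintro ⟨⟨h1, h2⟩, h3⟩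
        exact ⟨h1, by rintro (h | h) <;> [omega; exact h2 h]⟩
  convert key (Finset.range M \ Γ) using 2 with n
  simp only [Finset.mem_sdiff, Finset.mem_range]
  constructor
  · intro h
    exact ⟨hM n h, fun h' => h'.2 h⟩
  · rintro ⟨h1, h2⟩
    by_contra h
    exact h2 ⟨h1, h⟩

theorem Up_equiv {σ τ : Type} (e : σ ≃ τ) (G : (σ → ℕ) → Prop) (n : ℕ) (u : τ → ℕ) :
    Up (fun g => G (g ∘ e)) n u ↔ Up G n (u ∘ e) := by
  induction n generalizing u with
  | zero => exact Iff.rfl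
  | succ n ih =>
    constructor
    · rintro ⟨g, v, hg, hv, rfl⟩
      exact ⟨g ∘ e, v ∘ e, hg, (ih v).1 hv, rfl⟩
    · rintro ⟨g, v, hg, hv, h⟩
      refine ⟨g ∘ e.symm, v ∘ e.symm, ?_, (ih _).2 ?_, ?_⟩
      · simpa [Function.comp_assoc] using hg
      · simpa [Function.comp_assoc] using hv
      · funext i
        simpa using congrFun h (e.symm i)

theorem Soc_equiv {σ τ : Type} [DecidableEq σ] [DecidableEq τ] (e : σ ≃ τ) (U : (σ → ℕ) → Prop) :
    Soc (fun u : τ → ℕ => U (u ∘ e)) ↔ Soc U := by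
  have key : ∀ (u : τ → ℕ) (i : σ),
      (u + Pi.single (e i) 1) ∘ e = u ∘ e + Pi.single i 1 := by
    intro u i
    funext j
    simp [Pi.single_apply]
  constructor
  · rintro ⟨u, hu, hs⟩
    exact ⟨u ∘ e, hu, fun i => key u i ▸ hs (e i)⟩
  · rintro ⟨u, hu, hs⟩
    refine ⟨u ∘ e.symm, by simpa [Function.comp_assoc] using hu, fun i => ?_⟩
    obtain ⟨i, rfl⟩ := e.surjective i
    rw [key]
    simpa [Function.comp_assoc] using hs i

/-! ### Monomial ideals -/

section ring
variable {k : Type} [Field k] {s : ℕ}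

/-- The ideal generated by the monomials with exponent in `G`. -/
noncomputable def expIdeal (k : Type) [Field k] {s : ℕ} (G : (Fin s → ℕ) → Prop) :
    Ideal (MvPolynomial (Fin s) k) :=
  Ideal.span ((fun m => monomial m (1 : k)) '' {m : Fin s →₀ ℕ | G m})

theorem expIdeal_pow (G : (Fin s → ℕ) → Prop) (n : ℕ) :
    expIdeal k G ^ n = expIdeal k (Up G n) := by
  induction n with
  | zero =>
    rw [pow_zero, Ideal.one_eq_top, eq_comm, Ideal.eq_top_iff_one]
    exact Ideal.subset_span ⟨0, trivial, rfl⟩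
  | succ n ih =>
    rw [pow_succ', ih, expIdeal, expIdeal, expIdeal, Ideal.span_mul_span']
    congr 1
    ext f
    constructor
    · rintro ⟨_, ⟨g, hg, rfl⟩, _, ⟨v, hv, rfl⟩, rfl⟩
      exact ⟨g + v, ⟨g, v, hg, hv, rfl⟩, by simp [monomial_mul]⟩
    · rintro ⟨u, ⟨g, v, hg, hv, h⟩, rfl⟩
      refine ⟨_, ⟨Finsupp.equivFunOnFinite.symm g, hg, rfl⟩, _,
        ⟨Finsupp.equivFunOnFinite.symm v, hv, rfl⟩, ?_⟩
      simp only [monomial_mul, mul_one]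
      exact congrArg (fun w => monomial w (1 : k)) (DFunLike.coe_injective h.symm)

theorem mem_expIdeal {U : (Fin s → ℕ) → Prop} (hU : ∀ u w, U u → u ≤ w → U w)
    {f : MvPolynomial (Fin s) k} : f ∈ expIdeal k U ↔ ∀ m ∈ f.support, U m := by
  rw [expIdeal, mem_ideal_span_monomial_image]
  refine forall₂_congr fun m _ => ⟨?_, fun h => ⟨m, h, le_rfl⟩⟩
  rintro ⟨g, hg, hgm⟩
  exact hU _ _ hg hgm

theorem maxHomIdeal_isMaximal : (maxHomIdeal k (Fin s)).IsMaximal := by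
  have : maxHomIdeal k (Fin s) =
      RingHom.ker (constantCoeff : MvPolynomial (Fin s) k →+* k) := by
    ext f
    rw [maxHomIdeal, ← Set.image_univ, mem_ideal_span_X_image, RingHom.mem_ker,
      constantCoeff_eq]
    constructor
    · intro h
      by_contra h0
      obtain ⟨i, -, hi⟩ := h 0 (mem_support_iff.2 h0)
      exact hi rfl
    · intro h m hm
      by_contra! hcon
      have : m = 0 := by ext i; exact hcon i trivial
      exact mem_support_iff.1 hm (this ▸ h)
  rw [this]
  exact RingHom.ker_isMaximal_of_surjective _ fun c => ⟨C c, constantCoeff_C _ c⟩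

/-- The maximal homogeneous ideal is an associated prime of `S / I`, for `I` monomial, exactly when
`I` has a socle monomial: if it is the annihilator of the class of `f`, then any monomial of `f`
outside `I` is one. -/
theorem mem_assPrimes {U : (Fin s → ℕ) → Prop} (hU : ∀ u w, U u → u ≤ w → U w) :
    maxHomIdeal k (Fin s) ∈ associatedPrimes (MvPolynomial (Fin s) k)
      (MvPolynomial (Fin s) k ⧸ expIdeal k U) ↔ Soc U := by
  have hcol : ∀ f g : MvPolynomial (Fin s) k,
      g ∈ Submodule.colon (⊥ : Submodule (MvPolynomial (Fin s) k)
        (MvPolynomial (Fin s) k ⧸ expIdeal k U)) {Ideal.Quotient.mk _ f} ↔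
      g * f ∈ expIdeal k U := by
    intro f g
    rw [Submodule.mem_colon_singleton, Submodule.mem_bot, ← Ideal.Quotient.eq_zero_iff_mem]
    rfl
  rw [AssociatedPrimes.mem_iff, isAssociatedPrime_iff]
  constructor
  · rintro ⟨-, x, hx⟩
    obtain ⟨f, rfl⟩ := Ideal.Quotient.mk_surjective x
    have hf : f ∉ expIdeal k U := fun hf => by
      refine (maxHomIdeal_isMaximal (k := k) (s := s)).ne_top ?_
      rw [Ideal.eq_top_iff_one, hx, hcol, one_mul]
      exact hf
    rw [mem_expIdeal hU] at hf
    push Not at hf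
    obtain ⟨m, hm, hmU⟩ := hf
    refine ⟨m, hmU, fun i => ?_⟩
    have hX : (X i : MvPolynomial (Fin s) k) ∈ maxHomIdeal k (Fin s) :=
      Ideal.subset_span ⟨i, rfl⟩
    rw [hx, hcol, mem_expIdeal hU] at hX
    have := hX (Finsupp.single i 1 + m) (by
      rw [mem_support_iff, coeff_X_mul]
      exact mem_support_iff.1 hm)
    rwa [Finsupp.coe_add, Finsupp.single_eq_pi_single, add_comm] at this
  · rintro ⟨u, hu, hs⟩
    refine ⟨maxHomIdeal_isMaximal.isPrime, Ideal.Quotient.mk _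
      (monomial (Finsupp.equivFunOnFinite.symm u) (1 : k)), ?_⟩
    refine maxHomIdeal_isMaximal.eq_of_le ?_ ?_
    · rw [Ne, Ideal.eq_top_iff_one, hcol, one_mul, mem_expIdeal hU]
      intro h
      exact hu (h (Finsupp.equivFunOnFinite.symm u) (by classical simp [mem_support_iff]))
    · rw [maxHomIdeal, Ideal.span_le]
      rintro _ ⟨i, rfl⟩
      rw [SetLike.mem_coe, hcol, X, monomial_mul, mul_one]
      refine Ideal.subset_span ⟨_, ?_, rfl⟩
      rw [Set.mem_ofPred_eq, Finsupp.coe_add, Finsupp.single_eq_pi_single, add_comm]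
      exact hs i

end ring

/-- **Corollary 6.8**: for any finite set `Γ` of positive integers there are a polynomial ring
`S` over `k` with maximal homogeneous ideal `m` and a monomial ideal `Q ⊆ S` such that `m` is
an associated prime of `S/Qⁿ` if and only if `n ∈ Γ`. -/
theorem exists_monomialIdeal_assPrimes_powers
    {k : Type} [Field k] (Γ : Finset ℕ) (hΓ : ∀ m ∈ Γ, 1 ≤ m) :
    ∃ (s : ℕ) (Q : Ideal (MvPolynomial (Fin s) k)), IsMonomialIdeal Q ∧
      ∀ n : ℕ, 1 ≤ n →
        (maxHomIdeal k (Fin s) ∈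
            associatedPrimes (MvPolynomial (Fin s) k) (MvPolynomial (Fin s) k ⧸ Q ^ n) ↔
          n ∈ Γ) := by
  obtain ⟨α, _, _, _, G, hG⟩ := Realizable.finset Γ
  let e := Fintype.equivFin (Option α)
  refine ⟨Fintype.card (Option α), expIdeal k fun g => G (g ∘ e), ⟨_, rfl⟩, fun n hn => ?_⟩
  rw [expIdeal_pow, mem_assPrimes fun _ _ => Up_mono, ← show _ ↔ n ∈ Γ from hG n hn, ← Soc_equiv e,
    show Up (fun g => G (g ∘ e)) n = fun u => Up G n (u ∘ e) from
      funext fun u => propext (Up_equiv e G n u)]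
end
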